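/- arXiv:2211.06611 — 2 statements merged into one kernel-verified Lean document; each statement's English description precedes it below -/
import Mathlib

section
/- Let 1 < p < ∞. There exists a constant C > 0 such that for every f ∈ L^p(w_α): the principal value ℋ_2(f)(e^{iτ}) = (1/(2π)) lim_{ε→0⁺} ∫_{(α,2π−α)∖(τ−ε,τ+ε)} f(e^{iθ}) w_α(θ)/(e^{iτ} − e^{iθ}) dθ exists for almost every τ ∈ (α, 2π − α), and ∫_α^{2π−α} |ℋ_2(f)(e^{iτ})|^p (cos²(α/2) − cos²(τ/2))^{p/2} w_α(τ) dτ ≤ C ∫_α^{2π−α} |f(e^{iτ})|^p w_α(τ) dτ. -/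
/-!
The substitution `θ = Th c t = π - 2 arctan (c cos t)`, `c = cot (α / 2)`, turns `w_α dθ` into
Lebesgue measure on `(0, π)` (`integral_Th`). Under it `e^{iθ}` becomes a Cayley transform of
`c cos t`, so that `1 / (e^{iτ} - e^{iθ})`, at `τ = Th c s`, is a bounded factor times
`1 + b / (c cos t - c cos s)` with `b` bounded (`inv_exp_sub`, `trunc_eq`). Up to a constant,
`sin s / (cos s - cos t)` is the boundary Herglotz kernel `(z + w) / (z - w)` on the unit circle
folded under `t ↦ 2π - t` (`KK_boundary`). The theorem thus concerns the conjugation operator on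
functions `G` on the circle that are symmetric under complex conjugation.

The Herglotz integral is bounded on `L^p` by M. Riesz' theorem (`eLpNorm_Hz`). For `1 < p ≤ 2` this
rests on the inequality `‖w‖ ^ p ≤ A (Re w) ^ p - B Re (w ^ p)` in the right half-plane
(`riesz_pointwise`) and the mean value property of the harmonic function `Re (w ^ p)`; for `p > 2`
it follows by duality. Together with the density of trigonometric polynomials (`nice_dense`) it
gives `F ∈ L^p` whose Poisson integral is the Herglotz integral of `G` (`exists_boundary`).

The truncated integrals converge almost everywhere to `2π (F - G)` (`lim_KK`). The truncated
boundary kernel minus the interior kernel at radius `1 - ε` is at most a multiple of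
`ε / (ε² + |t - s|²)` (`DD_bound`), so its integral against `G - G(s)` vanishes in the limit at
Lebesgue points (`tendsto_kernel`). Poisson integrals converge radially almost everywhere
(`pk_tendsto`), and the principal value of the boundary kernel itself is zero, also when the
cut-off is measured on the arc (`pv_zero`).

For the norm inequality, the weight `√(cos² (α / 2) - cos² (τ / 2))` is `sin s` times a bounded
factor and absorbs the `1 / sin s` in the limit (`gap_Th`, `HH_bound`). What remains is the `L^p`
bound for `F` and `G` (`exists_circle_const`).
-/

open MeasureTheory Filter Set

/-- The Akhiezer-Chebyshev weight on the arc `(α, 2π - α)`. -/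
noncomputable def wAC (α θ : ℝ) : ℝ :=
  Real.sin (α / 2) /
    (2 * Real.sin (θ / 2) * Real.sqrt (Real.cos (α / 2) ^ 2 - Real.cos (θ / 2) ^ 2))

/-! ### The normalized circle measure, Herglotz and Poisson kernels -/

/-- Normalized arc length on the unit circle, as a measure on `ℂ`. -/
noncomputable def mC : Measure ℂ :=
  ENNReal.ofReal (2 * Real.pi)⁻¹ •
    Measure.map (circleMap 0 1) (volume.restrict (Ioc 0 (2 * Real.pi)))

lemma measurable_circleMap' : Measurable (circleMap 0 1) := (continuous_circleMap 0 1).measurable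

instance : IsProbabilityMeasure mC := by
  constructor
  have : (0:ℝ) < 2 * Real.pi := by positivity
  rw [mC, Measure.smul_apply, Measure.map_apply measurable_circleMap' MeasurableSet.univ]
  simp only [preimage_univ, Measure.restrict_apply, MeasurableSet.univ, univ_inter,
    Real.volume_Ioc, sub_zero, smul_eq_mul]
  rw [← ENNReal.ofReal_mul (by positivity), inv_mul_cancel₀ this.ne', ENNReal.ofReal_one]

lemma ae_mC_iff {P : ℂ → Prop} (hP : MeasurableSet {z | P z}) :
    (∀ᵐ z ∂mC, P z) ↔ ∀ᵐ t ∂volume.restrict (Ioc 0 (2 * Real.pi)), P (circleMap 0 1 t) := by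
  have : (0:ℝ) < 2 * Real.pi := by positivity
  rw [mC, Measure.ae_ennreal_smul_measure_iff (by simp; positivity),
    ae_map_iff measurable_circleMap'.aemeasurable hP]

lemma ae_of_mC {P : ℂ → Prop} (h : ∀ᵐ z ∂mC, P z) :
    ∀ᵐ t ∂volume.restrict (Ioc 0 (2 * Real.pi)), P (circleMap 0 1 t) := by
  have : (0:ℝ) < 2 * Real.pi := by positivity
  rw [mC, Measure.ae_ennreal_smul_measure_iff (by simp; positivity)] at h
  exact ae_of_ae_map measurable_circleMap'.aemeasurable h

lemma ae_norm_eq_one : ∀ᵐ z ∂mC, ‖z‖ = 1 := by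
  rw [ae_mC_iff (measurableSet_eq_fun measurable_norm measurable_const)]
  exact Eventually.of_forall fun t => by simp

lemma integral_mC {E : Type*} [NormedAddCommGroup E] [NormedSpace ℝ E] {f : ℂ → E}
    (hf : AEStronglyMeasurable f mC) :
    ∫ z, f z ∂mC = (2 * Real.pi)⁻¹ • ∫ t in Ioc 0 (2 * Real.pi), f (circleMap 0 1 t) := by
  have h0 : (0:ℝ) < 2 * Real.pi := by positivity
  have hf' : AEStronglyMeasurable f
      (Measure.map (circleMap 0 1) (volume.restrict (Ioc 0 (2 * Real.pi)))) :=
    hf.mono_ac (Measure.absolutelyContinuous_of_le_smul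
      (c := ENNReal.ofReal (2 * Real.pi)) (by
        rw [mC, smul_smul, ← ENNReal.ofReal_mul h0.le, mul_inv_cancel₀ h0.ne']; simp))
  rw [mC, integral_smul_measure, integral_map measurable_circleMap'.aemeasurable hf',
    ENNReal.toReal_ofReal (by positivity)]

lemma integrable_mC {E : Type*} [NormedAddCommGroup E] {f : ℂ → E}
    (hf : StronglyMeasurable f) :
    Integrable f mC ↔ IntegrableOn (fun t => f (circleMap 0 1 t)) (Ioc 0 (2 * Real.pi)) := by
  have h0 : (0:ℝ) < 2 * Real.pi := by positivity
  rw [mC, integrable_smul_measure (by simp; positivity) (by simp),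
    integrable_map_measure hf.aestronglyMeasurable measurable_circleMap'.aemeasurable]
  rfl

lemma circleAverage_eq {E : Type*} [NormedAddCommGroup E] [NormedSpace ℝ E] {f : ℂ → E}
    (hf : AEStronglyMeasurable f mC) : Real.circleAverage f 0 1 = ∫ z, f z ∂mC := by
  rw [integral_mC hf, Real.circleAverage_def,
    intervalIntegral.integral_of_le (by positivity)]

lemma circleIntegrable_iff' {f : ℂ → ℂ} (hf : Measurable f) :
    CircleIntegrable f 0 1 ↔ Integrable f mC := by
  rw [integrable_mC hf.stronglyMeasurable, CircleIntegrable,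
    intervalIntegrable_iff_integrableOn_Ioc_of_le (by positivity)]

/-- The Herglotz kernel `(z + w) / (z - w)`, with `w` in the disc and `z` on the circle. At `z = w`
division by zero gives `0`. -/
noncomputable def hk (w z : ℂ) : ℂ := (z + w) / (z - w)

lemma hk_eq (w z : ℂ) : hk w z = herglotzRieszKernel 0 w z := by
  simp [hk, herglotzRieszKernel]

lemma measurable_hk : Measurable fun x : ℂ × ℂ => hk x.1 x.2 := by unfold hk; fun_prop

lemma measurable_hk' {w : ℂ} : Measurable (hk w) := by unfold hk; fun_prop

/-- The Herglotz integral of `g` over the unit circle. -/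
noncomputable def Hz (g : ℂ → ℂ) (w : ℂ) : ℂ := ∫ z, hk w z * g z ∂mC

lemma norm_hk_le {w z : ℂ} {r : ℝ} (hr : r < 1) (hw : ‖w‖ ≤ r) (hz : ‖z‖ = 1) :
    ‖hk w z‖ ≤ 2 / (1 - r) := by
  rw [hk, norm_div]
  have h1 : ‖z + w‖ ≤ 2 := (norm_add_le _ _).trans (by linarith)
  have h2 : 1 - r ≤ ‖z - w‖ := by
    have := norm_sub_norm_le z w; linarith
  gcongr

lemma integrable_hk_mul {g : ℂ → ℂ} (hg : Integrable g mC) {w : ℂ} (hw : ‖w‖ < 1) :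
    Integrable (fun z => hk w z * g z) mC := by
  refine hg.bdd_mul (c := 2 / (1 - ‖w‖)) measurable_hk'.aestronglyMeasurable ?_
  filter_upwards [ae_norm_eq_one] with z hz using norm_hk_le hw le_rfl hz

lemma Hz_analytic {g : ℂ → ℂ} (hm : Measurable g) (hg : Integrable g mC) :
    DifferentiableOn ℂ (Hz g) (Metric.ball 0 1) := by
  have := differentiableOn_circleAverage_herglotzRieszKernel_smul
    ((circleIntegrable_iff' hm).2 hg)
  refine this.congr fun w hw => ?_
  simp_rw [← hk_eq, smul_eq_mul]
  exact (circleAverage_eq (f := fun ζ => hk w ζ * g ζ)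
    ((measurable_hk' (w := w)).mul hm).aestronglyMeasurable).symm

/-- The Poisson kernel, as the real part of the Herglotz kernel. -/
noncomputable def pk (w z : ℂ) : ℝ := (hk w z).re

lemma pk_eq (w z : ℂ) : pk w z = poissonKernel 0 w z := by
  rw [poissonKernel_eq_re_herglotzRieszKernel]; simp [pk, hk_eq]

lemma pk_eq' (w z : ℂ) : pk w z = (‖z‖ ^ 2 - ‖w‖ ^ 2) / ‖z - w‖ ^ 2 := by
  rw [pk_eq]; simp [poissonKernel]

lemma measurable_pk : Measurable fun x : ℂ × ℂ => pk x.1 x.2 :=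
  Complex.measurable_re.comp measurable_hk

lemma measurable_pk' {w : ℂ} : Measurable (pk w) := Complex.measurable_re.comp measurable_hk'

lemma pk_nonneg {w z : ℂ} (hw : ‖w‖ < 1) (hz : ‖z‖ = 1) : 0 ≤ pk w z := by
  rw [pk_eq']
  have : 0 ≤ ‖z‖ ^ 2 - ‖w‖ ^ 2 := by rw [hz]; nlinarith [norm_nonneg w]
  positivity

lemma pk_le {w z : ℂ} (hw : ‖w‖ < 1) (hz : ‖z‖ = 1) : pk w z ≤ 2 / (1 - ‖w‖) :=
  (Complex.re_le_norm _).trans (norm_hk_le hw le_rfl hz)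

lemma le_pk {w z : ℂ} (hw : ‖w‖ < 1) (hz : ‖z‖ = 1) : (1 - ‖w‖) / 2 ≤ pk w z := by
  rw [pk_eq']
  have h2 : ‖z - w‖ ≤ 1 + ‖w‖ := by have := norm_sub_le z w; linarith
  have h3 : 0 < ‖z - w‖ := by
    have := norm_sub_norm_le z w; linarith
  rw [le_div_iff₀ (by positivity), hz]
  have h4 : ‖z - w‖ ^ 2 ≤ (1 + ‖w‖) ^ 2 := by gcongr
  nlinarith [norm_nonneg w, mul_nonneg (sub_nonneg.2 hw.le) (sub_nonneg.2 h4), mul_nonneg (sub_nonneg.2 hw.le) (mul_nonneg (norm_nonneg w) (sub_nonneg.2 hw.le))]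

/-- The Poisson kernel reproduces functions holomorphic in the disc and continuous up to the circle. -/
lemma integral_pk_mul {f : ℂ → ℂ} (hm : Measurable f) (hf : DiffContOnCl ℂ f (Metric.ball 0 1))
    {w : ℂ} (hw : ‖w‖ < 1) : ∫ z, (pk w z : ℂ) * f z ∂mC = f w := by
  rw [← hf.circleAverage_poissonKernel_smul (w := w) (by simpa using hw), circleAverage_eq]
  · simp [pk_eq]
  · have : poissonKernel 0 w = pk w := by ext; rw [pk_eq]
    rw [this]
    exact (measurable_pk'.smul hm).aestronglyMeasurable

lemma integrable_pk {w : ℂ} (hw : ‖w‖ < 1) : Integrable (pk w) mC := by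
  refine Integrable.of_bound measurable_pk'.aestronglyMeasurable (2 / (1 - ‖w‖)) ?_
  filter_upwards [ae_norm_eq_one] with z hz
  rw [Real.norm_of_nonneg (pk_nonneg hw hz)]
  exact pk_le hw hz

lemma integral_pk {w : ℂ} (hw : ‖w‖ < 1) : ∫ z, pk w z ∂mC = 1 := by
  have := integral_pk_mul (f := fun _ => 1) measurable_const diffContOnCl_const hw
  simp only [mul_one] at this
  rw [integral_complex_ofReal] at this
  exact_mod_cast this

lemma Hz_re {g : ℂ → ℝ} (hg : Integrable g mC) {w : ℂ} (hw : ‖w‖ < 1) :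
    (Hz (fun z => (g z : ℂ)) w).re = ∫ z, pk w z * g z ∂mC := by
  have := integral_re (integrable_hk_mul (g := fun z => (g z : ℂ)) hg.ofReal hw)
  simp only [RCLike.re_to_complex] at this
  rw [Hz, ← this]
  simp [pk]

lemma Hz_zero {g : ℂ → ℂ} : Hz g 0 = ∫ z, g z ∂mC := by
  refine integral_congr_ae ?_
  filter_upwards [ae_norm_eq_one] with z hz
  have : z ≠ 0 := by rintro rfl; simp at hz
  simp [hk, this]

lemma integral_of_analytic {f : ℂ → ℂ} (hm : Measurable f)
    (hf : DiffContOnCl ℂ f (Metric.ball 0 1)) : ∫ z, f z ∂mC = f 0 := by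
  rw [← circleAverage_eq hm.aestronglyMeasurable]
  exact DiffContOnCl.circleAverage (by simpa using hf)

lemma diffContOnCl_dilate {f : ℂ → ℂ} (hf : DifferentiableOn ℂ f (Metric.ball 0 1)) {r : ℝ}
    (h0 : 0 ≤ r) (hr : r < 1) : DiffContOnCl ℂ (fun z => f (r * z)) (Metric.ball 0 1) := by
  have : DifferentiableOn ℂ (fun z => f (r * z)) (closure (Metric.ball 0 1)) := by
    rw [closure_ball _ one_ne_zero]
    refine hf.comp (by fun_prop) fun z hz => ?_
    simp only [mem_closedBall_zero_iff] at hz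
    simp only [mem_ball_zero_iff, norm_mul, Complex.norm_real, Real.norm_of_nonneg h0]
    nlinarith [norm_nonneg z]
  exact this.diffContOnCl

lemma measurable_Hz {g : ℂ → ℂ} (hm : Measurable g) : Measurable (Hz g) := by
  unfold Hz
  refine StronglyMeasurable.measurable ?_
  refine StronglyMeasurable.integral_prod_right (f := fun w z => hk w z * g z) ?_
  exact (measurable_hk.mul (hm.comp measurable_snd)).stronglyMeasurable

/-! ### The M. Riesz inequality for the Herglotz integral -/

/-- On the right half-plane `‖w‖ ^ p` is controlled by `(Re w) ^ p` and the harmonic function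
`Re (w ^ p)`. For `1 < p ≤ 2` the latter is negative once `|arg w|` is close to `π / 2`, which is
where `(Re w) ^ p` alone fails to dominate. -/
lemma riesz_pointwise {p : ℝ} (hp1 : 1 < p) (hp2 : p ≤ 2) :
    ∃ A B : ℝ, 0 ≤ A ∧ 0 ≤ B ∧ ∀ w : ℂ, 0 < w.re →
      ‖w‖ ^ p ≤ A * w.re ^ p - B * (w ^ (p : ℂ)).re := by
  have hpi := Real.pi_pos
  -- an angle below `π / 2` with `cos (p x0) < 0`
  set x0 : ℝ := (Real.pi / 2 / p + Real.pi / 2) / 2 with hx0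
  have hlt : Real.pi / 2 / p < Real.pi / 2 := div_lt_self (by positivity) hp1
  have h1 : 0 < x0 := by positivity
  have h2 : x0 < Real.pi / 2 := by rw [hx0]; linarith
  have h3 : Real.pi / 2 < p * x0 := by
    have : Real.pi / 2 / p < x0 := by rw [hx0]; linarith
    rw [div_lt_iff₀ (by linarith)] at this; linarith
  have h4 : p * x0 < Real.pi := by nlinarith
  have hc1 : 0 < Real.cos x0 := Real.cos_pos_of_mem_Ioo ⟨by linarith, h2⟩
  have hc2 : Real.cos (p * x0) < 0 :=
    Real.cos_neg_of_pi_div_two_lt_of_lt h3 (by linarith)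
  set B : ℝ := -(Real.cos (p * x0))⁻¹ with hB
  have hB0 : 0 < B := by rw [hB]; simpa using hc2
  refine ⟨(1 + B) / Real.cos x0 ^ p, B, by positivity, hB0.le, fun w hw => ?_⟩
  have hw0 : w ≠ 0 := by rintro rfl; simp at hw
  have hn : 0 < ‖w‖ := norm_pos_iff.2 hw0
  have hre : w.re = ‖w‖ * Real.cos w.arg := (Complex.norm_mul_cos_arg w).symm
  have hcp : (w ^ (p : ℂ)).re = ‖w‖ ^ p * Real.cos (p * w.arg) := by
    rw [Complex.cpow_def_of_ne_zero hw0, Complex.exp_re, Real.rpow_def_of_pos hn]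
    simp [Complex.log_re, Complex.log_im, mul_comm p]
  have harg : |w.arg| ≤ Real.pi / 2 := Complex.abs_arg_le_pi_div_two_iff.2 hw.le
  have hcos : 0 < Real.cos w.arg := by
    rw [hre] at hw; exact (mul_pos_iff_of_pos_left hn).1 hw
  rw [hcp, hre, Real.mul_rpow hn.le hcos.le]
  suffices h : 1 ≤ (1 + B) / Real.cos x0 ^ p * Real.cos w.arg ^ p - B * Real.cos (p * w.arg) by
    have := mul_le_mul_of_nonneg_left h (Real.rpow_nonneg hn.le p)
    linarith
  rcases le_total |w.arg| x0 with h | h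
  · have : Real.cos x0 ≤ Real.cos w.arg := by
      rw [← Real.cos_abs w.arg]
      exact Real.cos_le_cos_of_nonneg_of_le_pi (abs_nonneg _) (by linarith) h
    have h5 : Real.cos x0 ^ p ≤ Real.cos w.arg ^ p := by gcongr
    have h6 : 1 + B ≤ (1 + B) / Real.cos x0 ^ p * Real.cos w.arg ^ p := by
      rw [div_mul_eq_mul_div, le_div_iff₀ (by positivity)]
      gcongr
    have := mul_le_mul_of_nonneg_left (Real.cos_le_one (p * w.arg)) hB0.le
    linarith
  · have h5 : Real.cos (p * w.arg) ≤ Real.cos (p * x0) := by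
      rw [← Real.cos_abs (p * w.arg), abs_mul, abs_of_pos (by linarith : 0 < p)]
      refine Real.cos_le_cos_of_nonneg_of_le_pi (by positivity) (by nlinarith) (by gcongr)
    have h6 : B * Real.cos (p * x0) = -1 := by
      rw [hB, neg_mul, inv_mul_cancel₀ hc2.ne]
    have h7 := mul_le_mul_of_nonneg_left h5 hB0.le
    have h8 : 0 ≤ (1 + B) / Real.cos x0 ^ p * Real.cos w.arg ^ p := by positivity
    linarith

lemma norm_Hz_le {g : ℂ → ℂ} (hg : Integrable g mC) {r : ℝ} (hr : r < 1) {w : ℂ} (hw : ‖w‖ ≤ r) :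
    ‖Hz g w‖ ≤ 2 / (1 - r) * ∫ z, ‖g z‖ ∂mC := by
  rw [Hz, ← integral_const_mul]
  refine norm_integral_le_of_norm_le (hg.norm.const_mul _) ?_
  filter_upwards [ae_norm_eq_one] with z hz
  rw [norm_mul]
  gcongr
  exact norm_hk_le hr hw hz

/-- For nonnegative `g` the function `F = Hz g` has nonnegative real part. Integrating
`riesz_pointwise` over a circle and using that the mean of `Re (F ^ p)` is its value at the centre,
a nonnegative number, bounds the `p`-mean of `F` by that of `Re F`. -/
lemma lintegral_Hz_nonneg {p : ℝ} (hp1 : 1 < p) (hp2 : p ≤ 2) :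
    ∃ A : ℝ, 0 ≤ A ∧ ∀ g : ℂ → ℝ, Measurable g → (∀ z, 0 ≤ g z) → Integrable g mC →
      ∀ r : ℝ, 0 ≤ r → r < 1 →
      ∫⁻ z, ENNReal.ofReal (‖Hz (fun z => (g z : ℂ)) (r * z)‖ ^ p) ∂mC ≤
        ENNReal.ofReal A * ∫⁻ z, ENNReal.ofReal ((Hz (fun z => (g z : ℂ)) (r * z)).re ^ p) ∂mC := by
  obtain ⟨A, B, hA, hB, hAB⟩ := riesz_pointwise hp1 hp2
  refine ⟨A, hA, fun g hm h0 hg r hr0 hr1 => ?_⟩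
  have hp0 : 0 < p := by linarith
  have hrz : ∀ z : ℂ, ‖z‖ ≤ 1 → ‖(r : ℂ) * z‖ ≤ r := fun z hz => by
    rw [norm_mul, Complex.norm_real, Real.norm_of_nonneg hr0]; nlinarith
  rcases (integral_nonneg h0 : 0 ≤ ∫ z, g z ∂mC).eq_or_lt with h | h
  · have hg0 : g =ᵐ[mC] 0 := (integral_eq_zero_iff_of_nonneg h0 hg).1 h.symm
    have : ∀ w, Hz (fun z => (g z : ℂ)) w = 0 := fun w => by
      rw [Hz]
      refine integral_eq_zero_of_ae ?_
      filter_upwards [hg0] with z hz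
      simp [hz]
    simp [this, hp0.ne']
  · set F := Hz (fun z => (g z : ℂ)) with hF
    have hgc : Integrable (fun z => (g z : ℂ)) mC := hg.ofReal
    have hmc : Measurable (fun z => (g z : ℂ)) := by fun_prop
    have hFm : Measurable F := measurable_Hz hmc
    have hpos : ∀ w : ℂ, ‖w‖ < 1 → 0 < (F w).re := fun w hw => by
      rw [hF, Hz_re hg hw]
      have h1 : 0 < (1 - ‖w‖) / 2 * ∫ z, g z ∂mC := mul_pos (by linarith) h
      refine h1.trans_le ?_
      rw [← integral_const_mul]
      refine integral_mono_ae (hg.const_mul _) ?_ ?_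
      · refine hg.bdd_mul (c := 2 / (1 - ‖w‖)) measurable_pk'.aestronglyMeasurable ?_
        filter_upwards [ae_norm_eq_one] with z hz
        rw [Real.norm_of_nonneg (pk_nonneg hw hz)]
        exact pk_le hw hz
      · filter_upwards [ae_norm_eq_one] with z hz
        exact mul_le_mul_of_nonneg_right (le_pk hw hz) (h0 z)
    have hFd : DifferentiableOn ℂ F (Metric.ball 0 1) := Hz_analytic hmc hgc
    have hGd : DifferentiableOn ℂ (fun w => F w ^ (p : ℂ)) (Metric.ball 0 1) := by
      intro w hw
      exact (hFd w hw).cpow_const (Or.inl (hpos w (by simpa using hw)))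
    have hmean := integral_of_analytic (f := fun z => F (r * z) ^ (p : ℂ)) (by fun_prop)
      (diffContOnCl_dilate hGd hr0 hr1)
    set M : ℝ := 2 / (1 - r) * ∫ z, ‖(g z : ℂ)‖ ∂mC with hM
    have hbd : ∀ z : ℂ, ‖z‖ ≤ 1 → ‖F (r * z)‖ ≤ M := fun z hz => norm_Hz_le hgc hr1 (hrz z hz)
    have hcp : ∀ w : ℂ, ‖w ^ (p : ℂ)‖ ≤ ‖w‖ ^ p := fun w => by
      rcases eq_or_ne w 0 with rfl | hw
      · simp [hp0.ne']
      · rw [Complex.norm_cpow_of_ne_zero hw]; simp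
    have hi1 : Integrable (fun z => F (r * z) ^ (p : ℂ)) mC := by
      refine Integrable.of_bound (Measurable.aestronglyMeasurable (by fun_prop)) (M ^ p) ?_
      filter_upwards [ae_norm_eq_one] with z hz
      exact (hcp _).trans (by gcongr; exact hbd z hz.le)
    have hi2 : Integrable (fun z => ‖F (r * z)‖ ^ p) mC := by
      refine Integrable.of_bound (Measurable.aestronglyMeasurable (by fun_prop)) (M ^ p) ?_
      filter_upwards [ae_norm_eq_one] with z hz
      rw [Real.norm_of_nonneg (by positivity)]
      gcongr; exact hbd z hz.le
    have hi3 : Integrable (fun z => (F (r * z)).re ^ p) mC := by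
      refine Integrable.of_bound (Measurable.aestronglyMeasurable (by fun_prop)) (M ^ p) ?_
      filter_upwards [ae_norm_eq_one] with z hz
      have := hpos (r * z) ((hrz z hz.le).trans_lt hr1)
      rw [Real.norm_of_nonneg (by positivity)]
      gcongr; exact (Complex.re_le_norm _).trans (hbd z hz.le)
    have hre : ∫ z, (F (r * z) ^ (p : ℂ)).re ∂mC = (∫ z, g z ∂mC) ^ p := by
      have := integral_re hi1
      simp only [RCLike.re_to_complex] at this
      rw [this, hmean, mul_zero, hF, Hz_zero, integral_complex_ofReal,
        ← Complex.ofReal_cpow h.le, Complex.ofReal_re]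
    have hi4 : Integrable (fun z => (F (r * z) ^ (p : ℂ)).re) mC := hi1.re
    have key : ∫ z, ‖F (r * z)‖ ^ p ∂mC ≤ A * ∫ z, (F (r * z)).re ^ p ∂mC := by
      have h1 : ∫ z, ‖F (r * z)‖ ^ p ∂mC ≤
          ∫ z, (A * (F (r * z)).re ^ p - B * (F (r * z) ^ (p : ℂ)).re) ∂mC := by
        refine integral_mono_ae hi2 ((hi3.const_mul _).sub (hi4.const_mul _)) ?_
        filter_upwards [ae_norm_eq_one] with z hz
        exact hAB _ (hpos (r * z) ((hrz z hz.le).trans_lt hr1))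
      rw [integral_sub (hi3.const_mul _) (hi4.const_mul _), integral_const_mul,
        integral_const_mul, hre] at h1
      have : 0 ≤ B * (∫ z, g z ∂mC) ^ p := by positivity
      linarith
    rw [← ofReal_integral_eq_lintegral_ofReal hi2 (Eventually.of_forall fun z => by positivity),
      ← ofReal_integral_eq_lintegral_ofReal hi3 ?_, ← ENNReal.ofReal_mul hA]
    · exact ENNReal.ofReal_le_ofReal key
    · filter_upwards [ae_norm_eq_one] with z hz
      have := hpos (r * z) ((hrz z hz.le).trans_lt hr1)
      positivity

/-- Jensen's inequality for `t ↦ t ^ p` and the probability density `K`. -/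
lemma lintegral_jensen {μ : Measure ℂ} {K : ℂ → ENNReal} (hK : Measurable K)
    (hK1 : ∫⁻ z, K z ∂μ = 1) {G : ℂ → ENNReal} (hG : Measurable G)
    {p : ℝ} (hp : 1 ≤ p) : (∫⁻ z, K z * G z ∂μ) ^ p ≤ ∫⁻ z, K z * G z ^ p ∂μ := by
  have : IsProbabilityMeasure (μ.withDensity K) := ⟨by simp [hK1]⟩
  have h := eLpNorm'_le_eLpNorm'_of_exponent_le (μ := μ.withDensity K) (f := G) one_pos hp
    hG.aestronglyMeasurable
  simp only [eLpNorm', enorm_eq_self, ENNReal.rpow_one, div_one] at h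
  rw [lintegral_withDensity_eq_lintegral_mul _ hK hG,
    lintegral_withDensity_eq_lintegral_mul _ hK (hG.pow_const p)] at h
  have := ENNReal.rpow_le_rpow h (by linarith : 0 ≤ p)
  rw [← ENNReal.rpow_mul, one_div, inv_mul_cancel₀ (by linarith), ENNReal.rpow_one] at this
  exact this

lemma pk_symm {r : ℝ} {w z : ℂ} (hw : ‖w‖ = 1) (hz : ‖z‖ = 1) :
    pk (r * w) z = pk (r * z) w := by
  rw [pk_eq', pk_eq']
  have h1 : ‖z - r * w‖ ^ 2 = ‖w - r * z‖ ^ 2 := by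
    rw [← Complex.normSq_eq_norm_sq, ← Complex.normSq_eq_norm_sq, Complex.normSq_apply,
      Complex.normSq_apply]
    have e1 := Complex.normSq_eq_norm_sq w
    have e2 := Complex.normSq_eq_norm_sq z
    rw [Complex.normSq_apply, hw] at e1
    rw [Complex.normSq_apply, hz] at e2
    simp only [Complex.sub_re, Complex.mul_re, Complex.ofReal_re, Complex.ofReal_im, Complex.sub_im,
      Complex.mul_im]
    linear_combination (1 - r ^ 2) * e2 - (1 - r ^ 2) * e1
  rw [h1, norm_mul, norm_mul, hw, hz]

lemma norm_mul_lt {r : ℝ} (h0 : 0 ≤ r) (h1 : r < 1) {z : ℂ} (hz : ‖z‖ = 1) :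
    ‖(r : ℂ) * z‖ < 1 := by
  rw [norm_mul, Complex.norm_real, Real.norm_of_nonneg h0, hz, mul_one]; exact h1

lemma lintegral_pk {w : ℂ} (hw : ‖w‖ < 1) : ∫⁻ z, ENNReal.ofReal (pk w z) ∂mC = 1 := by
  rw [← ofReal_integral_eq_lintegral_ofReal (integrable_pk hw), integral_pk hw, ENNReal.ofReal_one]
  filter_upwards [ae_norm_eq_one] with z hz using pk_nonneg hw hz

/-- The Poisson integral contracts `L^p`, by Jensen's inequality, Tonelli's theorem and the symmetry
of the kernel. -/
lemma lintegral_pk_pow {p : ℝ} (hp1 : 1 ≤ p) {g : ℂ → ℝ} (hm : Measurable g) (h0 : ∀ z, 0 ≤ g z)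
    (hg : Integrable g mC) {r : ℝ} (hr0 : 0 ≤ r) (hr1 : r < 1) :
    ∫⁻ z, ENNReal.ofReal ((Hz (fun z => (g z : ℂ)) (r * z)).re ^ p) ∂mC ≤
      ∫⁻ z, ENNReal.ofReal (g z ^ p) ∂mC := by
  have hp0 : 0 ≤ p := by linarith
  have hpm : Measurable fun x : ℂ × ℂ => ENNReal.ofReal (pk (r * x.1) x.2) :=
    (measurable_pk.comp ((measurable_fst.const_mul (r : ℂ)).prodMk measurable_snd)).ennreal_ofReal
  calc ∫⁻ z, ENNReal.ofReal ((Hz (fun z => (g z : ℂ)) (r * z)).re ^ p) ∂mC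
      ≤ ∫⁻ z, ∫⁻ y, ENNReal.ofReal (pk (r * z) y) * ENNReal.ofReal (g y) ^ p ∂mC ∂mC := by
        refine lintegral_mono_ae ?_
        filter_upwards [ae_norm_eq_one] with z hz
        have hw := norm_mul_lt hr0 hr1 hz
        have hnn : ∀ᵐ y ∂mC, 0 ≤ pk (r * z) y * g y := by
          filter_upwards [ae_norm_eq_one] with y hy using mul_nonneg (pk_nonneg hw hy) (h0 y)
        have hi : Integrable (fun y => pk (r * z) y * g y) mC := by
          have := (integrable_hk_mul (g := fun z => (g z : ℂ)) hg.ofReal hw).re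
          simpa [pk] using this
        rw [Hz_re hg hw, ← ENNReal.ofReal_rpow_of_nonneg (integral_nonneg_of_ae hnn) hp0,
          ofReal_integral_eq_lintegral_ofReal hi hnn]
        refine le_trans (le_of_eq ?_) (lintegral_jensen (K := fun y => ENNReal.ofReal (pk (r * z) y))
          measurable_pk'.ennreal_ofReal (lintegral_pk hw) hm.ennreal_ofReal hp1)
        congr 1
        refine lintegral_congr fun y => ?_
        rw [ENNReal.ofReal_mul' (h0 y)]
    _ = ∫⁻ y, ∫⁻ z, ENNReal.ofReal (pk (r * z) y) * ENNReal.ofReal (g y) ^ p ∂mC ∂mC := by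
        refine lintegral_lintegral_swap ?_
        exact (hpm.mul ((hm.comp measurable_snd).ennreal_ofReal.pow_const p)).aemeasurable
    _ = ∫⁻ y, ENNReal.ofReal (g y ^ p) ∂mC := by
        refine lintegral_congr_ae ?_
        filter_upwards [ae_norm_eq_one] with y hy
        have hpy : Measurable fun z => ENNReal.ofReal (pk (r*z) y) :=
          hpm.comp (measurable_id.prodMk measurable_const)
        rw [lintegral_mul_const _ hpy,
          ENNReal.ofReal_rpow_of_nonneg (h0 y) hp0]
        have : ∫⁻ z, ENNReal.ofReal (pk (r * z) y) ∂mC = 1 := by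
          rw [← lintegral_pk (norm_mul_lt hr0 hr1 hy)]
          refine lintegral_congr_ae ?_
          filter_upwards [ae_norm_eq_one] with z hz
          rw [pk_symm hz hy]
        rw [this, one_mul]

lemma eLpNorm_mC {p : ℝ} (hp : 0 < p) {E : Type*} [NormedAddCommGroup E] (u : ℂ → E) :
    eLpNorm u (ENNReal.ofReal p) mC = (∫⁻ z, ENNReal.ofReal (‖u z‖ ^ p) ∂mC) ^ (1 / p) := by
  rw [eLpNorm_eq_lintegral_rpow_enorm_toReal (by simpa using hp) ENNReal.ofReal_ne_top,
    ENNReal.toReal_ofReal hp.le]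
  congr 1
  refine lintegral_congr fun z => ?_
  rw [← ofReal_norm, ENNReal.ofReal_rpow_of_nonneg (norm_nonneg _) hp.le]

lemma memLp_integrable {p : ℝ} (hp1 : 1 ≤ p) {E : Type*} [NormedAddCommGroup E] {u : ℂ → E}
    (h : MemLp u (ENNReal.ofReal p) mC) : Integrable u mC :=
  h.integrable (by simpa using hp1)

/-- M. Riesz' inequality for nonnegative data: `Re (Hz g)` is the Poisson integral of `g`, so its
`p`-means are at most that of `g`. -/
lemma eLpNorm_Hz_nonneg {p : ℝ} (hp1 : 1 < p) (hp2 : p ≤ 2) :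
    ∃ A : NNReal, ∀ g : ℂ → ℝ, Measurable g → (∀ z, 0 ≤ g z) → Integrable g mC →
      ∀ r : ℝ, 0 ≤ r → r < 1 →
      eLpNorm (fun z => Hz (fun z => (g z : ℂ)) (r * z)) (ENNReal.ofReal p) mC ≤
        A * eLpNorm g (ENNReal.ofReal p) mC := by
  obtain ⟨A, hA, h⟩ := lintegral_Hz_nonneg hp1 hp2
  have hp0 : 0 < p := by linarith
  refine ⟨(A ^ (1 / p)).toNNReal, fun g hm h0 hg r hr0 hr1 => ?_⟩
  have h1 := (h g hm h0 hg r hr0 hr1).trans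
    (mul_le_mul_right (lintegral_pk_pow hp1.le hm h0 hg hr0 hr1) _)
  rw [eLpNorm_mC hp0, eLpNorm_mC hp0]
  refine (ENNReal.rpow_le_rpow h1 (by positivity)).trans (le_of_eq ?_)
  rw [ENNReal.mul_rpow_of_nonneg _ _ (by positivity), ENNReal.ofReal_rpow_of_nonneg hA (by positivity)]
  simp_rw [Real.norm_of_nonneg (h0 _)]
  rfl

lemma integrable_toC {g : ℂ → ℝ} (h : Integrable g mC) :
    Integrable (fun z => (g z : ℂ)) mC := h.ofReal

lemma Hz_add {g₁ g₂ : ℂ → ℂ} (h₁ : Integrable g₁ mC) (h₂ : Integrable g₂ mC) {w : ℂ}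
    (hw : ‖w‖ < 1) : Hz (fun z => g₁ z + g₂ z) w = Hz g₁ w + Hz g₂ w := by
  simp only [Hz, mul_add]
  exact integral_add (integrable_hk_mul h₁ hw) (integrable_hk_mul h₂ hw)

lemma Hz_sub {g₁ g₂ : ℂ → ℂ} (h₁ : Integrable g₁ mC) (h₂ : Integrable g₂ mC) {w : ℂ}
    (hw : ‖w‖ < 1) : Hz (fun z => g₁ z - g₂ z) w = Hz g₁ w - Hz g₂ w := by
  simp only [Hz, mul_sub]
  exact integral_sub (integrable_hk_mul h₁ hw) (integrable_hk_mul h₂ hw)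

lemma Hz_const_mul {g : ℂ → ℂ} (c : ℂ) {w : ℂ} : Hz (fun z => c * g z) w = c * Hz g w := by
  rw [Hz, Hz, ← integral_const_mul]
  congr 1; ext z; ring

lemma measurable_Hz_dilate {g : ℂ → ℂ} (hm : Measurable g) (r : ℝ) :
    Measurable fun z : ℂ => Hz g (r * z) := (measurable_Hz hm).comp (measurable_const_mul _)

/-- Real data split into positive and negative parts. -/
lemma eLpNorm_Hz_real {p : ℝ} (hp1 : 1 < p) (hp2 : p ≤ 2) :
    ∃ A : NNReal, ∀ g : ℂ → ℝ, Measurable g → Integrable g mC →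
      ∀ r : ℝ, 0 ≤ r → r < 1 →
      eLpNorm (fun z => Hz (fun z => (g z : ℂ)) (r * z)) (ENNReal.ofReal p) mC ≤
        A * eLpNorm g (ENNReal.ofReal p) mC := by
  obtain ⟨A, h⟩ := eLpNorm_Hz_nonneg hp1 hp2
  refine ⟨A + A, fun g hm hg r hr0 hr1 => ?_⟩
  have key : ∀ g' : ℂ → ℝ, Measurable g' → (∀ z, 0 ≤ g' z) → (∀ z, g' z ≤ |g z|) →
      Integrable g' mC ∧ eLpNorm (fun z => Hz (fun z => (g' z : ℂ)) (r * z)) (ENNReal.ofReal p) mC ≤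
        A * eLpNorm g (ENNReal.ofReal p) mC := fun g' hm' h0 hle => by
    have hn : ∀ z, ‖g' z‖ ≤ ‖g z‖ := fun z => by
      rw [Real.norm_of_nonneg (h0 z)]; exact hle z
    have hi : Integrable g' mC := hg.mono hm'.aestronglyMeasurable (Eventually.of_forall hn)
    exact ⟨hi, (h g' hm' h0 hi r hr0 hr1).trans (by gcongr; exact eLpNorm_mono hn)⟩
  obtain ⟨i1, b1⟩ := key (fun z => max (g z) 0) (hm.max measurable_const)
    (fun z => le_max_right _ _) (fun z => max_le (le_abs_self _) (abs_nonneg _))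
  obtain ⟨i2, b2⟩ := key (fun z => max (-g z) 0) (hm.neg.max measurable_const)
    (fun z => le_max_right _ _) (fun z => max_le (neg_le_abs _) (abs_nonneg _))
  have e : (fun z => Hz (fun z => (g z : ℂ)) (r * z)) =ᵐ[mC]
      (fun z => Hz (fun z => ((max (g z) 0 : ℝ) : ℂ)) (r * z)) -
      (fun z => Hz (fun z => ((max (-g z) 0 : ℝ) : ℂ)) (r * z)) := by
    filter_upwards [ae_norm_eq_one] with z hz
    rw [Pi.sub_apply, ← Hz_sub (integrable_toC i1) (integrable_toC i2) (norm_mul_lt hr0 hr1 hz)]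
    congr 1; ext y
    rw [← Complex.ofReal_sub]
    congr 1
    rcases le_total (g y) 0 with h | h
    · rw [max_eq_right h, max_eq_left (by linarith)]; ring
    · rw [max_eq_left h, max_eq_right (by linarith)]; ring
  rw [eLpNorm_congr_ae e]
  refine (eLpNorm_sub_le ?_ ?_ (by simpa using hp1.le)).trans ?_
  · exact (measurable_Hz_dilate (by fun_prop) r).aestronglyMeasurable
  · exact (measurable_Hz_dilate (by fun_prop) r).aestronglyMeasurable
  · rw [ENNReal.coe_add, add_mul]; exact add_le_add b1 b2

/-- Complex data split into real and imaginary parts. -/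
lemma eLpNorm_Hz_le_two {p : ℝ} (hp1 : 1 < p) (hp2 : p ≤ 2) :
    ∃ A : NNReal, ∀ g : ℂ → ℂ, Measurable g → Integrable g mC →
      ∀ r : ℝ, 0 ≤ r → r < 1 →
      eLpNorm (fun z => Hz g (r * z)) (ENNReal.ofReal p) mC ≤
        A * eLpNorm g (ENNReal.ofReal p) mC := by
  obtain ⟨A, h⟩ := eLpNorm_Hz_real hp1 hp2
  refine ⟨A + A, fun g hm hg r hr0 hr1 => ?_⟩
  have i1 : Integrable (fun z => (g z).re) mC := hg.re
  have i2 : Integrable (fun z => (g z).im) mC := hg.im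
  have m1 : Measurable (fun z => (g z).re) := by fun_prop
  have m2 : Measurable (fun z => (g z).im) := by fun_prop
  have b1 := (h _ m1 i1 r hr0 hr1).trans
    (mul_le_mul_right (eLpNorm_mono (g := g) fun z => Complex.abs_re_le_norm _) _)
  have b2 := (h _ m2 i2 r hr0 hr1).trans
    (mul_le_mul_right (eLpNorm_mono (g := g) fun z => Complex.abs_im_le_norm _) _)
  have e : (fun z => Hz g (r * z)) =ᵐ[mC]
      (fun z => Hz (fun z => (((g z).re : ℝ) : ℂ)) (r * z)) +
      Complex.I • (fun z => Hz (fun z => (((g z).im : ℝ) : ℂ)) (r * z)) := by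
    filter_upwards [ae_norm_eq_one] with z hz
    rw [Pi.add_apply, Pi.smul_apply, smul_eq_mul, ← Hz_const_mul,
      ← Hz_add (integrable_toC i1) ((integrable_toC i2).const_mul _) (norm_mul_lt hr0 hr1 hz)]
    congr 1; ext y
    rw [mul_comm]; exact (Complex.re_add_im _).symm
  rw [eLpNorm_congr_ae e]
  refine (eLpNorm_add_le ?_ ?_ (by simpa using hp1.le)).trans ?_
  · exact (measurable_Hz_dilate (by fun_prop) r).aestronglyMeasurable
  · exact (measurable_Hz_dilate (by fun_prop) r).aestronglyMeasurable.const_smul _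
  · rw [ENNReal.coe_add, add_mul, eLpNorm_const_smul]
    simp only [enorm_eq_nnnorm, Complex.nnnorm_I, ENNReal.coe_one, one_mul]
    exact add_le_add b1 b2

lemma eLpNorm_mC' {p : ℝ} (hp : 0 < p) {E : Type*} [NormedAddCommGroup E] (u : ℂ → E) :
    eLpNorm u (ENNReal.ofReal p) mC = (∫⁻ z, ‖u z‖ₑ ^ p ∂mC) ^ (1 / p) := by
  rw [eLpNorm_eq_lintegral_rpow_enorm_toReal (by simpa using hp) ENNReal.ofReal_ne_top,
    ENNReal.toReal_ofReal hp.le]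

/-- On the circle the dilated Herglotz kernel is Hermitian. -/
lemma hk_adjoint {r : ℝ} {w z : ℂ} (hw : ‖w‖ = 1) (hz : ‖z‖ = 1) :
    hk (r * w) z = (starRingEnd ℂ) (hk (r * z) w) := by
  have hw0 : w ≠ 0 := by rintro rfl; simp at hw
  have hz0 : z ≠ 0 := by rintro rfl; simp at hz
  have e1 : (starRingEnd ℂ) w = w⁻¹ := (Complex.inv_eq_conj hw).symm
  have e2 : (starRingEnd ℂ) z = z⁻¹ := (Complex.inv_eq_conj hz).symm
  simp only [hk, map_div₀, map_add, map_sub, map_mul, Complex.conj_ofReal, e1, e2]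
  have h1 : w⁻¹ + r * z⁻¹ = (z + r * w) * (w⁻¹ * z⁻¹) := by field_simp
  have h2 : w⁻¹ - r * z⁻¹ = (z - r * w) * (w⁻¹ * z⁻¹) := by field_simp
  rw [h1, h2, mul_div_mul_right _ _ (by simp [hw0, hz0])]

/-- By `hk_adjoint` and Fubini, the dilated Herglotz operator is its own adjoint, up to the
conjugations that turn the bilinear pairing into a sesquilinear one. -/
lemma Hz_duality {g h : ℂ → ℂ} (hg : Integrable g mC)
    (hh : Integrable h mC) {r : ℝ} (hr0 : 0 ≤ r) (hr1 : r < 1) :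
    ∫ z, Hz g (r * z) * h z ∂mC =
      ∫ z, g z * (starRingEnd ℂ) (Hz (fun y => (starRingEnd ℂ) (h y)) (r * z)) ∂mC := by
  have hKm : Measurable fun x : ℂ × ℂ => hk (r * x.1) x.2 :=
    measurable_hk.comp ((measurable_fst.const_mul (r : ℂ)).prodMk measurable_snd)
  have hinte : Integrable (Function.uncurry fun x y => hk (r * x) y * (g y * h x)) (mC.prod mC) := by
    have h1 : Integrable (fun x : ℂ × ℂ => g x.2 * h x.1) (mC.prod mC) := by
      have := hh.mul_prod hg
      refine this.congr (Eventually.of_forall fun x => mul_comm _ _)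
    refine h1.bdd_mul (c := 2 / (1 - r)) hKm.aestronglyMeasurable ?_
    have a1 : ∀ᵐ x ∂(mC.prod mC), ‖x.1‖ = 1 :=
      Measure.quasiMeasurePreserving_fst.ae ae_norm_eq_one
    have a2 : ∀ᵐ x ∂(mC.prod mC), ‖x.2‖ = 1 :=
      Measure.quasiMeasurePreserving_snd.ae ae_norm_eq_one
    filter_upwards [a1, a2] with x h1 h2
    refine norm_hk_le hr1 ?_ h2
    rw [norm_mul, h1, Complex.norm_real, Real.norm_of_nonneg hr0, mul_one]
  calc ∫ z, Hz g (r * z) * h z ∂mC = ∫ x, ∫ y, hk (r * x) y * (g y * h x) ∂mC ∂mC := by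
        congr 1; ext x
        rw [Hz, ← integral_mul_const]
        congr 1; ext y; ring
    _ = ∫ y, ∫ x, hk (r * x) y * (g y * h x) ∂mC ∂mC := integral_integral_swap hinte
    _ = _ := by
        refine integral_congr_ae ?_
        filter_upwards [ae_norm_eq_one] with y hy
        rw [Hz, ← integral_conj, ← integral_const_mul]
        refine integral_congr_ae ?_
        filter_upwards [ae_norm_eq_one] with x hx
        rw [hk_adjoint hx hy]
        simp only [map_mul, Complex.conj_conj]
        ring

/-- Exponents above `2` follow by duality from the conjugate exponent `q < 2`: with `T` the dilate of
`Hz g`, the pairing is tested against `conj T * |T| ^ (p - 2)`. -/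
lemma eLpNorm_Hz_two_le {p : ℝ} (hp2 : 2 < p) :
    ∃ A : NNReal, ∀ g : ℂ → ℂ, Measurable g → Integrable g mC →
      ∀ r : ℝ, 0 ≤ r → r < 1 →
      eLpNorm (fun z => Hz g (r * z)) (ENNReal.ofReal p) mC ≤
        A * eLpNorm g (ENNReal.ofReal p) mC := by
  set q := p / (p - 1) with hq
  have hp0 : 0 < p := by linarith
  have hp10 : 0 < p - 1 := by linarith
  have hq1 : 1 < q := by rw [hq, lt_div_iff₀ hp10]; linarith
  have hq2 : q ≤ 2 := by rw [hq, div_le_iff₀ hp10]; linarith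
  have hq0 : 0 < q := by linarith
  have hpq : p.HolderConjugate q := by
    rw [Real.holderConjugate_iff]
    refine ⟨by linarith, ?_⟩
    rw [hq]; field_simp; ring
  obtain ⟨A, hA⟩ := eLpNorm_Hz_le_two hq1 hq2
  refine ⟨A, fun g hgm hg r hr0 hr1 => ?_⟩
  set T : ℂ → ℂ := fun z => Hz g (r * z) with hT
  have hTm : Measurable T := measurable_Hz_dilate hgm r
  set M : ℝ := 2 / (1 - r) * ∫ z, ‖g z‖ ∂mC with hM
  have hM0 : 0 ≤ M := mul_nonneg (div_nonneg zero_le_two (by linarith)) (integral_nonneg fun _ => norm_nonneg _)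
  have hTb : ∀ᵐ z ∂mC, ‖T z‖ ≤ M := by
    filter_upwards [ae_norm_eq_one] with z hz
    refine norm_Hz_le hg hr1 ?_
    rw [norm_mul, Complex.norm_real, Real.norm_of_nonneg hr0, hz, mul_one]
  set h : ℂ → ℂ := fun z => (starRingEnd ℂ) (T z) * ((‖T z‖ ^ (p - 2) : ℝ) : ℂ) with hh
  have hconj : Measurable (starRingEnd ℂ) := Complex.continuous_conj.measurable
  have hhm : Measurable h := by
    refine (hconj.comp hTm).mul ?_
    exact Complex.measurable_ofReal.comp (hTm.norm.pow_const _)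
  have hhn : ∀ z, ‖h z‖ = ‖T z‖ ^ (p - 1) := fun z => by
    rw [hh]; simp only [norm_mul, RCLike.norm_conj, Complex.norm_real]
    rw [Real.norm_of_nonneg (by positivity)]
    nth_rewrite 1 [← Real.rpow_one ‖T z‖]
    rw [← Real.rpow_add' (norm_nonneg _) (by linarith)]
    congr 1; ring
  have hhi : Integrable h mC := by
    refine Integrable.of_bound hhm.aestronglyMeasurable (M ^ (p - 1)) ?_
    filter_upwards [hTb] with z hz
    rw [hhn]; gcongr
  have hTh : ∀ z, T z * h z = ((‖T z‖ ^ p : ℝ) : ℂ) := fun z => by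
    rw [hh]; simp only
    rw [← mul_assoc, Complex.mul_conj, ← Complex.ofReal_mul, Complex.normSq_eq_norm_sq,
      ← Real.rpow_natCast, ← Real.rpow_add' (norm_nonneg _) (by norm_num; linarith)]
    congr 2; norm_num
  set N := eLpNorm T (ENNReal.ofReal p) mC with hN
  have hNX : N ^ p = ∫⁻ z, ‖T z‖ₑ ^ p ∂mC := by
    rw [hN, eLpNorm_mC' hp0, ← ENNReal.rpow_mul, one_div, inv_mul_cancel₀ hp0.ne', ENNReal.rpow_one]
  have hNtop : N ≠ ⊤ := by
    have : MemLp T (ENNReal.ofReal p) mC := MemLp.of_bound hTm.aestronglyMeasurable M hTb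
    exact this.eLpNorm_ne_top
  set S : ℂ → ℂ := fun z => Hz (fun y => (starRingEnd ℂ) (h y)) (r * z) with hS
  have hSm : Measurable S := measurable_Hz_dilate (hconj.comp hhm) r
  have hSb : eLpNorm S (ENNReal.ofReal q) mC ≤ A * N ^ (p - 1) := by
    refine (hA _ (hconj.comp hhm) ?_ r hr0 hr1).trans (le_of_eq ?_)
    · refine hhi.mono (hconj.comp hhm).aestronglyMeasurable (Eventually.of_forall fun z => ?_)
      simp
    · congr 1
      rw [hN, eLpNorm_mC' hq0, eLpNorm_mC' hp0, ← ENNReal.rpow_mul]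
      have e1 : 1 / p * (p - 1) = 1 / q := by rw [hq]; field_simp
      rw [e1]
      congr 1
      refine lintegral_congr fun z => ?_
      have : ‖(starRingEnd ℂ) (h z)‖ₑ = ‖T z‖ₑ ^ (p - 1) := by
        rw [← ofReal_norm, RCLike.norm_conj, hhn, ← ENNReal.ofReal_rpow_of_nonneg (norm_nonneg _) hp10.le,
          ofReal_norm]
      rw [Function.comp_apply, this, ← ENNReal.rpow_mul]
      congr 1; rw [hq]; field_simp
  have key : N ^ p ≤ eLpNorm g (ENNReal.ofReal p) mC * eLpNorm S (ENNReal.ofReal q) mC := by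
    have h1 : N ^ p = ‖∫ z, g z * (starRingEnd ℂ) (S z) ∂mC‖ₑ := by
      rw [hS, ← Hz_duality hg hhi hr0 hr1]
      change _ = ‖∫ z, T z * h z ∂mC‖ₑ
      simp_rw [hTh]
      rw [integral_complex_ofReal, ← ofReal_norm, Complex.norm_real,
        Real.norm_of_nonneg (integral_nonneg fun z => by positivity),
        ofReal_integral_eq_lintegral_ofReal _ (Eventually.of_forall fun z => by positivity), hNX]
      · refine lintegral_congr fun z => ?_
        rw [← ENNReal.ofReal_rpow_of_nonneg (norm_nonneg _) hp0.le, ofReal_norm]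
      · refine Integrable.of_bound (hTm.norm.pow_const _).aestronglyMeasurable (M ^ p) ?_
        filter_upwards [hTb] with z hz
        rw [Real.norm_of_nonneg (by positivity)]
        gcongr
    rw [h1]
    refine (enorm_integral_le_lintegral_enorm _).trans ?_
    rw [eLpNorm_mC' hp0, eLpNorm_mC' hq0]
    refine le_trans (le_of_eq ?_) (ENNReal.lintegral_mul_le_Lp_mul_Lq mC hpq
      hgm.enorm.aemeasurable hSm.enorm.aemeasurable)
    refine lintegral_congr fun z => ?_
    rw [enorm_mul, Pi.mul_apply]
    congr 1
    rw [← ofReal_norm, ← ofReal_norm, RCLike.norm_conj]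
  rcases eq_or_ne N 0 with h0 | h0
  · rw [h0]; exact zero_le
  have hc0 : N ^ (p - 1) ≠ 0 := by simp [h0, hNtop]
  have hct : N ^ (p - 1) ≠ ⊤ := ENNReal.rpow_ne_top_of_nonneg hp10.le hNtop
  have e : N ^ p = N * N ^ (p - 1) := by
    nth_rewrite 2 [← ENNReal.rpow_one N]
    rw [← ENNReal.rpow_add _ _ h0 hNtop]; congr 1; ring
  rw [e] at key
  have k2 := key.trans (mul_le_mul_right hSb _)
  rw [← ENNReal.mul_le_mul_iff_left hc0 hct]
  refine k2.trans (le_of_eq ?_)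
  ring

/-- M. Riesz' inequality: the dilated Herglotz integrals are bounded on `L^p`, uniformly in the
radius. -/
lemma eLpNorm_Hz {p : ℝ} (hp1 : 1 < p) :
    ∃ A : NNReal, ∀ g : ℂ → ℂ, Measurable g → Integrable g mC →
      ∀ r : ℝ, 0 ≤ r → r < 1 →
      eLpNorm (fun z => Hz g (r * z)) (ENNReal.ofReal p) mC ≤
        A * eLpNorm g (ENNReal.ofReal p) mC := by
  rcases le_or_gt p 2 with h | h
  · exact eLpNorm_Hz_le_two hp1 h
  · exact eLpNorm_Hz_two_le h

/-! ### Boundary values of the Herglotz integral -/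

/-- On the circle `conj (hk w z) = (1 + w̄ z) / (1 - w̄ z)`, which is holomorphic in `z` on a
neighbourhood of the closed disc, so the mean value property applies. -/
lemma integral_conj_hk_mul {f : ℂ → ℂ} (hm : Measurable f) (hf : Differentiable ℂ f) {w : ℂ}
    (hw : ‖w‖ < 1) : ∫ z, (starRingEnd ℂ) (hk w z) * f z ∂mC = f 0 := by
  set u : ℂ := (starRingEnd ℂ) w with hu
  have hun : ‖u‖ < 1 := by rw [hu, RCLike.norm_conj]; exact hw
  have h1 : ∫ z, (starRingEnd ℂ) (hk w z) * f z ∂mC = ∫ z, (1 + u * z) / (1 - u * z) * f z ∂mC := by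
    refine integral_congr_ae ?_
    filter_upwards [ae_norm_eq_one] with z hz
    have hz0 : z ≠ 0 := by rintro rfl; simp at hz
    have e2 : (starRingEnd ℂ) z = z⁻¹ := (Complex.inv_eq_conj hz).symm
    simp only [hk, map_div₀, map_add, map_sub, e2]
    have h1 : z⁻¹ + u = (1 + u * z) * z⁻¹ := by field_simp
    have h2 : z⁻¹ - u = (1 - u * z) * z⁻¹ := by field_simp
    rw [← hu, h1, h2, mul_div_mul_right _ _ (by simp [hz0])]
  rw [h1, integral_of_analytic (f := fun z => (1 + u * z) / (1 - u * z) * f z)]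
  · simp
  · exact (Measurable.div (by fun_prop) (by fun_prop)).mul hm
  · have : DifferentiableOn ℂ (fun z => (1 + u * z) / (1 - u * z) * f z)
        (closure (Metric.ball 0 1)) := by
      rw [closure_ball _ one_ne_zero]
      intro z hz
      simp only [mem_closedBall_zero_iff] at hz
      have : 1 - u * z ≠ 0 := by
        intro h
        have h3 : ‖u * z‖ = 1 := by rw [← sub_eq_zero.1 h]; simp
        rw [norm_mul] at h3
        nlinarith [norm_nonneg u, norm_nonneg z]
      refine DifferentiableAt.differentiableWithinAt ?_
      refine DifferentiableAt.mul (DifferentiableAt.div (by fun_prop) (by fun_prop) this) (hf z)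
    exact this.diffContOnCl

/-- Monomials are computed through `hk = 2 pk - conj hk`. -/
lemma Hz_pow {n : ℕ} {w : ℂ} (hw : ‖w‖ < 1) : Hz (fun z => z ^ n) w = 2 * w ^ n - 0 ^ n := by
  have hi : Integrable (fun z : ℂ => z ^ n) mC := by
    refine Integrable.of_bound (by fun_prop) 1 ?_
    filter_upwards [ae_norm_eq_one] with z hz
    rw [norm_pow, hz, one_pow]
  have i2 : Integrable (fun z : ℂ => (starRingEnd ℂ) (hk w z) * z ^ n) mC := by
    refine hi.bdd_mul (c := 2 / (1 - ‖w‖))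
      (Complex.continuous_conj.measurable.comp measurable_hk').aestronglyMeasurable ?_
    filter_upwards [ae_norm_eq_one] with z hz
    rw [RCLike.norm_conj]; exact norm_hk_le hw le_rfl hz
  have h1 := integral_pk_mul (f := fun z => z ^ n) (by fun_prop) (by
    exact (differentiable_pow (n := n)).diffContOnCl) hw
  have h2 := integral_conj_hk_mul (f := fun z => z ^ n) (by fun_prop) (by fun_prop) hw
  have e : ∀ z, hk w z * z ^ n = 2 * ((pk w z : ℂ) * z ^ n) - (starRingEnd ℂ) (hk w z) * z ^ n :=
    fun z => by
      have := Complex.add_conj (hk w z)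
      rw [pk]
      push_cast at this
      linear_combination z ^ n * this
  rw [Hz]
  simp_rw [e]
  rw [integral_sub _ i2, integral_const_mul, h1, h2]
  refine Integrable.const_mul ?_ _
  refine hi.bdd_mul (c := 2 / (1 - ‖w‖)) (by
    exact (Complex.measurable_ofReal.comp measurable_pk').aestronglyMeasurable) ?_
  filter_upwards [ae_norm_eq_one] with z hz
  rw [Complex.norm_real, Real.norm_of_nonneg (pk_nonneg hw hz)]
  exact pk_le hw hz

lemma Hz_conj_pow {n : ℕ} {w : ℂ} (hw : ‖w‖ < 1) :
    Hz (fun z => (starRingEnd ℂ) z ^ n) w = 0 ^ n := by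
  have h2 := integral_conj_hk_mul (f := fun z => z ^ n) (by fun_prop) (by fun_prop) hw
  have := congrArg (starRingEnd ℂ) h2
  rw [← integral_conj] at this
  simp only [map_mul, Complex.conj_conj, map_pow, map_zero] at this
  exact this

/-- Data whose Herglotz integral extends continuously to the plane. -/
def Nice (g : ℂ → ℂ) : Prop :=
  Measurable g ∧ Integrable g mC ∧ ∃ P : ℂ → ℂ, Continuous P ∧ ∀ w, ‖w‖ < 1 → Hz g w = P w

/-- Nice data are uniformly dense among continuous functions on the circle: trigonometric
polynomials are nice, and Fourier monomials span a dense subspace. -/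
lemma nice_dense {φ : ℂ → ℂ} (hφ : Continuous φ) {ε : ℝ} (hε : 0 < ε) :
    ∃ g, Nice g ∧ ∀ z, ‖z‖ = 1 → ‖φ z - g z‖ ≤ ε := by
  have hce : Continuous fun x : UnitAddCircle => φ (AddCircle.toCircle x) :=
    hφ.comp (continuous_subtype_val.comp AddCircle.continuous_toCircle)
  let ψ : C(UnitAddCircle, ℂ) := ⟨fun x => φ (AddCircle.toCircle x), hce⟩
  have hmem : ψ ∈ (Submodule.span ℂ (range <| @fourier 1)).topologicalClosure := by
    rw [span_fourier_closure_eq_top]; trivial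
  obtain ⟨χ, hχ, hd⟩ := Metric.mem_closure_iff.1 hmem ε hε
  have key : ∀ χ ∈ Submodule.span ℂ (range <| @fourier 1),
      ∃ g, Nice g ∧ ∀ x : UnitAddCircle, g (AddCircle.toCircle x) = χ x := by
    intro χ hχ
    induction hχ using Submodule.span_induction with
    | mem χ h =>
      obtain ⟨n, rfl⟩ := h
      obtain ⟨m, rfl | rfl⟩ := n.eq_nat_or_neg
      · refine ⟨fun z => z ^ m, ⟨by fun_prop, ?_, fun w => 2 * w ^ m - 0 ^ m, by fun_prop,
          fun w hw => Hz_pow hw⟩, fun x => ?_⟩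
        · refine Integrable.of_bound (by fun_prop) 1 ?_
          filter_upwards [ae_norm_eq_one] with z hz
          rw [norm_pow, hz, one_pow]
        · simp [fourier_apply, AddCircle.toCircle_nsmul]
      · have hm : Measurable fun z : ℂ => (starRingEnd ℂ) z ^ m :=
          Complex.continuous_conj.measurable.pow_const m
        refine ⟨fun z => (starRingEnd ℂ) z ^ m, ⟨hm, ?_, fun w => 0 ^ m, by fun_prop,
          fun w hw => Hz_conj_pow hw⟩, fun x => ?_⟩
        · refine Integrable.of_bound hm.aestronglyMeasurable 1 ?_
          filter_upwards [ae_norm_eq_one] with z hz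
          rw [norm_pow, RCLike.norm_conj, hz, one_pow]
        · rw [fourier_neg]
          simp [fourier_apply, AddCircle.toCircle_nsmul]
    | zero => exact ⟨fun _ => 0, ⟨measurable_const, integrable_zero _ _ _, fun _ => 0,
        continuous_const, fun w _ => by simp [Hz]⟩, fun x => rfl⟩
    | add x y _ _ hx hy =>
      obtain ⟨g₁, ⟨m1, i1, P1, c1, e1⟩, h1⟩ := hx
      obtain ⟨g₂, ⟨m2, i2, P2, c2, e2⟩, h2⟩ := hy
      refine ⟨fun z => g₁ z + g₂ z, ⟨m1.add m2, i1.add i2, fun w => P1 w + P2 w, by fun_prop,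
        fun w hw => ?_⟩, fun x => ?_⟩
      · rw [Hz_add i1 i2 hw, e1 w hw, e2 w hw]
      · simp [h1, h2]
    | smul a x _ hx =>
      obtain ⟨g₁, ⟨m1, i1, P1, c1, e1⟩, h1⟩ := hx
      refine ⟨fun z => a * g₁ z, ⟨m1.const_mul a, i1.const_mul a, fun w => a * P1 w, by fun_prop,
        fun w hw => ?_⟩, fun x => ?_⟩
      · rw [Hz_const_mul, e1 w hw]
      · simp [h1]
  obtain ⟨g, hg, hgx⟩ := key χ hχ
  refine ⟨g, hg, fun z hz => ?_⟩
  have hd' := (ContinuousMap.dist_le hε.le).1 hd.le ((z.arg / (2 * Real.pi) : ℝ) : UnitAddCircle)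
  have hz' : (AddCircle.toCircle ((z.arg / (2 * Real.pi) : ℝ) : UnitAddCircle) : ℂ) = z := by
    rw [AddCircle.toCircle_apply_mk, Circle.coe_exp]
    have : 2 * Real.pi / 1 * (z.arg / (2 * Real.pi)) = z.arg := by
      field_simp
    rw [this]
    have := Complex.norm_mul_exp_arg_mul_I z
    rwa [hz, Complex.ofReal_one, one_mul] at this
  rw [← hgx, dist_eq_norm] at hd'
  change ‖φ _ - _‖ ≤ ε at hd'
  rwa [hz'] at hd'

/-- Dilates of `Hz g` are Cauchy in `L^p`: this is clear for nice data, and passes to the closure by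
the uniform bound `eLpNorm_Hz`. -/
lemma Hz_cauchy {p : ℝ} (hp1 : 1 < p) {g : ℂ → ℂ} (hgm : Measurable g)
    (hg : MemLp g (ENNReal.ofReal p) mC) {s : ℕ → ℝ} (hs0 : ∀ n, 0 ≤ s n) (hs1 : ∀ n, s n < 1)
    (hs : Tendsto s atTop (nhds 1)) {ε : ENNReal} (hε : 0 < ε) :
    ∃ N, ∀ m, N ≤ m → ∀ n, N ≤ n →
      eLpNorm ((fun z => Hz g (s m * z)) - fun z => Hz g (s n * z)) (ENNReal.ofReal p) mC < ε := by
  obtain ⟨A, hA⟩ := eLpNorm_Hz hp1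
  have hp1' : (1 : ENNReal) ≤ ENNReal.ofReal p := by simpa using hp1.le
  have hgi : Integrable g mC := memLp_integrable hp1.le hg
  -- reduce to a finite tolerance
  obtain ⟨δ, hδ0, hδ⟩ : ∃ δ : ℝ, 0 < δ ∧
      2 * (A * ENNReal.ofReal (2 * δ)) + ENNReal.ofReal δ < ε := by
    have : Tendsto (fun δ : ℝ => 2 * (A * ENNReal.ofReal (2 * δ)) + ENNReal.ofReal δ)
        (nhdsWithin 0 (Ioi 0)) (nhds (2 * (A * ENNReal.ofReal (2 * 0)) + ENNReal.ofReal 0)) := by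
      refine Tendsto.mono_left ?_ nhdsWithin_le_nhds
      refine Tendsto.add (ENNReal.Tendsto.const_mul (ENNReal.Tendsto.const_mul
        (ENNReal.tendsto_ofReal (tendsto_id.const_mul 2)) (Or.inr ENNReal.coe_ne_top)) (Or.inr (by simp)))
        (ENNReal.tendsto_ofReal tendsto_id)
    simp only [mul_zero, ENNReal.ofReal_zero, add_zero] at this
    obtain ⟨δ, h1, h2⟩ := ((this.eventually (gt_mem_nhds hε)).and self_mem_nhdsWithin).exists
    exact ⟨δ, h2, h1⟩
  obtain ⟨φ, hφ, hφL⟩ := hg.exists_boundedContinuous_eLpNorm_sub_le (ε := ENNReal.ofReal δ)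
    ENNReal.ofReal_ne_top (by simpa using hδ0)
  obtain ⟨t, ⟨htm, hti, P, hPc, hP⟩, htφ⟩ := nice_dense φ.continuous hδ0
  have hd : eLpNorm (fun z => g z - t z) (ENNReal.ofReal p) mC ≤ ENNReal.ofReal (2 * δ) := by
    have e : (fun z => g z - t z) = (g - φ) + fun z => φ z - t z := by ext z; simp
    rw [e]
    refine (eLpNorm_add_le (hgm.aestronglyMeasurable.sub φ.continuous.aestronglyMeasurable)
      (φ.continuous.aestronglyMeasurable.sub htm.aestronglyMeasurable) hp1').trans ?_
    rw [two_mul, ENNReal.ofReal_add hδ0.le hδ0.le]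
    refine add_le_add hφ ?_
    refine (eLpNorm_le_of_ae_bound (C := δ) ?_).trans (by simp)
    filter_upwards [ae_norm_eq_one] with z hz using htφ z hz
  have hdi : Integrable (fun z => g z - t z) mC := hgi.sub hti
  have hdm : Measurable fun z => g z - t z := hgm.sub htm
  have huc : UniformContinuousOn P (Metric.closedBall 0 1) :=
    (isCompact_closedBall 0 1).uniformContinuousOn_of_continuous hPc.continuousOn
  obtain ⟨η, hη0, hη⟩ := Metric.uniformContinuousOn_iff.1 huc δ hδ0
  obtain ⟨N, hN⟩ := Metric.cauchySeq_iff.1 hs.cauchySeq η hη0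
  refine ⟨N, fun m hm n hn => lt_of_le_of_lt ?_ hδ⟩
  set D : ℕ → ℂ → ℂ := fun k z => Hz (fun z => g z - t z) (s k * z) with hD
  have hDm : ∀ k, AEStronglyMeasurable (D k) mC := fun k =>
    (measurable_Hz_dilate hdm (s k)).aestronglyMeasurable
  have hDb : ∀ k, eLpNorm (D k) (ENNReal.ofReal p) mC ≤ A * ENNReal.ofReal (2 * δ) := fun k =>
    (hA _ hdm hdi _ (hs0 k) (hs1 k)).trans (by gcongr)
  have e : ((fun z => Hz g (s m * z)) - fun z => Hz g (s n * z)) =ᵐ[mC]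
      (D m - D n) + fun z => P (s m * z) - P (s n * z) := by
    filter_upwards [ae_norm_eq_one] with z hz
    have h1 := norm_mul_lt (hs0 m) (hs1 m) hz
    have h2 := norm_mul_lt (hs0 n) (hs1 n) hz
    simp only [hD, Pi.sub_apply, Pi.add_apply]
    rw [Hz_sub hgi hti h1, Hz_sub hgi hti h2, hP _ h1, hP _ h2]
    ring
  rw [eLpNorm_congr_ae e]
  refine (eLpNorm_add_le ((hDm m).sub (hDm n)) (Continuous.aestronglyMeasurable (by fun_prop))
    hp1').trans (add_le_add ?_ ?_)
  · refine (eLpNorm_sub_le (hDm m) (hDm n) hp1').trans ?_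
    rw [two_mul]; exact add_le_add (hDb m) (hDb n)
  · refine (eLpNorm_le_of_ae_bound (C := δ) ?_).trans (by simp)
    filter_upwards [ae_norm_eq_one] with z hz
    have h1 := norm_mul_lt (hs0 m) (hs1 m) hz
    have h2 := norm_mul_lt (hs0 n) (hs1 n) hz
    rw [← dist_eq_norm]
    refine (hη _ (by simpa using h1.le) _ (by simpa using h2.le) ?_).le
    rw [dist_eq_norm, ← sub_mul, norm_mul, hz, mul_one, ← Complex.ofReal_sub, Complex.norm_real]
    have := hN m hm n hn
    rwa [Real.dist_eq] at this

/-- The Herglotz integral of `g ∈ L^p` is the Poisson integral of some `F ∈ L^p`. The dilates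
`z ↦ Hz g (r z)` are Cauchy in `L^p` as `r → 1`, and `F` is their limit. -/
lemma exists_boundary {p : ℝ} (hp1 : 1 < p) :
    ∃ A : NNReal, ∀ g : ℂ → ℂ, Measurable g → MemLp g (ENNReal.ofReal p) mC →
      ∃ F : ℂ → ℂ, Measurable F ∧ Integrable F mC ∧
        eLpNorm F (ENNReal.ofReal p) mC ≤ A * eLpNorm g (ENNReal.ofReal p) mC ∧
        ∀ w, ‖w‖ < 1 → Hz g w = ∫ z, (pk w z : ℂ) * F z ∂mC := by
  obtain ⟨A, hA⟩ := eLpNorm_Hz hp1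
  have hp1' : (1 : ENNReal) ≤ ENNReal.ofReal p := by simpa using hp1.le
  have : Fact ((1 : ENNReal) ≤ ENNReal.ofReal p) := ⟨hp1'⟩
  refine ⟨A, fun g hgm hg => ?_⟩
  have hgi : Integrable g mC := memLp_integrable hp1.le hg
  set s : ℕ → ℝ := fun n => 1 - 1 / ((n : ℝ) + 1) with hsd
  have hs0 : ∀ n, 0 ≤ s n := fun n => by
    rw [hsd]; simp only; rw [sub_nonneg, div_le_one (by positivity)]
    linarith [(Nat.cast_nonneg n : (0:ℝ) ≤ n)]
  have hs1 : ∀ n, s n < 1 := fun n => by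
    have : 0 < 1 / ((n : ℝ) + 1) := by positivity
    rw [hsd]; simp only; linarith
  have hs : Tendsto s atTop (nhds 1) := by
    have := (tendsto_one_div_add_atTop_nhds_zero_nat (𝕜 := ℝ)).const_sub 1
    simpa [hsd] using this
  set T : ℕ → ℂ → ℂ := fun n z => Hz g (s n * z) with hT
  have hTm : ∀ n, Measurable (T n) := fun n => measurable_Hz_dilate hgm _
  have hTL : ∀ n, MemLp (T n) (ENNReal.ofReal p) mC := fun n =>
    ⟨(hTm n).aestronglyMeasurable, (hA g hgm hgi _ (hs0 n) (hs1 n)).trans_lt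
      (ENNReal.mul_lt_top ENNReal.coe_lt_top hg.eLpNorm_lt_top)⟩
  have hc : CauchySeq fun n => (hTL n).toLp (T n) := by
    rw [EMetric.cauchySeq_iff]
    intro ε hε
    obtain ⟨N, hN⟩ := Hz_cauchy hp1 hgm hg hs0 hs1 hs hε
    exact ⟨N, fun m hm n hn => by rw [Lp.edist_toLp_toLp]; exact hN m hm n hn⟩
  obtain ⟨L, hL⟩ := cauchySeq_tendsto_of_complete hc
  have hLm : MemLp (L : ℂ → ℂ) (ENNReal.ofReal p) mC := Lp.memLp L
  have hLi : Integrable (L : ℂ → ℂ) mC := memLp_integrable hp1.le hLm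
  have hcv : Tendsto (fun n => eLpNorm (T n - (L : ℂ → ℂ)) (ENNReal.ofReal p) mC) atTop
      (nhds 0) := by
    rw [← Lp.tendsto_Lp_iff_tendsto_eLpNorm'' T hTL L hLm, Lp.toLp_coeFn]
    exact hL
  have hLmeas : Measurable (L : ℂ → ℂ) := (Lp.stronglyMeasurable L).measurable
  generalize (L : ℂ → ℂ) = F at hLm hLi hcv hLmeas
  refine ⟨F, hLmeas, hLi, ?_, fun w hw => ?_⟩
  · have h1 : Tendsto (fun n => eLpNorm (T n - F) (ENNReal.ofReal p) mC +
        A * eLpNorm g (ENNReal.ofReal p) mC) atTop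
        (nhds (0 + A * eLpNorm g (ENNReal.ofReal p) mC)) := hcv.add_const _
    rw [zero_add] at h1
    refine ge_of_tendsto' h1 fun n => ?_
    have e : F = T n - (T n - F) := by ext z; simp
    nth_rewrite 1 [e]
    refine (eLpNorm_sub_le (hTL n).1 ((hTL n).1.sub hLm.1) hp1').trans ?_
    rw [add_comm]
    gcongr
    exact hA g hgm hgi _ (hs0 n) (hs1 n)
  · have h1 : ∀ n, ∫ z, (pk w z : ℂ) * T n z ∂mC = Hz g (s n * w) := fun n =>
      integral_pk_mul (hTm n) (diffContOnCl_dilate (Hz_analytic hgm hgi) (hs0 n) (hs1 n)) hw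
    have hpkm : AEStronglyMeasurable (fun z => (pk w z : ℂ)) mC :=
      (Complex.measurable_ofReal.comp measurable_pk').aestronglyMeasurable
    have hpkb : ∀ᵐ z ∂mC, ‖(pk w z : ℂ)‖ ≤ 2 / (1 - ‖w‖) := by
      filter_upwards [ae_norm_eq_one] with z hz
      rw [Complex.norm_real, Real.norm_of_nonneg (pk_nonneg hw hz)]
      exact pk_le hw hz
    have h2 : Tendsto (fun n => ∫ z, (pk w z : ℂ) * T n z ∂mC) atTop
        (nhds (∫ z, (pk w z : ℂ) * F z ∂mC)) := by
      refine tendsto_integral_of_L1' _ (hLi.bdd_mul hpkm hpkb).aestronglyMeasurable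
        (Eventually.of_forall fun n => (memLp_integrable hp1.le (hTL n)).bdd_mul hpkm hpkb) ?_
      have h3 : Tendsto (fun n => ENNReal.ofReal (2 / (1 - ‖w‖)) *
          eLpNorm (T n - F) (ENNReal.ofReal p) mC) atTop (nhds 0) := by
        have := ENNReal.Tendsto.const_mul (a := ENNReal.ofReal (2 / (1 - ‖w‖))) hcv
          (Or.inr ENNReal.ofReal_ne_top)
        simpa using this
      refine tendsto_of_tendsto_of_tendsto_of_le_of_le tendsto_const_nhds h3
        (fun _ => zero_le) fun n => ?_
      have hmn : AEStronglyMeasurable (T n - F) mC := (hTL n).1.sub hLm.1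
      refine (eLpNorm_le_mul_eLpNorm_of_ae_le_mul (g := T n - F) (c := 2 / (1 - ‖w‖)) ?_ 1).trans ?_
      · filter_upwards [hpkb] with z hz
        rw [Pi.sub_apply, ← mul_sub, norm_mul, Pi.sub_apply]
        gcongr
      · gcongr
        exact eLpNorm_le_eLpNorm_of_exponent_le hp1' hmn
    simp_rw [h1] at h2
    have h4 : Tendsto (fun n => Hz g (s n * w)) atTop (nhds (Hz g w)) := by
      have hd : ContinuousAt (Hz g) w := ((Hz_analytic hgm hgi).differentiableAt
        (Metric.isOpen_ball.mem_nhds (by simpa using hw))).continuousAt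
      refine hd.tendsto.comp ?_
      have : Tendsto (fun n => ((s n : ℝ) : ℂ) * w) atTop (nhds (((1 : ℝ) : ℂ) * w)) :=
        ((Complex.continuous_ofReal.tendsto 1).comp hs).mul_const w
      simpa using this
    exact tendsto_nhds_unique h4 h2

/-! ### Lebesgue points and kernels of Poisson type -/

/-- `x` is a Lebesgue point of `g`: the integral of `|g - g x|` over a ball of radius `δ` around `x`
is `o(δ)`. -/
def LebPt (g : ℝ → ℂ) (x : ℝ) : Prop :=
  ∀ η : ℝ, 0 < η → ∃ δ₀ : ℝ, 0 < δ₀ ∧ ∀ δ, 0 < δ → δ ≤ δ₀ →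
    ∫⁻ y in Metric.closedBall x δ, ‖g y - g x‖ₑ ≤ ENNReal.ofReal (η * δ)

/-- Lebesgue's differentiation theorem, from the Besicovitch covering theorem. -/
lemma ae_lebPt {g : ℝ → ℂ} (hg : Integrable g) : ∀ᵐ x, LebPt g x := by
  filter_upwards [VitaliFamily.ae_tendsto_lintegral_enorm_sub_div (Besicovitch.vitaliFamily volume)
    hg.locallyIntegrable] with x hx η hη
  have h1 := hx.comp (Besicovitch.tendsto_filterAt volume x)
  have h2 := h1.eventually (gt_mem_nhds (show (0 : ENNReal) < ENNReal.ofReal (η / 2) by simpa using hη))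
  obtain ⟨u, hu, hu2⟩ := mem_nhdsGT_iff_exists_Ioc_subset.1 h2
  refine ⟨u, hu, fun δ h0 hδ => ?_⟩
  have h3 : (∫⁻ y in Metric.closedBall x δ, ‖g y - g x‖ₑ) / volume (Metric.closedBall x δ) <
    ENNReal.ofReal (η / 2) := hu2 ⟨h0, hδ⟩
  rw [Real.volume_closedBall, ENNReal.div_lt_iff (Or.inl (by simpa using h0))
    (Or.inl ENNReal.ofReal_ne_top),
    ← ENNReal.ofReal_mul (by positivity)] at h3
  refine h3.le.trans (le_of_eq ?_)
  congr 1; ring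

/-- The kernel `ε / (ε ^ 2 + d ^ 2)` is dominated by a sum of multiples of indicators of dyadic balls
`d ≤ 2 ^ k ε`, cut at `δ₀`, plus a constant for the part beyond `δ₀`. -/
lemma dyadic_kernel {ε δ₀ d : ℝ} (hε : 0 < ε) (hδ : 0 < δ₀) (hd : 0 ≤ d) :
    ENNReal.ofReal (ε / (ε ^ 2 + d ^ 2)) ≤
      (∑' k : ℕ, if d ≤ min (2 ^ k * ε) δ₀ then ENNReal.ofReal (4 * (1 / 4) ^ k / ε) else 0) +
        ENNReal.ofReal (ε / δ₀ ^ 2) := by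
  rcases lt_or_ge δ₀ d with h | h
  · refine le_add_left (ENNReal.ofReal_le_ofReal ?_)
    gcongr
    nlinarith [sq_nonneg ε, h]
  · refine le_add_right ?_
    have hex : ∃ k : ℕ, d ≤ 2 ^ k * ε := by
      obtain ⟨k, hk⟩ := pow_unbounded_of_one_lt (d / ε) (by norm_num : (1:ℝ) < 2)
      exact ⟨k, by rw [div_lt_iff₀ hε] at hk; exact hk.le⟩
    classical
    refine le_trans ?_ (ENNReal.le_tsum (Nat.find hex))
    have hk := Nat.find_spec hex
    rw [if_pos (le_min hk h)]
    refine ENNReal.ofReal_le_ofReal ?_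
    rcases Nat.eq_zero_or_pos (Nat.find hex) with h0 | h0
    · rw [h0]
      rw [div_le_div_iff₀ (by positivity) hε]
      nlinarith [sq_nonneg d, sq_nonneg ε]
    · have h1 := Nat.find_min hex (m := Nat.find hex - 1) (by omega)
      push Not at h1
      obtain ⟨m, hm⟩ : ∃ m, Nat.find hex = m + 1 := ⟨Nat.find hex - 1, by omega⟩
      rw [hm] at h1 ⊢
      simp only [Nat.add_sub_cancel] at h1
      have h2 : (2 ^ m * ε) ^ 2 ≤ d ^ 2 := by gcongr
      have h3 : ((2:ℝ) ^ m * ε) ^ 2 * (1 / 4) ^ m = ε ^ 2 := by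
        rw [mul_pow, ← pow_mul, mul_comm m 2, pow_mul, mul_right_comm, ← mul_pow]; norm_num
      have h4 : 0 < ((1:ℝ) / 4) ^ m := by positivity
      rw [div_le_div_iff₀ (by positivity) hε, pow_succ]
      nlinarith [mul_le_mul_of_nonneg_right h2 h4.le, mul_pos h4 (pow_pos hε 2)]

/-- Summing the ball estimates over the dyadic decomposition of `dyadic_kernel`. -/
lemma lintegral_kernel_le {u : ℝ → ENNReal} (hu : AEMeasurable u) {x η δ₀ : ℝ} (hη : 0 ≤ η) (hδ : 0 < δ₀)
    (h : ∀ δ, 0 < δ → δ ≤ δ₀ → ∫⁻ y in Metric.closedBall x δ, u y ≤ ENNReal.ofReal (η * δ))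
    {ε : ℝ} (hε : 0 < ε) :
    ∫⁻ y, ENNReal.ofReal (ε / (ε ^ 2 + |y - x| ^ 2)) * u y ≤
      ENNReal.ofReal (8 * η) + ENNReal.ofReal (ε / δ₀ ^ 2) * ∫⁻ y, u y := by
  have hpos : ∀ k : ℕ, 0 < min (2 ^ k * ε) δ₀ := fun k => lt_min (by positivity) hδ
  calc ∫⁻ y, ENNReal.ofReal (ε / (ε ^ 2 + |y - x| ^ 2)) * u y
      ≤ ∫⁻ y, ((∑' k : ℕ, (Metric.closedBall x (min (2 ^ k * ε) δ₀)).indicator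
          (fun y => ENNReal.ofReal (4 * (1 / 4) ^ k / ε) * u y) y) +
          ENNReal.ofReal (ε / δ₀ ^ 2) * u y) := by
        refine lintegral_mono fun y => ?_
        refine (mul_le_mul_left (dyadic_kernel hε hδ (abs_nonneg (y - x))) _).trans (le_of_eq ?_)
        rw [add_mul, ← ENNReal.tsum_mul_right]
        congr 2; ext k
        simp only [indicator, Metric.mem_closedBall, Real.dist_eq]
        split_ifs <;> simp
    _ = (∑' k : ℕ, ∫⁻ y, (Metric.closedBall x (min (2 ^ k * ε) δ₀)).indicator
          (fun y => ENNReal.ofReal (4 * (1 / 4) ^ k / ε) * u y) y) +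
          ENNReal.ofReal (ε / δ₀ ^ 2) * ∫⁻ y, u y := by
        rw [lintegral_add_right' _ (hu.const_mul _), lintegral_const_mul'' _ hu, lintegral_tsum]
        intro k
        exact (hu.const_mul _).indicator Metric.isClosed_closedBall.measurableSet
    _ ≤ (∑' k : ℕ, ENNReal.ofReal (4 * η * (1 / 2) ^ k)) +
          ENNReal.ofReal (ε / δ₀ ^ 2) * ∫⁻ y, u y := by
        gcongr with k
        rw [lintegral_indicator Metric.isClosed_closedBall.measurableSet,
          lintegral_const_mul'' _ hu.restrict]
        refine (mul_le_mul_right (h _ (hpos k) (min_le_right _ _)) _).trans ?_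
        rw [← ENNReal.ofReal_mul (by positivity)]
        refine ENNReal.ofReal_le_ofReal ?_
        have : 4 * (1 / 4 : ℝ) ^ k / ε * (η * min (2 ^ k * ε) δ₀) ≤
          4 * (1 / 4 : ℝ) ^ k / ε * (η * (2 ^ k * ε)) := by gcongr; exact min_le_left _ _
        refine this.trans (le_of_eq ?_)
        have h2 : ((1:ℝ) / 4) ^ k * 2 ^ k = (1 / 2) ^ k := by rw [← mul_pow]; norm_num
        rw [← h2]; field_simp
    _ = _ := by
        rw [← ENNReal.ofReal_tsum_of_nonneg (fun k => by positivity)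
          ((summable_geometric_of_lt_one (by norm_num) (by norm_num)).mul_left _),
          tsum_mul_left, tsum_geometric_of_lt_one (by norm_num) (by norm_num)]
        congr 2; norm_num; ring

/-- A kernel dominated by `ε / (ε ^ 2 + |y - x| ^ 2)`, integrated against `g - g x`, tends to zero
at each Lebesgue point `x`. No normalization of the kernel is required. -/
lemma tendsto_kernel {I : Set ℝ} (hI : MeasurableSet I) (hIf : volume I ≠ ⊤) {g : ℝ → ℂ}
    (hg : IntegrableOn g I) {x : ℝ} (hx : x ∈ I) (hL : LebPt (I.indicator g) x)
    {D : ℝ → ℝ → ℂ} {C : ℝ} (hC : 0 ≤ C)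
    (hD : ∀ᶠ ε in nhdsWithin 0 (Ioi 0), ∀ y ∈ I, ‖D ε y‖ ≤ C * (ε / (ε ^ 2 + |y - x| ^ 2))) :
    Tendsto (fun ε => ∫ y in I, D ε y * (g y - g x)) (nhdsWithin 0 (Ioi 0)) (nhds 0) := by
  set u : ℝ → ENNReal := I.indicator fun y => ‖g y - g x‖ₑ with hu
  have hdi : IntegrableOn (fun y => g y - g x) I := hg.sub (integrableOn_const hIf)
  have hum : AEMeasurable u := by
    rw [hu, aemeasurable_indicator_iff hI]; exact hdi.1.enorm
  have huI : ∫⁻ y, u y ≠ ⊤ := by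
    rw [hu, lintegral_indicator hI]; exact hdi.2.ne
  have hule : ∀ y, u y ≤ ‖I.indicator g y - I.indicator g x‖ₑ := fun y => by
    rw [hu]
    by_cases hy : y ∈ I
    · simp [hy, hx]
    · simp [hy]
  rw [tendsto_zero_iff_enorm_tendsto_zero, ENNReal.tendsto_nhds_zero]
  intro κ hκ
  -- choose the oscillation tolerance and the range of scales for which the bound is at most `κ`
  obtain ⟨η, hη0, hη⟩ : ∃ η : ℝ, 0 < η ∧ ENNReal.ofReal C * ENNReal.ofReal (8 * η) < κ := by
    have : Tendsto (fun η : ℝ => ENNReal.ofReal C * ENNReal.ofReal (8 * η))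
        (nhdsWithin 0 (Ioi 0)) (nhds (ENNReal.ofReal C * ENNReal.ofReal (8 * 0))) := by
      refine Tendsto.mono_left ?_ nhdsWithin_le_nhds
      exact ENNReal.Tendsto.const_mul (ENNReal.tendsto_ofReal (tendsto_id.const_mul 8))
        (Or.inr ENNReal.ofReal_ne_top)
    simp only [mul_zero, ENNReal.ofReal_zero] at this
    obtain ⟨η, h1, h2⟩ := ((this.eventually (gt_mem_nhds hκ)).and self_mem_nhdsWithin).exists
    exact ⟨η, h2, h1⟩
  obtain ⟨δ₀, hδ0, hδ⟩ := hL η hη0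
  have hlim : Tendsto (fun ε : ℝ => ENNReal.ofReal C * (ENNReal.ofReal (8 * η) +
      ENNReal.ofReal (ε / δ₀ ^ 2) * ∫⁻ y, u y)) (nhdsWithin 0 (Ioi 0))
      (nhds (ENNReal.ofReal C * (ENNReal.ofReal (8 * η) + ENNReal.ofReal (0 / δ₀ ^ 2) * ∫⁻ y, u y))) := by
    refine Tendsto.mono_left ?_ nhdsWithin_le_nhds
    refine ENNReal.Tendsto.const_mul ?_ (Or.inr ENNReal.ofReal_ne_top)
    refine tendsto_const_nhds.add (ENNReal.Tendsto.mul_const ?_ (Or.inr huI))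
    exact ENNReal.tendsto_ofReal (tendsto_id.div_const _)
  simp only [zero_div, ENNReal.ofReal_zero, zero_mul, add_zero] at hlim
  filter_upwards [hlim.eventually (gt_mem_nhds hη), self_mem_nhdsWithin, hD] with ε h1 h2 h3
  refine le_trans ?_ h1.le
  have hk := lintegral_kernel_le hum hη0.le hδ0 (fun δ h0 hle =>
    (lintegral_mono fun y => hule y).trans (hδ δ h0 hle)) (h2 : 0 < ε)
  refine (enorm_integral_le_lintegral_enorm _).trans (le_trans ?_ (mul_le_mul_right hk _))
  rw [← lintegral_const_mul' _ _ ENNReal.ofReal_ne_top, ← lintegral_indicator hI]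
  refine lintegral_mono fun y => ?_
  by_cases hy : y ∈ I
  · simp only [indicator_of_mem hy, hu, enorm_mul]
    rw [← mul_assoc, ← ENNReal.ofReal_mul hC]
    gcongr
    rw [← ofReal_norm]
    exact ENNReal.ofReal_le_ofReal (h3 y hy)
  · simp [hy]

/-! ### Radial limits of Poisson integrals -/

lemma norm_circleMap_sub (y x : ℝ) :
    ‖circleMap 0 1 y - circleMap 0 1 x‖ = 2 * |Real.sin ((y - x) / 2)| := by
  have h : circleMap 0 1 y - circleMap 0 1 x =
      circleMap 0 1 x * (Complex.exp (Complex.I * ((y - x : ℝ) : ℂ)) - 1) := by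
    simp only [circleMap, zero_add, Complex.ofReal_one, one_mul, mul_sub, mul_one]
    rw [← Complex.exp_add]
    congr 2; push_cast; ring
  rw [h, norm_mul, Complex.norm_exp_I_mul_ofReal_sub_one]
  simp

/-- Chord length is comparable to the difference of angles, for a base angle away from `0` and `2π`. -/
lemma circle_sub_ge {x : ℝ} (hx : x ∈ Ioo 0 (2 * Real.pi)) :
    ∃ c : ℝ, 0 < c ∧ ∀ y ∈ Icc 0 (2 * Real.pi),
      c * |y - x| ≤ ‖circleMap 0 1 y - circleMap 0 1 x‖ := by
  set m := max (x / 2) (Real.pi - x / 2) with hm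
  have hm0 : 0 < m := lt_max_of_lt_left (by linarith [hx.1])
  have hm1 : m < Real.pi := max_lt (by linarith [hx.2]) (by linarith [hx.1])
  have hs : 0 < Real.sin m := Real.sin_pos_of_pos_of_lt_pi hm0 hm1
  refine ⟨Real.sin m / m, by positivity, fun y hy => ?_⟩
  rw [norm_circleMap_sub]
  set d := |(y - x) / 2| with hd
  have hd0 : 0 ≤ d := abs_nonneg _
  have hd1 : d ≤ m := by
    rw [hd, abs_le]
    have h1 := le_max_left (x / 2) (Real.pi - x / 2)
    have h2 := le_max_right (x / 2) (Real.pi - x / 2)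
    constructor <;> linarith [hy.1, hy.2]
  have e1 : |Real.sin ((y - x) / 2)| = Real.sin d := by
    rw [Real.abs_sin_eq_sin_abs_of_abs_le_pi (hd1.trans hm1.le)]
  have e2 : |y - x| = 2 * d := by rw [hd, abs_div, abs_two]; ring
  have hcc := strictConcaveOn_sin_Icc.concaveOn.2 (left_mem_Icc.2 Real.pi_pos.le)
    ⟨hm0.le, hm1.le⟩ (show 0 ≤ 1 - d / m by rw [sub_nonneg, div_le_one hm0]; exact hd1)
    (show 0 ≤ d / m by positivity) (by ring)
  simp only [smul_eq_mul, mul_zero, Real.sin_zero, zero_add] at hcc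
  rw [div_mul_cancel₀ _ hm0.ne'] at hcc
  rw [e1, e2]
  calc Real.sin m / m * (2 * d) = 2 * (d / m * Real.sin m) := by ring
    _ ≤ _ := by linarith

/-- Radial limits of Poisson integrals. -/
lemma pk_tendsto {F : ℂ → ℂ} (hFm : Measurable F) (hF : Integrable F mC) :
    ∀ᵐ x, x ∈ Ioo 0 (2 * Real.pi) →
      Tendsto (fun ε : ℝ => ∫ z, (pk (((1 - ε : ℝ) : ℂ) * circleMap 0 1 x) z : ℂ) * F z ∂mC)
        (nhdsWithin 0 (Ioi 0)) (nhds (F (circleMap 0 1 x))) := by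
  have h2pi : (0:ℝ) < 2 * Real.pi := by positivity
  set I : Set ℝ := Ioc 0 (2 * Real.pi) with hI
  set g : ℝ → ℂ := fun t => F (circleMap 0 1 t) with hg
  have hgi : IntegrableOn g I := (integrable_mC hFm.stronglyMeasurable).1 hF
  filter_upwards [ae_lebPt (g := I.indicator g)
    ((integrable_indicator_iff measurableSet_Ioc).2 hgi)] with x hL hx
  have hxI : x ∈ I := ⟨hx.1, hx.2.le⟩
  obtain ⟨c, hc0, hc⟩ := circle_sub_ge hx
  set ζ := circleMap 0 1 x with hζ
  have hζ1 : ‖ζ‖ = 1 := by simp [hζ]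
  have hwn : ∀ ε : ℝ, 0 < ε → ε < 1 → ‖((1 - ε : ℝ) : ℂ) * ζ‖ = 1 - ε := fun ε h0 h1 => by
    rw [norm_mul, Complex.norm_real, hζ1, mul_one, Real.norm_of_nonneg (by linarith)]
  have hk := tendsto_kernel (I := I) (g := g) (x := x) measurableSet_Ioc measure_Ioc_lt_top.ne hgi hxI hL
    (D := fun ε y => (pk (((1 - ε : ℝ) : ℂ) * ζ) (circleMap 0 1 y) : ℂ))
    (C := 8 + 16 / c ^ 2) (by positivity) (by
      filter_upwards [Ioo_mem_nhdsGT (show (0:ℝ) < 1 / 2 by norm_num)] with ε hε y hy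
      have hε0 : 0 < ε := hε.1
      have hw := hwn ε hε0 (by linarith [hε.2])
      rw [Complex.norm_real, Real.norm_of_nonneg (pk_nonneg (by rw [hw]; linarith) (by simp)), pk_eq',
        hw]
      have hy1 : ‖circleMap 0 1 y‖ = 1 := by simp
      rw [hy1]
      set q := ‖circleMap 0 1 y - ((1 - ε : ℝ) : ℂ) * ζ‖ with hq
      set d := |y - x| with hd
      have hd0 : 0 ≤ d := abs_nonneg _
      have q1 : ε ≤ q := by
        have := norm_sub_norm_le (circleMap 0 1 y) (((1 - ε : ℝ) : ℂ) * ζ)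
        rw [hw, hy1] at this; linarith
      have q2 : c * d ≤ 2 * q := by
        have h1 := hc y ⟨hy.1.le, hy.2⟩
        have h2 : circleMap 0 1 y - ζ = (circleMap 0 1 y - ((1 - ε : ℝ) : ℂ) * ζ) + (-(ε : ℂ)) * ζ := by
          push_cast; ring
        have h3 : ‖(-(ε : ℂ)) * ζ‖ = ε := by
          rw [norm_mul, hζ1, norm_neg, Complex.norm_real, Real.norm_of_nonneg hε0.le, mul_one]
        have h4 := norm_add_le (circleMap 0 1 y - ((1 - ε : ℝ) : ℂ) * ζ) ((-(ε : ℂ)) * ζ)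
        rw [← h2, h3] at h4
        linarith
      have hq0 : 0 < q := hε0.trans_le q1
      have q3 : ε ^ 2 ≤ q ^ 2 := by gcongr
      have q4 : d ^ 2 ≤ 4 / c ^ 2 * q ^ 2 := by
        have : (c * d) ^ 2 ≤ (2 * q) ^ 2 := by gcongr
        rw [div_mul_eq_mul_div, le_div_iff₀ (by positivity)]
        nlinarith
      rw [← mul_div_assoc, div_le_div_iff₀ (by positivity) (by positivity)]
      have e : (8 + 16 / c ^ 2) * ε * q ^ 2 = 4 * ε * (2 * q ^ 2 + 4 / c ^ 2 * q ^ 2) := by ring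
      rw [e]
      have h5 : 1 ^ 2 - (1 - ε) ^ 2 ≤ 4 * ε := by nlinarith
      refine mul_le_mul h5 ?_ (by positivity) (by positivity)
      nlinarith [sq_nonneg q])
  have hk2 := (hk.const_smul (2 * Real.pi)⁻¹).add_const (F ζ)
  rw [smul_zero, zero_add] at hk2
  refine hk2.congr' ?_
  filter_upwards [Ioo_mem_nhdsGT (show (0:ℝ) < 1 / 2 by norm_num)] with ε hε
  have hw := hwn ε hε.1 (by linarith [hε.2])
  have hw1 : ‖((1 - ε : ℝ) : ℂ) * ζ‖ < 1 := by rw [hw]; linarith [hε.1]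
  set w := ((1 - ε : ℝ) : ℂ) * ζ with hwd
  have hpm : Measurable fun z => (pk w z : ℂ) := Complex.measurable_ofReal.comp measurable_pk'
  have e1 := integral_mC (f := fun z => (pk w z : ℂ) * (F z - F ζ))
    (hpm.mul (hFm.sub measurable_const)).aestronglyMeasurable
  change (2 * Real.pi)⁻¹ • (∫ y in Ioc 0 (2 * Real.pi), (pk w (circleMap 0 1 y) : ℂ) *
    (F (circleMap 0 1 y) - F ζ)) + F ζ = _
  rw [← e1]
  have e2 : ∫ z, (pk w z : ℂ) * (F z - F ζ) ∂mC =
      (∫ z, (pk w z : ℂ) * F z ∂mC) - ∫ z, (pk w z : ℂ) * F ζ ∂mC := by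
    rw [← integral_sub]
    · congr 1; ext z; ring
    · refine hF.bdd_mul (c := 2 / (1 - ‖w‖)) hpm.aestronglyMeasurable ?_
      filter_upwards [ae_norm_eq_one] with z hz
      rw [Complex.norm_real, Real.norm_of_nonneg (pk_nonneg hw1 hz)]
      exact pk_le hw1 hz
    · exact (integrable_toC (integrable_pk hw1)).mul_const _
  rw [e2, integral_mul_const, integral_complex_ofReal, integral_pk hw1]
  simp

/-! ### The substitution carrying the arc to (0, π) -/

/-- The substitution `t ↦ π - 2 arctan (c cos t)` from `(0, π)` onto the arc of angles
`(α, 2π - α)`, where `c = cot (α / 2)`. -/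
noncomputable def Th (c t : ℝ) : ℝ := Real.pi - 2 * Real.arctan (c * Real.cos t)

/-- The inverse of `Th c`, as a map from the arc to `(0, π)`. -/
noncomputable def Ph (c θ : ℝ) : ℝ := Real.arccos (Real.tan ((Real.pi - θ) / 2) / c)

lemma hasDerivAt_Th (c t : ℝ) :
    HasDerivAt (Th c) (2 * c * Real.sin t / (1 + (c * Real.cos t) ^ 2)) t := by
  have h := (((Real.hasDerivAt_cos t).const_mul c).arctan.const_mul 2).const_sub Real.pi
  refine h.congr_deriv ?_
  ring

lemma continuous_Th (c : ℝ) : Continuous (Th c) :=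
  continuous_iff_continuousAt.2 fun t => (hasDerivAt_Th c t).continuousAt

lemma measurable_Ph (c : ℝ) : Measurable (Ph c) := by
  unfold Ph
  have : Measurable Real.tan := by
    have : Real.tan = fun x => Real.sin x / Real.cos x := by ext x; exact Real.tan_eq_sin_div_cos x
    rw [this]; exact Real.measurable_sin.div Real.measurable_cos
  exact Real.continuous_arccos.measurable.comp ((this.comp (by fun_prop)).div_const _)

lemma strictMonoOn_Th {c : ℝ} (hc : 0 < c) : StrictMonoOn (Th c) (Icc 0 Real.pi) := by
  intro x hx y hy hxy
  have h1 := Real.strictAntiOn_cos hx hy hxy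
  have h2 := Real.arctan_strictMono (mul_lt_mul_of_pos_left h1 hc)
  simp only [Th]; linarith

lemma Ph_Th {c : ℝ} (hc : 0 < c) {t : ℝ} (ht : t ∈ Icc 0 Real.pi) : Ph c (Th c t) = t := by
  have : (Real.pi - Th c t) / 2 = Real.arctan (c * Real.cos t) := by rw [Th]; ring
  rw [Ph, this, Real.tan_arctan, mul_div_cancel_left₀ _ hc.ne', Real.arccos_cos ht.1 ht.2]

lemma tan_bound {c θ : ℝ}
    (hθ : θ ∈ Ioo (Real.pi - 2 * Real.arctan c) (Real.pi + 2 * Real.arctan c)) :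
    |Real.tan ((Real.pi - θ) / 2)| < c := by
  have h1 := Real.arctan_lt_pi_div_two c
  have h2 : -(Real.pi / 2) < -Real.arctan c := by linarith
  rw [abs_lt]
  obtain ⟨h3, h4⟩ := hθ
  have e := Real.tan_arctan c
  constructor
  · rw [← e, ← Real.tan_neg]
    exact Real.tan_lt_tan_of_lt_of_lt_pi_div_two h2 (by linarith) (by linarith)
  · have := Real.tan_lt_tan_of_lt_of_lt_pi_div_two (x := (Real.pi - θ) / 2)
      (y := Real.arctan c) (by linarith) h1 (by linarith)
    rwa [e] at this

lemma Ph_mem {c : ℝ} (hc : 0 < c) {θ : ℝ}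
    (hθ : θ ∈ Ioo (Real.pi - 2 * Real.arctan c) (Real.pi + 2 * Real.arctan c)) :
    Ph c θ ∈ Ioo 0 Real.pi := by
  have h := tan_bound hθ
  rw [abs_lt] at h
  constructor
  · rw [Ph, Real.arccos_pos, div_lt_one hc]; exact h.2
  · rw [Ph]
    refine lt_of_le_of_ne (Real.arccos_le_pi _) fun he => ?_
    rw [Real.arccos_eq_pi, div_le_iff₀ hc] at he
    linarith

lemma Th_Ph {c : ℝ} (hc : 0 < c) {θ : ℝ}
    (hθ : θ ∈ Ioo (Real.pi - 2 * Real.arctan c) (Real.pi + 2 * Real.arctan c)) :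
    Th c (Ph c θ) = θ := by
  have h := tan_bound hθ
  rw [abs_lt] at h
  have h1 := Real.arctan_lt_pi_div_two c
  obtain ⟨h3, h4⟩ := hθ
  rw [Th, Ph, Real.cos_arccos, mul_div_cancel₀ _ hc.ne', Real.arctan_tan]
  · ring
  · linarith
  · linarith
  · rw [le_div_iff₀ hc]; linarith
  · rw [div_le_one hc]; exact h.2.le

lemma Th_mem {c : ℝ} (hc : 0 < c) {t : ℝ} (ht : t ∈ Ioo 0 Real.pi) :
    Th c t ∈ Ioo (Real.pi - 2 * Real.arctan c) (Real.pi + 2 * Real.arctan c) := by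
  have h1 := strictMonoOn_Th hc (left_mem_Icc.2 Real.pi_pos.le) (Ioo_subset_Icc_self ht) ht.1
  have h2 := strictMonoOn_Th hc (Ioo_subset_Icc_self ht) (right_mem_Icc.2 Real.pi_pos.le) ht.2
  simp only [Th, Real.cos_zero, Real.cos_pi, mul_one, mul_neg, Real.arctan_neg] at h1 h2 ⊢
  exact ⟨h1, by linarith⟩

lemma image_Th {c : ℝ} (hc : 0 < c) : Th c '' Ioo 0 Real.pi =
    Ioo (Real.pi - 2 * Real.arctan c) (Real.pi + 2 * Real.arctan c) := by
  ext θ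
  constructor
  · rintro ⟨t, ht, rfl⟩; exact Th_mem hc ht
  · intro h; exact ⟨Ph c θ, Ph_mem hc h, Th_Ph hc h⟩

lemma continuousAt_Ph {c : ℝ} {θ : ℝ}
    (hθ : θ ∈ Ioo (Real.pi - 2 * Real.arctan c) (Real.pi + 2 * Real.arctan c)) :
    ContinuousAt (Ph c) θ := by
  have h1 := Real.arctan_lt_pi_div_two c
  obtain ⟨h3, h4⟩ := hθ
  have : ContinuousAt Real.tan ((Real.pi - θ) / 2) := by
    rw [Real.continuousAt_tan]
    exact (Real.cos_pos_of_mem_Ioo ⟨by linarith, by linarith⟩).ne'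
  unfold Ph
  refine Real.continuous_arccos.continuousAt.comp (ContinuousAt.div_const ?_ c)
  exact ContinuousAt.comp (g := Real.tan) this (by fun_prop)

lemma Th_lipschitz {c : ℝ} (hc : 0 < c) (x y : ℝ) : |Th c x - Th c y| ≤ 2 * c * |x - y| := by
  have h := Convex.norm_image_sub_le_of_norm_hasDerivWithin_le (f := Th c)
    (f' := fun t => 2 * c * Real.sin t / (1 + (c * Real.cos t) ^ 2)) (C := 2 * c) (s := univ)
    (x := y) (y := x) (fun t _ => (hasDerivAt_Th c t).hasDerivWithinAt) (fun t _ => by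
      rw [Real.norm_eq_abs, abs_div, abs_mul, abs_of_pos (show 0 < 2 * c by linarith),
        abs_of_pos (show 0 < 1 + (c * Real.cos t) ^ 2 by positivity)]
      rw [div_le_iff₀ (by positivity)]
      have := Real.abs_sin_le_one t
      have h2 := mul_le_mul_of_nonneg_left this (show 0 ≤ 2 * c by linarith)
      nlinarith [sq_nonneg (c * Real.cos t)]) convex_univ (mem_univ _) (mem_univ _)
  simpa [Real.norm_eq_abs] using h

/-- The chord length on the arc in terms of the cosines. -/
lemma cos_sub_eq {c : ℝ} (x y : ℝ) :
    |c * Real.cos x - c * Real.cos y| = |Real.sin ((Th c x - Th c y) / 2)| *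
      (√(1 + (c * Real.cos x) ^ 2) * √(1 + (c * Real.cos y) ^ 2)) := by
  have : (Th c x - Th c y) / 2 = Real.arctan (c * Real.cos y) - Real.arctan (c * Real.cos x) := by
    simp only [Th]; ring
  rw [this, Real.sin_sub, Real.sin_arctan, Real.sin_arctan, Real.cos_arctan, Real.cos_arctan]
  set a := c * Real.cos x
  set b := c * Real.cos y
  have ha : 0 < √(1 + a ^ 2) := by positivity
  have hb : 0 < √(1 + b ^ 2) := by positivity
  rw [← abs_of_pos (mul_pos ha hb), ← abs_mul, abs_sub_comm]
  congr 1
  field_simp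

/-- `e^{i Th c t}` is a Cayley transform of the real number `c cos t`. -/
lemma exp_Th (c t : ℝ) : Complex.exp (Th c t * Complex.I) =
    ((c * Real.cos t : ℝ) + Complex.I) / ((c * Real.cos t : ℝ) - Complex.I) := by
  set a := c * Real.cos t with ha
  set x := Real.arctan a with hx
  have h1 : Complex.exp (Th c t * Complex.I) =
      - (Complex.exp (((-x : ℝ) : ℂ) * Complex.I)) ^ 2 := by
    rw [← Complex.exp_nat_mul, ← neg_one_mul, ← Complex.exp_pi_mul_I, ← Complex.exp_add]
    congr 1
    rw [Th, ← ha, ← hx]; push_cast; ring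
  have hne : (a : ℂ) - Complex.I ≠ 0 := fun h => by
    have := congrArg Complex.im h; simp at this
  rw [h1, Complex.exp_mul_I, ← Complex.ofReal_cos, ← Complex.ofReal_sin, Real.cos_neg, Real.sin_neg,
    hx, Real.sin_arctan, Real.cos_arctan, eq_div_iff hne]
  have hs : (√(1 + a ^ 2)) ^ 2 = 1 + a ^ 2 := Real.sq_sqrt (by positivity)
  have hs0 : ((√(1 + a ^ 2) : ℝ) : ℂ) ≠ 0 := by
    rw [Complex.ofReal_ne_zero]; positivity
  have hsC : ((√(1 + a ^ 2) : ℝ) : ℂ) ^ 2 = 1 + (a : ℂ) ^ 2 := by exact_mod_cast hs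
  push_cast
  generalize ((√(1 + a ^ 2) : ℝ) : ℂ) = q at hs0 hsC
  field_simp
  rw [hsC]
  linear_combination (-(2 * (a : ℂ)) + (a : ℂ) ^ 2 * Complex.I - (a : ℂ) ^ 3) * Complex.I_sq

/-- The Cauchy kernel of the arc, transplanted to the line by the Cayley transform, is a bounded
factor times one plus a multiple of the Cauchy kernel in `c cos x`. -/
lemma inv_exp_sub {c x y : ℝ} (h : c * Real.cos x ≠ c * Real.cos y) :
    1 / (Complex.exp (Th c y * Complex.I) - Complex.exp (Th c x * Complex.I)) =
      ((c * Real.cos y : ℝ) - Complex.I) / (2 * Complex.I) *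
      (1 + ((c * Real.cos y : ℝ) - Complex.I) / (((c * Real.cos x - c * Real.cos y : ℝ)) : ℂ)) := by
  rw [exp_Th, exp_Th]
  have hne : ∀ a : ℝ, (a : ℂ) - Complex.I ≠ 0 := fun a h => by
    have := congrArg Complex.im h; simp at this
  have h1 := hne (c * Real.cos x)
  have h2 := hne (c * Real.cos y)
  have h3 : ((c * Real.cos x : ℝ) : ℂ) - ((c * Real.cos y : ℝ) : ℂ) ≠ 0 := by
    rw [sub_ne_zero]; exact_mod_cast h
  rw [Complex.ofReal_sub]
  generalize ((c * Real.cos x : ℝ) : ℂ) = a at *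
  generalize ((c * Real.cos y : ℝ) : ℂ) = b at *
  have e : (b + Complex.I) / (b - Complex.I) - (a + Complex.I) / (a - Complex.I) =
      2 * Complex.I * (a - b) / ((b - Complex.I) * (a - Complex.I)) := by
    field_simp; ring
  rw [e]
  field_simp [Complex.I_ne_zero]
  ring

lemma sin_Th (c t : ℝ) : Real.sin (Th c t / 2) = 1 / √(1 + (c * Real.cos t) ^ 2) := by
  have : Th c t / 2 = Real.pi / 2 - Real.arctan (c * Real.cos t) := by rw [Th]; ring
  rw [this, Real.sin_pi_div_two_sub, Real.cos_arctan]

lemma cos_Th (c t : ℝ) : Real.cos (Th c t / 2) =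
    (c * Real.cos t) / √(1 + (c * Real.cos t) ^ 2) := by
  have : Th c t / 2 = Real.pi / 2 - Real.arctan (c * Real.cos t) := by rw [Th]; ring
  rw [this, Real.cos_pi_div_two_sub, Real.sin_arctan]

/-- In the new variable the square of the gap weight is comparable to `sin t ^ 2`. -/
lemma gap_Th {α c : ℝ} (hα : α = Real.pi - 2 * Real.arctan c) (t : ℝ) :
    Real.cos (α / 2) ^ 2 - Real.cos (Th c t / 2) ^ 2 =
      (c * Real.sin t) ^ 2 / ((1 + (c * Real.cos t) ^ 2) * (1 + c ^ 2)) := by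
  have : α / 2 = Real.pi / 2 - Real.arctan c := by rw [hα]; ring
  rw [this, Real.cos_pi_div_two_sub, Real.sin_arctan, cos_Th, div_pow, div_pow,
    Real.sq_sqrt (by positivity), Real.sq_sqrt (by positivity), mul_pow c (Real.sin t),
    Real.sin_sq]
  field_simp
  ring

/-- In the new variable `wAC` is the reciprocal of the derivative of `Th c`. -/
lemma wAC_Th {α c : ℝ} (hc : 0 < c) (hα : α = Real.pi - 2 * Real.arctan c) {t : ℝ}
    (ht : t ∈ Ioo 0 Real.pi) :
    wAC α (Th c t) = (1 + (c * Real.cos t) ^ 2) / (2 * c * Real.sin t) := by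
  have hs : 0 < Real.sin t := Real.sin_pos_of_mem_Ioo ht
  have h2 : α / 2 = Real.pi / 2 - Real.arctan c := by rw [hα]; ring
  rw [wAC, gap_Th hα, sin_Th, h2, Real.sin_pi_div_two_sub, Real.cos_arctan,
    Real.sqrt_div (by positivity), Real.sqrt_sq (by positivity), Real.sqrt_mul (by positivity)]
  have h3 : 0 < √(1 + c ^ 2) := by positivity
  have h4 : 0 < √(1 + (c * Real.cos t) ^ 2) := by positivity
  have h5 : √(1 + (c * Real.cos t) ^ 2) ^ 2 = 1 + (c * Real.cos t) ^ 2 :=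
    Real.sq_sqrt (by positivity)
  generalize √(1 + (c * Real.cos t) ^ 2) = q at *
  rw [← h5]
  field_simp

lemma deriv_Th_pos {c : ℝ} (hc : 0 < c) {t : ℝ} (ht : t ∈ Ioo 0 Real.pi) :
    0 < 2 * c * Real.sin t / (1 + (c * Real.cos t) ^ 2) := by
  have hs : 0 < Real.sin t := Real.sin_pos_of_mem_Ioo ht
  positivity

lemma injOn_Th {c : ℝ} (hc : 0 < c) : InjOn (Th c) (Ioo 0 Real.pi) :=
  (strictMonoOn_Th hc).injOn.mono Ioo_subset_Icc_self

/-- Change of variables: the weight `w_α` becomes Lebesgue measure on `(0, π)`. -/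
lemma integral_Th {α c : ℝ} (hc : 0 < c) (hα : α = Real.pi - 2 * Real.arctan c)
    {E : Type*} [NormedAddCommGroup E] [NormedSpace ℝ E] {s : Set ℝ} (hs : MeasurableSet s)
    (hs' : s ⊆ Ioo 0 Real.pi) (u : ℝ → E) :
    ∫ θ in Th c '' s, wAC α θ • u θ = ∫ t in s, u (Th c t) := by
  rw [integral_image_eq_integral_abs_deriv_smul hs
    (fun t _ => (hasDerivAt_Th c t).hasDerivWithinAt) ((injOn_Th hc).mono hs')]
  refine setIntegral_congr_fun hs fun t ht => ?_
  have h := deriv_Th_pos hc (hs' ht)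
  have hs0 : 0 < Real.sin t := Real.sin_pos_of_mem_Ioo (hs' ht)
  rw [abs_of_pos h, smul_smul, wAC_Th hc hα (hs' ht)]
  have : 2 * c * Real.sin t / (1 + (c * Real.cos t) ^ 2) *
      ((1 + (c * Real.cos t) ^ 2) / (2 * c * Real.sin t)) = 1 := by field_simp
  rw [this, one_smul]

lemma integrableOn_Th {α c : ℝ} (hc : 0 < c) (hα : α = Real.pi - 2 * Real.arctan c)
    {E : Type*} [NormedAddCommGroup E] [NormedSpace ℝ E] {s : Set ℝ} (hs : MeasurableSet s)
    (hs' : s ⊆ Ioo 0 Real.pi) (u : ℝ → E) :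
    IntegrableOn (fun θ => wAC α θ • u θ) (Th c '' s) ↔ IntegrableOn (fun t => u (Th c t)) s := by
  rw [integrableOn_image_iff_integrableOn_abs_deriv_smul hs
    (fun t _ => (hasDerivAt_Th c t).hasDerivWithinAt) ((injOn_Th hc).mono hs')]
  refine integrableOn_congr_fun (fun t ht => ?_) hs
  have h := deriv_Th_pos hc (hs' ht)
  have hs0 : 0 < Real.sin t := Real.sin_pos_of_mem_Ioo (hs' ht)
  rw [abs_of_pos h, smul_smul, wAC_Th hc hα (hs' ht)]
  have : 2 * c * Real.sin t / (1 + (c * Real.cos t) ^ 2) *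
      ((1 + (c * Real.cos t) ^ 2) / (2 * c * Real.sin t)) = 1 := by field_simp
  rw [this, one_smul]

/-! ### Folding the circle onto (0, π) -/

/-- Folding an integral over the circle onto the half-circle. -/
lemma integral_fold {E : Type*} [NormedAddCommGroup E] [NormedSpace ℝ E] {u : ℝ → E}
    (hu : IntegrableOn u (Ioc 0 (2 * Real.pi))) :
    ∫ t in Ioc 0 (2 * Real.pi), u t = ∫ t in Ioo 0 Real.pi, (u t + u (2 * Real.pi - t)) := by
  have hpi := Real.pi_pos
  have h0 : IntervalIntegrable u volume 0 (2 * Real.pi) := by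
    rwa [intervalIntegrable_iff_integrableOn_Ioc_of_le (by positivity)]
  have h1 : IntervalIntegrable u volume 0 Real.pi := h0.mono_set (by
    rw [uIcc_of_le (by linarith), uIcc_of_le (by linarith)]; exact Icc_subset_Icc_right (by linarith))
  have h2 : IntervalIntegrable u volume Real.pi (2 * Real.pi) := h0.mono_set (by
    rw [uIcc_of_le (by linarith), uIcc_of_le (by linarith)]; exact Icc_subset_Icc_left (by linarith))
  have h3 : IntervalIntegrable (fun t => u (2 * Real.pi - t)) volume 0 Real.pi := by
    have := (h2.comp_sub_left (2 * Real.pi)).symm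
    simpa [two_mul] using this
  rw [← integral_Ioc_eq_integral_Ioo, ← intervalIntegral.integral_of_le (by positivity),
    ← intervalIntegral.integral_of_le (by positivity), intervalIntegral.integral_add h1 h3,
    intervalIntegral.integral_comp_sub_left, ← intervalIntegral.integral_add_adjacent_intervals h1 h2]
  congr 2 <;> ring

lemma integrableOn_fold {E : Type*} [NormedAddCommGroup E] {u : ℝ → E}
    (hs : ∀ t, u (2 * Real.pi - t) = u t) :
    IntegrableOn u (Ioc 0 (2 * Real.pi)) ↔ IntegrableOn u (Ioo 0 Real.pi) := by
  have hpi := Real.pi_pos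
  constructor
  · exact fun h => h.mono_set fun t ht => ⟨ht.1, by linarith [ht.2]⟩
  · intro h
    rw [← integrableOn_Ioc_iff_integrableOn_Ioo] at h
    have h1 : IntervalIntegrable u volume 0 Real.pi := by
      rwa [intervalIntegrable_iff_integrableOn_Ioc_of_le (by positivity)]
    have h2 : IntervalIntegrable u volume Real.pi (2 * Real.pi) := by
      have := (h1.comp_sub_left (2 * Real.pi)).symm
      simp only [hs, sub_zero] at this
      convert this using 1; ring
    rw [← intervalIntegrable_iff_integrableOn_Ioc_of_le (by positivity)]
    exact h1.trans h2

/-- The Herglotz kernel folded under `t ↦ 2π - t`: the kernel seen by data symmetric under complex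
conjugation. -/
noncomputable def KK (z : ℂ) (t : ℝ) : ℂ :=
  hk z (circleMap 0 1 t) + hk z (circleMap 0 1 (2 * Real.pi - t))

lemma measurable_KK {z : ℂ} : Measurable (KK z) := by
  unfold KK
  exact (measurable_hk'.comp measurable_circleMap').add
    (measurable_hk'.comp (measurable_circleMap'.comp (by fun_prop)))

lemma norm_KK_le {z : ℂ} {r : ℝ} (hr : r < 1) (hz : ‖z‖ ≤ r) (t : ℝ) :
    ‖KK z t‖ ≤ 4 / (1 - r) := by
  have h1 := norm_hk_le hr hz (z := circleMap 0 1 t) (by simp)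
  have h2 := norm_hk_le hr hz (z := circleMap 0 1 (2 * Real.pi - t)) (by simp)
  calc _ ≤ _ := norm_add_le _ _
    _ ≤ 2 / (1 - r) + 2 / (1 - r) := add_le_add h1 h2
    _ = _ := by ring

/-- For data symmetric under conjugation the Herglotz integral is an integral of `KK` over
`(0, π)`. -/
lemma Hz_fold {g : ℂ → ℂ} (hm : Measurable g) (hg : Integrable g mC)
    (hs : ∀ t : ℝ, g (circleMap 0 1 (2 * Real.pi - t)) = g (circleMap 0 1 t)) {w : ℂ}
    (hw : ‖w‖ < 1) :
    ∫ t in Ioo 0 Real.pi, KK w t * g (circleMap 0 1 t) = 2 * Real.pi * Hz g w := by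
  have hmm : Measurable fun z => hk w z * g z := measurable_hk'.mul hm
  have hi := (integrable_mC hmm.stronglyMeasurable).1 (integrable_hk_mul hg hw)
  rw [Hz, integral_mC hmm.aestronglyMeasurable, integral_fold hi]
  rw [Complex.real_smul]
  push_cast
  rw [← mul_assoc, mul_inv_cancel₀ (by simp), one_mul]
  refine integral_congr_ae (Eventually.of_forall fun t => ?_)
  simp only [KK, hs]; ring

lemma integral_KK {w : ℂ} (hw : ‖w‖ < 1) : ∫ t in Ioo 0 Real.pi, KK w t = 2 * Real.pi := by
  have h := Hz_fold (g := fun z => z ^ 0) (by fun_prop) (by simp) (by simp) hw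
  rw [Hz_pow hw] at h
  simp only [pow_zero, mul_one] at h
  rw [h]; ring

lemma circleMap_re (t : ℝ) : (circleMap 0 1 t).re = Real.cos t := by
  simp [circleMap, Complex.exp_ofReal_mul_I_re]

lemma circleMap_im (t : ℝ) : (circleMap 0 1 t).im = Real.sin t := by
  simp [circleMap, Complex.exp_ofReal_mul_I_im]

/-- On the boundary the folded kernel is the cosine form of the Cauchy kernel, up to a constant. -/
lemma KK_boundary {t s : ℝ} (h : Real.cos t ≠ Real.cos s) :
    KK (circleMap 0 1 s) t = (-2 * Complex.I) * ((Real.sin s / (Real.cos s - Real.cos t) : ℝ) : ℂ) := by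
  have e1 : ∀ x : ℝ, circleMap 0 1 x = (Real.cos x : ℂ) + Real.sin x * Complex.I := fun x => by
    apply Complex.ext <;> simp [circleMap_re, circleMap_im, -Complex.ofReal_cos, -Complex.ofReal_sin]
  have h1 : ((Real.cos t : ℝ) : ℂ) - (Real.cos s : ℝ) ≠ 0 := by
    rw [sub_ne_zero]; exact_mod_cast h
  have hne : ∀ x, Real.cos x = Real.cos t → circleMap 0 1 x - circleMap 0 1 s ≠ 0 := by
    intro x hx h0
    have := congrArg Complex.re h0
    rw [Complex.sub_re, circleMap_re, circleMap_re, hx] at this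
    exact h (sub_eq_zero.1 (by simpa using this))
  have h2 := hne t rfl
  have h3 := hne (2 * Real.pi - t) (by rw [Real.cos_two_pi_sub])
  rw [KK, hk, hk, div_add_div _ _ h2 h3]
  rw [e1 t, e1 s, e1 (2 * Real.pi - t), Real.cos_two_pi_sub, Real.sin_two_pi_sub] at *
  have p1 : ((Real.cos t : ℝ) : ℂ) ^ 2 + ((Real.sin t : ℝ) : ℂ) ^ 2 = 1 := by
    exact_mod_cast Real.cos_sq_add_sin_sq t
  have p2 : ((Real.cos s : ℝ) : ℂ) ^ 2 + ((Real.sin s : ℝ) : ℂ) ^ 2 = 1 := by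
    exact_mod_cast Real.cos_sq_add_sin_sq s
  rw [Complex.ofReal_div, Complex.ofReal_sub, Complex.ofReal_neg] at *
  rw [mul_div_assoc', div_eq_div_iff (mul_ne_zero h2 h3) (by rwa [← neg_ne_zero, neg_sub])]
  generalize ((Real.cos t : ℝ) : ℂ) = C at *
  generalize ((Real.sin t : ℝ) : ℂ) = S at *
  generalize ((Real.cos s : ℝ) : ℂ) = c at *
  generalize ((Real.sin s : ℝ) : ℂ) = q at *
  have hI := Complex.I_sq
  have hS : S ^ 2 = 1 - C ^ 2 := by linear_combination p1
  have hc : c ^ 2 = 1 - q ^ 2 := by linear_combination p2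
  clear h1 h2 h3 hne e1 h
  generalize Complex.I = i at *
  have e : (C + S * i) * (C + -S * i) = 1 := by linear_combination p1 - S ^ 2 * hI
  have e2 : (c + q * i) ^ 2 = 2 * c * (c + q * i) - 1 := by
    linear_combination -p2 + q ^ 2 * hI
  linear_combination (2 * (c - C) + 2 * i * q) * e + (-2 * (c - C) + 2 * i * q) * e2
    - 4 * (c - C) * p2 + 4 * (c - C) * q ^ 2 * hI

/-- The boundary kernel differs from the interior kernel at distance `ε` from the boundary by at
most `4 ε` over the squared chord. -/
lemma hk_diff {x ζ : ℂ} (hx : ‖x‖ = 1) (hζ : ‖ζ‖ = 1) (hne : x ≠ ζ) {ε : ℝ} (h0 : 0 < ε)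
    (h1 : ε < 1) :
    ‖hk ζ x - hk (((1 - ε : ℝ) : ℂ) * ζ) x‖ ≤ 4 * ε / ‖x - ζ‖ ^ 2 := by
  set z := ((1 - ε : ℝ) : ℂ) * ζ with hz
  have hzn : ‖z‖ = 1 - ε := by
    rw [hz, norm_mul, hζ, mul_one, Complex.norm_real, Real.norm_of_nonneg (by linarith)]
  have hzζ : ζ - z = ε * ζ := by rw [hz]; push_cast; ring
  have hzζ' : ‖ζ - z‖ = ε := by
    rw [hzζ, norm_mul, hζ, mul_one, Complex.norm_real, Real.norm_of_nonneg h0.le]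
  have a1 : ε ≤ ‖x - z‖ := by have := norm_sub_norm_le x z; linarith
  have a2 : ‖x - ζ‖ ≤ 2 * ‖x - z‖ := by
    have : x - ζ = (x - z) - (ζ - z) := by ring
    have h := norm_sub_le (x - z) (ζ - z)
    rw [← this] at h; linarith
  have b1 : x - ζ ≠ 0 := sub_ne_zero.2 hne
  have b2 : x - z ≠ 0 := by rw [← norm_pos_iff]; linarith
  have b3 : 0 < ‖x - ζ‖ := norm_pos_iff.2 b1
  have e : hk ζ x - hk z x = 2 * x * (ζ - z) / ((x - ζ) * (x - z)) := by
    rw [hk, hk]; field_simp; ring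
  rw [e, norm_div, norm_mul, norm_mul, norm_mul, hx, hzζ', Complex.norm_ofNat]
  rw [div_le_div_iff₀ (by positivity) (by positivity)]
  have := mul_le_mul_of_nonneg_left a2 (show 0 ≤ 2 * ε * ‖x - ζ‖ by positivity)
  nlinarith

/-! ### The truncated boundary kernel against the interior kernel -/

/-- The chords from `e^{is}` to `e^{it}` and to its conjugate multiply to the difference of
cosines. -/
lemma norm_circleMap_sub_mul (t s : ℝ) :
    ‖circleMap 0 1 t - circleMap 0 1 s‖ * ‖circleMap 0 1 (2 * Real.pi - t) - circleMap 0 1 s‖ =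
      2 * |Real.cos t - Real.cos s| := by
  rw [norm_circleMap_sub, norm_circleMap_sub]
  have : (2 * Real.pi - t - s) / 2 = Real.pi - (t + s) / 2 := by ring
  rw [this, Real.sin_pi_sub, Real.cos_sub_cos, abs_mul, abs_mul]
  norm_num; ring

/-- The set of `t ∈ (0, π)` for which `Th c t` lies outside the excised interval
`(Th c s - ε, Th c s + ε)`. -/
def sE (c s ε : ℝ) : Set ℝ := {t | t ∈ Ioo 0 Real.pi ∧ ε ≤ |Th c t - Th c s|}

lemma measurableSet_sE (c s ε : ℝ) : MeasurableSet (sE c s ε) := by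
  have h : Measurable fun t => |Th c t - Th c s| :=
    ((continuous_Th c).sub continuous_const).abs.measurable
  exact measurableSet_Ioo.inter (h measurableSet_Ici)

lemma sE_subset (c s ε : ℝ) : sE c s ε ⊆ Ioo 0 Real.pi := fun _ h => h.1

lemma cos_ne_of_ne {t s : ℝ} (ht : t ∈ Ioo 0 Real.pi) (hs : s ∈ Ioo 0 Real.pi) (h : t ≠ s) :
    Real.cos t ≠ Real.cos s := fun he =>
  h (Real.injOn_cos (Ioo_subset_Icc_self ht) (Ioo_subset_Icc_self hs) he)

lemma sE_ne {c s ε t : ℝ} (hε : 0 < ε) (ht : t ∈ sE c s ε) : t ≠ s := by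
  rintro rfl
  have := ht.2
  simp at this; linarith

/-- The difference between the truncated boundary kernel and the interior kernel. -/
noncomputable def DD (c s ε t : ℝ) : ℂ :=
  (sE c s ε).indicator (KK (circleMap 0 1 s)) t - KK (((1 - ε : ℝ) : ℂ) * circleMap 0 1 s) t

lemma norm_smul_circleMap {s ε : ℝ} (h1 : ε < 1) :
    ‖((1 - ε : ℝ) : ℂ) * circleMap 0 1 s‖ = 1 - ε := by
  rw [norm_mul, Complex.norm_real, Real.norm_of_nonneg (by linarith)]; simp

/-- `DD` is dominated by a kernel of Poisson type. Outside the cut-off this is `hk_diff`, because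
there `ε ≤ 2 c |t - s|`. Inside, `|t - s|` is at most a multiple of `ε`, and the trivial bound of
order `1 / ε` for the interior kernel suffices. -/
lemma DD_bound {c s : ℝ} (hc : 0 < c) (hs : s ∈ Ioo 0 Real.pi) :
    ∃ C : ℝ, 0 ≤ C ∧ ∀ᶠ ε in nhdsWithin 0 (Ioi 0), ∀ t ∈ Ioo 0 Real.pi,
      ‖DD c s ε t‖ ≤ C * (ε / (ε ^ 2 + |t - s| ^ 2)) := by
  have hpi := Real.pi_pos
  obtain ⟨k, hk0, hkk⟩ := circle_sub_ge (x := s) ⟨hs.1, by linarith [hs.2]⟩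
  set K := (1 + c ^ 2) / (c * k ^ 2 * (Real.pi - s)) with hK
  have hps : 0 < Real.pi - s := by linarith [hs.2]
  set C1 := 8 * (4 * c ^ 2 + 1) / k ^ 2 with hC1
  set C2 := 4 * (1 + K ^ 2) with hC2
  have hC1' : 0 ≤ C1 := by positivity
  have hC2' : 0 ≤ C2 := by positivity
  refine ⟨C1 + C2, by positivity, ?_⟩
  have hev : Ioo (0:ℝ) 1 ∈ nhdsWithin (0:ℝ) (Ioi 0) := Ioo_mem_nhdsGT one_pos
  filter_upwards [hev] with ε hε t ht
  obtain ⟨h0, h1⟩ := hε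
  set d := |t - s| with hd
  have hd0 : 0 ≤ d := abs_nonneg _
  have hq : 0 < ε ^ 2 + d ^ 2 := by positivity
  have k1 := hkk t ⟨ht.1.le, by linarith [ht.2]⟩
  have k2 : k * d ≤ ‖circleMap 0 1 (2 * Real.pi - t) - circleMap 0 1 s‖ := by
    refine le_trans ?_ (hkk (2 * Real.pi - t) ⟨by linarith [ht.2], by linarith [ht.1]⟩)
    refine mul_le_mul_of_nonneg_left ?_ hk0.le
    refine le_trans ?_ (le_abs_self _)
    rw [hd, abs_le]; constructor <;> linarith [hs.1, hs.2, ht.1, ht.2]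
  have k3 : k * (Real.pi - s) ≤ ‖circleMap 0 1 (2 * Real.pi - t) - circleMap 0 1 s‖ := by
    refine le_trans ?_ (hkk (2 * Real.pi - t) ⟨by linarith [ht.2], by linarith [ht.1]⟩)
    refine mul_le_mul_of_nonneg_left ?_ hk0.le
    refine le_trans ?_ (le_abs_self _)
    linarith [ht.2]
  have hfin : ∀ {a A B : ℝ}, 0 ≤ B → a ≤ A * (ε / (ε ^ 2 + d ^ 2)) →
      a ≤ (A + B) * (ε / (ε ^ 2 + d ^ 2)) := by
    intro a A B hB h
    refine h.trans (mul_le_mul_of_nonneg_right (by linarith) (by positivity))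
  by_cases hm : t ∈ sE c s ε
  · have hne := sE_ne h0 hm
    have hdp : 0 < d := abs_pos.2 (sub_ne_zero.2 hne)
    have hεd : ε ≤ 2 * c * d := hm.2.trans (Th_lipschitz hc t s)
    refine hfin hC2' ?_
    rw [DD, indicator_of_mem hm, KK, KK]
    set ζ := circleMap 0 1 s
    have b : ∀ x : ℂ, ‖x‖ = 1 → k * d ≤ ‖x - ζ‖ →
        ‖hk ζ x - hk (((1 - ε : ℝ) : ℂ) * ζ) x‖ ≤ 4 * ε / (k * d) ^ 2 := by
      intro x hx hxk
      have hkd : 0 < k * d := by positivity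
      have hxne : x ≠ ζ := by rintro rfl; simp at hxk; linarith
      refine (hk_diff hx (by simp [ζ]) hxne h0 h1).trans ?_
      gcongr
    have b1 := b _ (by simp) k1
    have b2 := b _ (by simp) k2
    calc _ = ‖(hk ζ (circleMap 0 1 t) - hk (((1 - ε : ℝ) : ℂ) * ζ) (circleMap 0 1 t)) +
          (hk ζ (circleMap 0 1 (2 * Real.pi - t)) -
            hk (((1 - ε : ℝ) : ℂ) * ζ) (circleMap 0 1 (2 * Real.pi - t)))‖ := by
            congr 1; ring
      _ ≤ _ := norm_add_le _ _
      _ ≤ _ := add_le_add b1 b2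
      _ ≤ C1 * (ε / (ε ^ 2 + d ^ 2)) := by
        have e1 : ε ^ 2 + d ^ 2 ≤ (4 * c ^ 2 + 1) * d ^ 2 := by
          have := pow_le_pow_left₀ h0.le hεd 2
          nlinarith
        have e2 : 1 / d ^ 2 ≤ (4 * c ^ 2 + 1) / (ε ^ 2 + d ^ 2) := by
          rw [div_le_div_iff₀ (by positivity) hq]; linarith
        calc _ = 8 * ε / k ^ 2 * (1 / d ^ 2) := by field_simp; ring
          _ ≤ 8 * ε / k ^ 2 * ((4 * c ^ 2 + 1) / (ε ^ 2 + d ^ 2)) := by gcongr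
          _ = _ := by rw [hC1]; field_simp
  · rw [add_comm C1]
    refine hfin hC1' ?_
    rw [DD, indicator_of_notMem hm, zero_sub, norm_neg]
    have n1 := norm_KK_le (z := ((1 - ε : ℝ) : ℂ) * circleMap 0 1 s) (r := 1 - ε) (by linarith)
      (norm_smul_circleMap h1).le t
    have hlt : |Th c t - Th c s| < ε := by
      by_contra h; exact hm ⟨ht, not_lt.1 h⟩
    have hdK : d ≤ K * ε := by
      have e1 := cos_sub_eq (c := c) t s
      have e2 := norm_circleMap_sub_mul t s
      have e3 : k * d * (k * (Real.pi - s)) ≤ 2 * |Real.cos t - Real.cos s| := by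
        rw [← e2]; exact mul_le_mul k1 k3 (by positivity) (norm_nonneg _)
      rw [← mul_sub, abs_mul, abs_of_pos hc] at e1
      have e4 : |Real.sin ((Th c t - Th c s) / 2)| ≤ ε / 2 := by
        refine Real.abs_sin_le_abs.trans ?_
        rw [abs_div, abs_two]; linarith
      have e5 : ∀ x, √(1 + (c * Real.cos x) ^ 2) ≤ √(1 + c ^ 2) := fun x => by
        apply Real.sqrt_le_sqrt
        rw [mul_pow]
        have := Real.cos_sq_le_one x
        nlinarith [sq_nonneg c]
      have e6 : √(1 + (c * Real.cos t) ^ 2) * √(1 + (c * Real.cos s) ^ 2) ≤ 1 + c ^ 2 := by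
        calc _ ≤ √(1 + c ^ 2) * √(1 + c ^ 2) :=
              mul_le_mul (e5 t) (e5 s) (Real.sqrt_nonneg _) (Real.sqrt_nonneg _)
          _ = _ := Real.mul_self_sqrt (by positivity)
      have e7 : c * |Real.cos t - Real.cos s| ≤ ε / 2 * (1 + c ^ 2) := by
        rw [e1]; exact mul_le_mul e4 e6 (by positivity) (by positivity)
      rw [hK, div_mul_eq_mul_div, le_div_iff₀ (by positivity)]
      nlinarith [mul_le_mul_of_nonneg_left e3 hc.le]
    calc _ ≤ _ := n1
      _ = 4 / ε := by ring
      _ ≤ C2 * (ε / (ε ^ 2 + d ^ 2)) := by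
        have e1 : ε ^ 2 + d ^ 2 ≤ (1 + K ^ 2) * ε ^ 2 := by
          have := pow_le_pow_left₀ hd0 hdK 2
          nlinarith
        rw [hC2, mul_div_assoc', div_le_div_iff₀ h0 hq]
        nlinarith

/-- An antiderivative of `sin s / (cos s - cos t)` in `t`. Since `Real.log` of a negative number is
the logarithm of its absolute value, the formula is valid on both sides of `t = s`. -/
noncomputable def Lm (s t : ℝ) : ℝ :=
  Real.log (Real.sin ((t - s) / 2)) - Real.log (Real.sin ((t + s) / 2))

lemma sin_half_pos {s t : ℝ} (hs : s ∈ Ioo 0 Real.pi) (ht : t ∈ Icc 0 Real.pi) :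
    0 < Real.sin ((t + s) / 2) :=
  Real.sin_pos_of_pos_of_lt_pi (by linarith [hs.1, ht.1]) (by linarith [hs.2, ht.2])

lemma sin_half_ne {s t : ℝ} (hs : s ∈ Ioo 0 Real.pi) (ht : t ∈ Icc 0 Real.pi) (h : t ≠ s) :
    Real.sin ((t - s) / 2) ≠ 0 := by
  rcases lt_or_gt_of_ne h with h | h
  · exact (Real.sin_neg_of_neg_of_neg_pi_lt (by linarith) (by linarith [hs.2, ht.1])).ne
  · exact (Real.sin_pos_of_pos_of_lt_pi (by linarith) (by linarith [hs.1, ht.2])).ne'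

lemma hasDerivAt_Lm {s t : ℝ} (hs : s ∈ Ioo 0 Real.pi) (ht : t ∈ Icc 0 Real.pi) (h : t ≠ s) :
    HasDerivAt (Lm s) (Real.sin s / (Real.cos s - Real.cos t)) t := by
  have n1 := sin_half_ne hs ht h
  have n2 := (sin_half_pos hs ht).ne'
  have d1 : HasDerivAt (fun t => Real.log (Real.sin ((t - s) / 2))) _ t :=
    ((((hasDerivAt_id t).sub_const s).div_const 2).sin).log n1
  have d2 : HasDerivAt (fun t => Real.log (Real.sin ((t + s) / 2))) _ t :=
    ((((hasDerivAt_id t).add_const s).div_const 2).sin).log n2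
  refine (d1.sub d2).congr_deriv ?_
  have e1 : Real.cos s - Real.cos t = 2 * (Real.sin ((t + s) / 2) * Real.sin ((t - s) / 2)) := by
    have := Real.cos_sub_cos s t
    rw [this, show (s - t) / 2 = -((t - s) / 2) by ring, Real.sin_neg, add_comm s t]; ring
  have e2 : Real.sin s = Real.sin ((t + s) / 2) * Real.cos ((t - s) / 2) -
      Real.cos ((t + s) / 2) * Real.sin ((t - s) / 2) := by
    rw [← Real.sin_sub]; congr 1; ring
  rw [e1, e2]
  simp only [id]
  generalize Real.sin ((t - s) / 2) = A at *
  generalize Real.sin ((t + s) / 2) = B at *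
  field_simp

lemma Lm_zero (s : ℝ) : Lm s 0 = 0 := by
  rw [Lm, show (0 - s) / 2 = -((0 + s) / 2) by ring, Real.sin_neg, Real.log_neg_eq_log, sub_self]

lemma Lm_pi (s : ℝ) : Lm s Real.pi = 0 := by
  rw [Lm, show (Real.pi - s) / 2 = Real.pi - (Real.pi + s) / 2 by ring, Real.sin_pi_sub, sub_self]

/-- The regular part of `Lm s` after subtracting the logarithm of the chord on the arc. -/
noncomputable def Mm (c s t : ℝ) : ℝ :=
  Real.log (√(1 + (c * Real.cos t) ^ 2) * √(1 + (c * Real.cos s) ^ 2)) - Real.log (2 * c)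
    - 2 * Real.log (Real.sin ((t + s) / 2))

/-- The singularity of `Lm` is the logarithm of the chord on the arc, which takes equal values at
the two ends of the excised interval. -/
lemma Lm_eq {c s t : ℝ} (hc : 0 < c) (hs : s ∈ Ioo 0 Real.pi) (ht : t ∈ Ioo 0 Real.pi)
    (h : t ≠ s) : Lm s t = Real.log (Real.sin ((Th c t - Th c s) / 2)) + Mm c s t := by
  have n1 := sin_half_ne hs (Ioo_subset_Icc_self ht) h
  have n2 := (sin_half_pos hs (Ioo_subset_Icc_self ht)).ne'
  have e1 := cos_sub_eq (c := c) t s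
  rw [← mul_sub, Real.cos_sub_cos, abs_mul, abs_mul, abs_mul] at e1
  have n3 : Real.sin ((Th c t - Th c s) / 2) ≠ 0 := by
    intro h0
    rw [h0] at e1
    simp only [abs_zero, zero_mul, mul_eq_zero, abs_eq_zero] at e1
    rcases e1 with e1 | (e1 | e1) | e1
    · exact hc.ne' e1
    · norm_num at e1
    · exact n2 e1
    · exact n1 e1
  have q1 : √(1 + (c * Real.cos t) ^ 2) ≠ 0 := by positivity
  have q2 : √(1 + (c * Real.cos s) ^ 2) ≠ 0 := by positivity
  have e2 := congrArg Real.log e1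
  rw [Real.log_mul (by positivity) (by simp [n1, n2]), Real.log_mul (by simp [n2]) (by simpa using n1),
    Real.log_mul (by norm_num) (by simpa using n2), Real.log_abs, Real.log_abs, Real.log_abs,
    Real.log_mul (by simpa using n3) (by positivity), Real.log_abs, Real.log_abs,
    Real.log_neg_eq_log] at e2
  rw [Lm, Mm, Real.log_mul two_ne_zero hc.ne']
  linarith

lemma continuousAt_Mm {c s : ℝ} (hs : s ∈ Ioo 0 Real.pi) : ContinuousAt (Mm c s) s := by
  unfold Mm
  have h := sin_half_pos hs (Ioo_subset_Icc_self hs)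
  refine ContinuousAt.sub (ContinuousAt.sub (ContinuousAt.log (by fun_prop) (by positivity))
    continuousAt_const) (continuousAt_const.mul (ContinuousAt.log (by fun_prop) h.ne'))

/-- For a small cut-off `sE` is a union of two intervals. -/
lemma sE_eq {c s ε : ℝ} (hc : 0 < c) (hε : 0 < ε)
    (h1 : Th c s - ε ∈ Ioo (Real.pi - 2 * Real.arctan c) (Real.pi + 2 * Real.arctan c))
    (h2 : Th c s + ε ∈ Ioo (Real.pi - 2 * Real.arctan c) (Real.pi + 2 * Real.arctan c)) :
    sE c s ε = Ioc 0 (Ph c (Th c s - ε)) ∪ Ico (Ph c (Th c s + ε)) Real.pi := by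
  have p1 := Ph_mem hc h1
  have p2 := Ph_mem hc h2
  have q1 := Th_Ph hc h1
  have q2 := Th_Ph hc h2
  have hm := strictMonoOn_Th hc
  ext t
  simp only [sE, mem_ofPred_eq, mem_union, mem_Ioc, mem_Ico, le_abs]
  constructor
  · rintro ⟨ht, h | h⟩
    · right
      refine ⟨(hm.le_iff_le (Ioo_subset_Icc_self p2) (Ioo_subset_Icc_self ht)).1 ?_, ht.2⟩
      rw [q2]; linarith
    · left
      refine ⟨ht.1, (hm.le_iff_le (Ioo_subset_Icc_self ht) (Ioo_subset_Icc_self p1)).1 ?_⟩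
      rw [q1]; linarith
  · rintro (⟨h, h'⟩ | ⟨h, h'⟩)
    · have ht : t ∈ Ioo 0 Real.pi := ⟨h, h'.trans_lt p1.2⟩
      refine ⟨ht, Or.inr ?_⟩
      have := (hm.le_iff_le (Ioo_subset_Icc_self ht) (Ioo_subset_Icc_self p1)).2 h'
      rw [q1] at this; linarith
    · have ht : t ∈ Ioo 0 Real.pi := ⟨p2.1.trans_le h, h'⟩
      refine ⟨ht, Or.inl ?_⟩
      have := (hm.le_iff_le (Ioo_subset_Icc_self p2) (Ioo_subset_Icc_self ht)).2 h
      rw [q2] at this; linarith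

lemma integral_Lm {s a b : ℝ} (hs : s ∈ Ioo 0 Real.pi) (hab : a ≤ b) (ha : 0 ≤ a)
    (hb : b ≤ Real.pi) (hn : s ∉ Icc a b) :
    IntegrableOn (fun t => Real.sin s / (Real.cos s - Real.cos t)) (Ioc a b) ∧
    ∫ t in Ioc a b, Real.sin s / (Real.cos s - Real.cos t) = Lm s b - Lm s a := by
  have hne : ∀ t ∈ uIcc a b, t ∈ Icc 0 Real.pi ∧ t ≠ s := by
    intro t ht
    rw [uIcc_of_le hab] at ht
    exact ⟨⟨ha.trans ht.1, ht.2.trans hb⟩, fun h => hn (h ▸ ht)⟩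
  have hco : ContinuousOn (fun t => Real.sin s / (Real.cos s - Real.cos t)) (uIcc a b) := by
    refine continuousOn_const.div (by fun_prop) fun t ht h => (hne t ht).2 ?_
    exact Real.injOn_cos (hne t ht).1 (Ioo_subset_Icc_self hs) (by linarith)
  have hi := hco.intervalIntegrable (μ := volume)
  refine ⟨(intervalIntegrable_iff_integrableOn_Ioc_of_le hab).1 hi, ?_⟩
  rw [← intervalIntegral.integral_of_le hab]
  exact intervalIntegral.integral_eq_sub_of_hasDerivAt
    (fun t ht => hasDerivAt_Lm hs (hne t ht).1 (hne t ht).2) hi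

/-- The principal value of the boundary kernel over `(0, π)`, with cut-off measured on the arc,
vanishes. -/
lemma pv_zero {c s : ℝ} (hc : 0 < c) (hs : s ∈ Ioo 0 Real.pi) :
    (∀ᶠ ε in nhdsWithin 0 (Ioi 0),
      IntegrableOn (KK (circleMap 0 1 s)) (sE c s ε)) ∧
    Tendsto (fun ε => ∫ t in sE c s ε, KK (circleMap 0 1 s) t) (nhdsWithin 0 (Ioi 0)) (nhds 0) := by
  have hτ := Th_mem hc hs
  have hO : Ioo (Real.pi - 2 * Real.arctan c) (Real.pi + 2 * Real.arctan c) ∈ nhds (Th c s) :=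
    Ioo_mem_nhds hτ.1 hτ.2
  have t1 : Tendsto (fun ε : ℝ => Th c s - ε) (nhdsWithin 0 (Ioi 0)) (nhds (Th c s)) := by
    have : Tendsto (fun ε : ℝ => Th c s - ε) (nhds 0) (nhds (Th c s - 0)) :=
      (continuous_const.sub continuous_id).tendsto 0
    rw [sub_zero] at this
    exact this.mono_left nhdsWithin_le_nhds
  have t2 : Tendsto (fun ε : ℝ => Th c s + ε) (nhdsWithin 0 (Ioi 0)) (nhds (Th c s)) := by
    have : Tendsto (fun ε : ℝ => Th c s + ε) (nhds 0) (nhds (Th c s + 0)) :=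
      (continuous_const.add continuous_id).tendsto 0
    rw [add_zero] at this
    exact this.mono_left nhdsWithin_le_nhds
  have hP : Tendsto (Ph c) (nhds (Th c s)) (nhds s) := by
    have := (continuousAt_Ph hτ).tendsto
    rwa [Ph_Th hc (Ioo_subset_Icc_self hs)] at this
  have hM : Tendsto (Mm c s) (nhds s) (nhds (Mm c s s)) := (continuousAt_Mm hs).tendsto
  have key : ∀ᶠ ε in nhdsWithin 0 (Ioi 0),
      IntegrableOn (KK (circleMap 0 1 s)) (sE c s ε) ∧
      ∫ t in sE c s ε, KK (circleMap 0 1 s) t = (-2 * Complex.I) *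
        ((Mm c s (Ph c (Th c s - ε)) - Mm c s (Ph c (Th c s + ε)) : ℝ) : ℂ) := by
    filter_upwards [t1 hO, t2 hO, self_mem_nhdsWithin] with ε h1 h2 (h0 : 0 < ε)
    have p1 := Ph_mem hc h1
    have p2 := Ph_mem hc h2
    have q1 := Th_Ph hc h1
    have q2 := Th_Ph hc h2
    have hm := strictMonoOn_Th hc
    have l1 : Ph c (Th c s - ε) < s :=
      (hm.lt_iff_lt (Ioo_subset_Icc_self p1) (Ioo_subset_Icc_self hs)).1 (by rw [q1]; linarith)
    have l2 : s < Ph c (Th c s + ε) :=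
      (hm.lt_iff_lt (Ioo_subset_Icc_self hs) (Ioo_subset_Icc_self p2)).1 (by rw [q2]; linarith)
    obtain ⟨i1, e1⟩ := integral_Lm hs p1.1.le le_rfl p1.2.le (fun h => by linarith [h.2])
    obtain ⟨i2, e2⟩ := integral_Lm hs p2.2.le p2.1.le le_rfl (fun h => by linarith [h.1])
    rw [integrableOn_Ioc_iff_integrableOn_Ioo, ← integrableOn_Ico_iff_integrableOn_Ioo] at i2
    rw [integral_Ioc_eq_integral_Ioo, ← integral_Ico_eq_integral_Ioo] at e2
    have hdis : Disjoint (Ioc 0 (Ph c (Th c s - ε))) (Ico (Ph c (Th c s + ε)) Real.pi) :=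
      Set.disjoint_left.2 fun t h h' => by linarith [h.2, h'.1]
    have hr : ∫ t in sE c s ε, Real.sin s / (Real.cos s - Real.cos t) =
        Mm c s (Ph c (Th c s - ε)) - Mm c s (Ph c (Th c s + ε)) := by
      rw [sE_eq hc h0 h1 h2, setIntegral_union hdis measurableSet_Ico i1 i2, e1, e2, Lm_zero, Lm_pi,
        Lm_eq hc hs p1 l1.ne, Lm_eq hc hs p2 l2.ne', q1, q2,
        show (Th c s - ε - Th c s) / 2 = -((Th c s + ε - Th c s) / 2) by ring, Real.sin_neg,
        Real.log_neg_eq_log]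
      ring
    have hir : IntegrableOn (fun t => Real.sin s / (Real.cos s - Real.cos t)) (sE c s ε) := by
      rw [sE_eq hc h0 h1 h2]; exact i1.union i2
    have hKK : EqOn (KK (circleMap 0 1 s)) (fun t => (-2 * Complex.I) *
        ((Real.sin s / (Real.cos s - Real.cos t) : ℝ) : ℂ)) (sE c s ε) := fun t ht =>
      KK_boundary (cos_ne_of_ne ht.1 hs (sE_ne h0 ht))
    constructor
    · rw [integrableOn_congr_fun hKK (measurableSet_sE _ _ _)]
      exact hir.ofReal.const_mul _
    · rw [setIntegral_congr_fun (measurableSet_sE _ _ _) hKK, integral_const_mul,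
        integral_complex_ofReal, hr]
  refine ⟨key.mono fun ε h => h.1, ?_⟩
  refine Tendsto.congr' (key.mono fun ε h => h.2.symm) ?_
  have h := ((hM.comp (hP.comp t1)).sub (hM.comp (hP.comp t2)))
  rw [sub_self] at h
  have h2 := ((Complex.continuous_ofReal.tendsto 0).comp h).const_mul (-2 * Complex.I)
  simpa using h2

/-! ### Limits of the truncated integrals -/

/-- The truncated integrals of the folded boundary kernel converge almost everywhere to
`2π (F - G)`, where `F` is the boundary function of `Hz G`. They are compared with the interior
integral `2π * Hz G ((1 - ε) e^{is})`, which tends to `2π F`. -/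
lemma lim_KK {c : ℝ} (hc : 0 < c) {G F : ℂ → ℂ} (hGm : Measurable G) (hG : Integrable G mC)
    (hs : ∀ t : ℝ, G (circleMap 0 1 (2 * Real.pi - t)) = G (circleMap 0 1 t))
    (hFm : Measurable F) (hF : Integrable F mC)
    (hFG : ∀ w, ‖w‖ < 1 → Hz G w = ∫ z, (pk w z : ℂ) * F z ∂mC) :
    ∀ᵐ s, s ∈ Ioo 0 Real.pi →
      (∀ᶠ ε in nhdsWithin 0 (Ioi 0),
        IntegrableOn (fun t => KK (circleMap 0 1 s) t * G (circleMap 0 1 t)) (sE c s ε)) ∧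
      Tendsto (fun ε => ∫ t in sE c s ε, KK (circleMap 0 1 s) t * G (circleMap 0 1 t))
        (nhdsWithin 0 (Ioi 0))
        (nhds (2 * Real.pi * (F (circleMap 0 1 s) - G (circleMap 0 1 s)))) := by
  set I := Ioo (0:ℝ) Real.pi with hI
  have hpi := Real.pi_pos
  set g : ℝ → ℂ := fun t => G (circleMap 0 1 t) with hg
  have hgm : Measurable g := hGm.comp measurable_circleMap'
  have hgI : IntegrableOn g I := (integrableOn_fold hs).1 ((integrable_mC hGm.stronglyMeasurable).1 hG)
  filter_upwards [pk_tendsto hFm hF, ae_lebPt ((integrable_indicator_iff measurableSet_Ioo).2 hgI)]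
    with s h1 h2 hsI
  have h1 := h1 ⟨hsI.1, by linarith [hsI.2]⟩
  obtain ⟨C, hC, hD⟩ := DD_bound hc hsI
  have h3 := tendsto_kernel measurableSet_Ioo (by simp) hgI hsI h2 hC hD
  obtain ⟨h4, h5⟩ := pv_zero hc hsI
  set ζ := circleMap 0 1 s with hζ
  have hev : Ioo (0:ℝ) 1 ∈ nhdsWithin (0:ℝ) (Ioi 0) := Ioo_mem_nhdsGT one_pos
  -- truncated integral = (kernel `DD` against the oscillation of `g` at `s`)
  -- + (`g s` times the truncated kernel minus its interior mass `2π`) + (interior integral)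
  have key : ∀ᶠ ε in nhdsWithin 0 (Ioi 0),
      IntegrableOn (fun t => KK ζ t * g t) (sE c s ε) ∧
      ∫ t in sE c s ε, KK ζ t * g t = (∫ t in I, DD c s ε t * (g t - g s)) +
        g s * ((∫ t in sE c s ε, KK ζ t) - 2 * Real.pi) +
        2 * Real.pi * ∫ z, (pk (((1 - ε : ℝ) : ℂ) * ζ) z : ℂ) * F z ∂mC := by
    filter_upwards [hev, hD] with ε hε hDε
    obtain ⟨e0, e1⟩ := hε
    set z := ((1 - ε : ℝ) : ℂ) * ζ with hz
    have hzn : ‖z‖ = 1 - ε := norm_smul_circleMap e1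
    have hz1 : ‖z‖ < 1 := by rw [hzn]; linarith
    have hms := measurableSet_sE c s ε
    have hIs : I ∩ sE c s ε = sE c s ε := inter_eq_right.2 (sE_subset _ _ _)
    have mD : Measurable (DD c s ε) := (measurable_KK.indicator hms).sub measurable_KK
    have bD : ∀ᵐ t ∂volume.restrict I, ‖DD c s ε t‖ ≤ C * (ε / ε ^ 2) := by
      filter_upwards [ae_restrict_mem measurableSet_Ioo] with t ht
      refine (hDε t ht).trans (mul_le_mul_of_nonneg_left ?_ hC)
      gcongr
      nlinarith [sq_nonneg |t - s|]
    have bK : ∀ᵐ t ∂volume.restrict I, ‖KK z t‖ ≤ 4 / (1 - (1 - ε)) :=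
      Eventually.of_forall fun t => norm_KK_le (by linarith) hzn.le t
    have iD : IntegrableOn (DD c s ε) I :=
      Integrable.of_bound mD.aestronglyMeasurable _ bD
    have iDg : IntegrableOn (fun t => DD c s ε t * g t) I :=
      Integrable.bdd_mul hgI mD.aestronglyMeasurable bD
    have iK : IntegrableOn (KK z) I :=
      Integrable.of_bound measurable_KK.aestronglyMeasurable _ bK
    have iKg : IntegrableOn (fun t => KK z t * g t) I :=
      Integrable.bdd_mul hgI measurable_KK.aestronglyMeasurable bK
    have f1 : (sE c s ε).indicator (fun t => KK ζ t * g t) =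
        fun t => DD c s ε t * g t + KK z t * g t := by
      ext t
      simp only [DD, ← hζ, ← hz]
      by_cases ht : t ∈ sE c s ε
      · simp only [indicator_of_mem ht]; ring
      · simp [ht]
    have f2 : (sE c s ε).indicator (fun t => KK ζ t) = fun t => DD c s ε t + KK z t := by
      ext t
      simp only [DD, ← hζ, ← hz]
      ring
    have g1 : ∫ t in sE c s ε, KK ζ t * g t =
        (∫ t in I, DD c s ε t * g t) + ∫ t in I, KK z t * g t := by
      conv_lhs => rw [← hIs]
      rw [← setIntegral_indicator hms, f1, integral_add iDg iKg]
    have g2 : ∫ t in sE c s ε, KK ζ t = (∫ t in I, DD c s ε t) + ∫ t in I, KK z t := by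
      conv_lhs => rw [← hIs]
      rw [← setIntegral_indicator hms, f2, integral_add iD iK]
    have g3 : ∫ t in I, DD c s ε t * (g t - g s) =
        (∫ t in I, DD c s ε t * g t) - (∫ t in I, DD c s ε t) * g s := by
      simp only [mul_sub]
      rw [integral_sub iDg (iD.mul_const _), integral_mul_const]
    constructor
    · have : IntegrableOn ((sE c s ε).indicator (fun t => KK ζ t * g t)) I := by
        rw [f1]; exact iDg.add iKg
      rw [IntegrableOn, integrable_indicator_iff hms, IntegrableOn,
        Measure.restrict_restrict hms, inter_comm, hIs] at this
      exact this
    · rw [g1, g2, g3, integral_KK hz1, Hz_fold hGm hG hs hz1, hFG z hz1]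
      ring
  refine ⟨key.mono fun ε h => h.1, ?_⟩
  refine Tendsto.congr' (key.mono fun ε h => h.2.symm) ?_
  have := (h3.add ((h5.sub_const (2 * (Real.pi : ℂ))).const_mul (g s))).add
    (h1.const_mul (2 * (Real.pi : ℂ)))
  convert this using 2
  ring

/-! ### From the circle to the arc -/

/-- The image of `sE` under `Th c` is the arc with the interval around `Th c s` removed. -/
lemma image_sE {c : ℝ} (hc : 0 < c) (s ε : ℝ) : Th c '' sE c s ε =
    Ioo (Real.pi - 2 * Real.arctan c) (Real.pi + 2 * Real.arctan c) \
      Ioo (Th c s - ε) (Th c s + ε) := by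
  have key : ∀ θ : ℝ, ε ≤ |θ - Th c s| ↔ θ ∉ Ioo (Th c s - ε) (Th c s + ε) := by
    intro θ
    rw [← not_lt, abs_lt, mem_Ioo]
    refine not_congr ⟨fun h => ⟨by linarith [h.1], by linarith [h.2]⟩,
      fun h => ⟨by linarith [h.1], by linarith [h.2]⟩⟩
  ext θ
  constructor
  · rintro ⟨t, ht, rfl⟩
    exact ⟨Th_mem hc ht.1, (key _).1 ht.2⟩
  · rintro ⟨h1, h2⟩
    refine ⟨Ph c θ, ⟨Ph_mem hc h1, ?_⟩, Th_Ph hc h1⟩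
    rw [Th_Ph hc h1]
    exact (key _).2 h2

/-- The truncated integral on the arc expressed through the boundary kernel of the disc. -/
lemma trunc_eq {α c : ℝ} (hc : 0 < c) (hα : α = Real.pi - 2 * Real.arctan c) {u : ℝ → ℂ} {s ε : ℝ}
    (hs : s ∈ Ioo 0 Real.pi) (hε : 0 < ε)
    (h1 : IntegrableOn (fun t => u (Th c t)) (Ioo 0 Real.pi))
    (h2 : IntegrableOn (fun t => KK (circleMap 0 1 s) t * u (Th c t)) (sE c s ε)) :
    ∫ θ in Ioo α (2 * Real.pi - α) \ Ioo (Th c s - ε) (Th c s + ε),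
      u θ * ((wAC α θ : ℝ) : ℂ) /
        (Complex.exp (Th c s * Complex.I) - Complex.exp (θ * Complex.I)) =
    ((c * Real.cos s : ℝ) - Complex.I) / (2 * Complex.I) * ((∫ t in sE c s ε, u (Th c t)) +
      ((c * Real.cos s : ℝ) - Complex.I) / (2 * Complex.I * (c * Real.sin s : ℝ)) *
        ∫ t in sE c s ε, KK (circleMap 0 1 s) t * u (Th c t)) := by
  have e : Ioo α (2 * Real.pi - α) =
      Ioo (Real.pi - 2 * Real.arctan c) (Real.pi + 2 * Real.arctan c) := by
    rw [hα]; congr 1; ring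
  have hw : ∀ θ : ℝ, u θ * ((wAC α θ : ℝ) : ℂ) /
        (Complex.exp (Th c s * Complex.I) - Complex.exp (θ * Complex.I)) =
      wAC α θ • (u θ / (Complex.exp (Th c s * Complex.I) - Complex.exp (θ * Complex.I))) := by
    intro θ; rw [Complex.real_smul]; ring
  simp only [hw]
  rw [e, ← image_sE hc, integral_Th hc hα (measurableSet_sE _ _ _) (sE_subset _ _ _),
    ← integral_const_mul, ← integral_add (h1.mono_set (sE_subset _ _ _)) (h2.const_mul _),
    ← integral_const_mul]
  refine setIntegral_congr_fun (measurableSet_sE _ _ _) fun t ht => ?_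
  have hne := cos_ne_of_ne ht.1 hs (sE_ne hε ht)
  have hne' : c * Real.cos t ≠ c * Real.cos s := fun h => hne (mul_left_cancel₀ hc.ne' h)
  have hsin : 0 < Real.sin s := Real.sin_pos_of_mem_Ioo hs
  rw [div_eq_mul_one_div, inv_exp_sub hne', KK_boundary hne]
  have k1 : ((c : ℝ) : ℂ) ≠ 0 := by exact_mod_cast hc.ne'
  have k2 : ((Real.sin s : ℝ) : ℂ) ≠ 0 := by exact_mod_cast hsin.ne'
  have k3 : ((Real.cos t : ℝ) : ℂ) - ((Real.cos s : ℝ) : ℂ) ≠ 0 := by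
    rw [sub_ne_zero]; exact_mod_cast hne
  have k4 : ((Real.cos s : ℝ) : ℂ) - ((Real.cos t : ℝ) : ℂ) ≠ 0 := by
    rwa [← neg_ne_zero, neg_sub]
  have k5 := Complex.I_ne_zero
  have q : (-2 * Complex.I * ((Real.sin s / (Real.cos s - Real.cos t) : ℝ) : ℂ)) /
      (2 * Complex.I * (c * Real.sin s : ℝ)) = 1 / ((c * Real.cos t - c * Real.cos s : ℝ) : ℂ) := by
    rw [Complex.ofReal_div, Complex.ofReal_sub, Complex.ofReal_mul, Complex.ofReal_sub,
      Complex.ofReal_mul, Complex.ofReal_mul, ← mul_sub]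
    rw [← neg_sub ((Real.cos t : ℝ) : ℂ)]
    field_simp
  linear_combination (-((c * Real.cos s : ℝ) - Complex.I) / (2 * Complex.I) * u (Th c t) *
    ((c * Real.cos s : ℝ) - Complex.I)) * q

/-- Without a singular kernel the truncation disappears in the limit. -/
lemma tendsto_sE {c s : ℝ} (hc : 0 < c) (hs : s ∈ Ioo 0 Real.pi) {g : ℝ → ℂ}
    (hg : IntegrableOn g (Ioo 0 Real.pi)) :
    Tendsto (fun ε => ∫ t in sE c s ε, g t) (nhdsWithin 0 (Ioi 0))
      (nhds (∫ t in Ioo 0 Real.pi, g t)) := by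
  have e : ∀ ε, ∫ t in sE c s ε, g t = ∫ t in Ioo 0 Real.pi, (sE c s ε).indicator g t := by
    intro ε
    rw [setIntegral_indicator (measurableSet_sE _ _ _), inter_eq_right.2 (sE_subset _ _ _)]
  simp only [e]
  refine tendsto_integral_filter_of_dominated_convergence (fun t => ‖g t‖) ?_ ?_ hg.norm ?_
  · exact Eventually.of_forall fun ε => hg.aestronglyMeasurable.indicator (measurableSet_sE _ _ _)
  · exact Eventually.of_forall fun ε => Eventually.of_forall fun t => norm_indicator_le_norm_self _ _
  · have hne : ∀ᵐ t ∂volume.restrict (Ioo 0 Real.pi), t ≠ s :=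
      ae_restrict_of_ae (by simp [ae_iff])
    filter_upwards [ae_restrict_mem measurableSet_Ioo, hne] with t ht hts
    have hpos : 0 < |Th c t - Th c s| := by
      rw [abs_pos, sub_ne_zero]
      exact fun h => hts (injOn_Th hc ht hs h)
    refine Tendsto.congr' ?_ tendsto_const_nhds
    filter_upwards [Ioo_mem_nhdsGT hpos] with ε hε
    rw [indicator_of_mem]
    exact ⟨ht, hε.2.le⟩

/-- Almost-everywhere statements pass from `(0, π)` to the arc, because the differentiable map
`Th c` sends null sets to null sets. -/
lemma ae_transfer {c : ℝ} (hc : 0 < c) {P : ℝ → Prop}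
    (h : ∀ᵐ s, s ∈ Ioo 0 Real.pi → P (Th c s)) :
    ∀ᵐ τ ∂volume.restrict (Ioo (Real.pi - 2 * Real.arctan c) (Real.pi + 2 * Real.arctan c)),
      P τ := by
  rw [ae_restrict_iff' measurableSet_Ioo]
  rw [ae_iff] at h ⊢
  refine measure_mono_null ?_ (addHaar_image_eq_zero_of_differentiableOn_of_addHaar_eq_zero volume
    (f := Th c) (fun t _ => (hasDerivAt_Th c t).differentiableAt.differentiableWithinAt) h)
  intro τ hτ
  simp only [mem_ofPred_eq, Classical.not_imp] at hτ ⊢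
  exact ⟨Ph c τ, by
    simp only [mem_ofPred_eq]
    rw [Th_Ph hc hτ.1]; exact ⟨Ph_mem hc hτ.1, hτ.2⟩, Th_Ph hc hτ.1⟩

/-- An inequality of `L^p` norms rewritten for integrals of `p`-th powers. -/
lemma lp_compare {p : ℝ} (hp : 1 < p) {u v : ℂ → ℂ} (hu : MemLp u (ENNReal.ofReal p) mC)
    (hv : MemLp v (ENNReal.ofReal p) mC) {K : NNReal}
    (h : eLpNorm u (ENNReal.ofReal p) mC ≤ K * eLpNorm v (ENNReal.ofReal p) mC) :
    ∫ z, ‖u z‖ ^ p ∂mC ≤ (K : ℝ) ^ p * ∫ z, ‖v z‖ ^ p ∂mC := by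
  have p0 : 0 < p := by linarith
  have n1 : ENNReal.ofReal p ≠ 0 := by simpa using p0
  rw [hu.eLpNorm_eq_integral_rpow_norm n1 ENNReal.ofReal_ne_top,
    hv.eLpNorm_eq_integral_rpow_norm n1 ENNReal.ofReal_ne_top, ENNReal.toReal_ofReal p0.le] at h
  have i1 : 0 ≤ ∫ z, ‖u z‖ ^ p ∂mC := integral_nonneg fun z => by positivity
  have i2 : 0 ≤ ∫ z, ‖v z‖ ^ p ∂mC := integral_nonneg fun z => by positivity
  rw [← ENNReal.ofReal_coe_nnreal, ← ENNReal.ofReal_mul (by positivity),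
    ENNReal.ofReal_le_ofReal_iff (by positivity)] at h
  have hroot := Real.rpow_le_rpow (by positivity) h p0.le
  rw [Real.mul_rpow (by positivity) (by positivity), ← Real.rpow_mul i1, ← Real.rpow_mul i2,
    inv_mul_cancel₀ p0.ne', Real.rpow_one, Real.rpow_one] at hroot
  exact hroot

/-! ### Norm estimates -/

/-- The limit at `Th c s` of the truncated integrals, including the factor `1 / (2π)`, in terms of
`J = ∫ G` over `(0, π)`, the data `G` and the boundary function `F` of `Hz G`. -/
noncomputable def HH (c : ℝ) (J : ℂ) (F G : ℂ → ℂ) (s : ℝ) : ℂ :=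
  ((1 / (2 * Real.pi) : ℝ) : ℂ) *
    (((c * Real.cos s : ℝ) - Complex.I) / (2 * Complex.I) * (J +
      ((c * Real.cos s : ℝ) - Complex.I) / (2 * Complex.I * (c * Real.sin s : ℝ)) *
        (2 * Real.pi * (F (circleMap 0 1 s) - G (circleMap 0 1 s)))))

lemma measurable_HH {c : ℝ} {J : ℂ} {F G : ℂ → ℂ} (hF : Measurable F) (hG : Measurable G) :
    Measurable (HH c J F G) := by
  have h1 : Measurable fun s => F (circleMap 0 1 s) := hF.comp measurable_circleMap'
  have h2 : Measurable fun s => G (circleMap 0 1 s) := hG.comp measurable_circleMap'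
  unfold HH
  fun_prop

/-- The gap weight absorbs the factor `1 / sin s` in `HH`. -/
lemma HH_bound {α c : ℝ} (hc : 0 < c) (hα : α = Real.pi - 2 * Real.arctan c) {J : ℂ} {F G : ℂ → ℂ}
    {s : ℝ} (hs : s ∈ Ioo 0 Real.pi) :
    ‖HH c J F G s‖ * √(Real.cos (α / 2) ^ 2 - Real.cos (Th c s / 2) ^ 2) ≤
      (1 + (1 + c)) * (1 + c) * (‖J‖ + ‖F (circleMap 0 1 s)‖ + ‖G (circleMap 0 1 s)‖) := by
  have hpi := Real.pi_gt_three
  have hsin : 0 < Real.sin s := Real.sin_pos_of_mem_Ioo hs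
  set v := √(Real.cos (α / 2) ^ 2 - Real.cos (Th c s / 2) ^ 2) with hv
  have hv0 : 0 ≤ v := Real.sqrt_nonneg _
  have hv1 : v ≤ 1 := by
    rw [hv]
    refine Real.sqrt_le_iff.2 ⟨zero_le_one, ?_⟩
    nlinarith [Real.cos_sq_le_one (α / 2), sq_nonneg (Real.cos (Th c s / 2))]
  have hv2 : v ≤ c * Real.sin s := by
    rw [hv, gap_Th hα]
    refine Real.sqrt_le_iff.2 ⟨by positivity, div_le_self (by positivity) ?_⟩
    nlinarith [sq_nonneg (c * Real.cos s), sq_nonneg c,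
      mul_nonneg (sq_nonneg (c * Real.cos s)) (sq_nonneg c)]
  have hb : ‖((c * Real.cos s : ℝ) : ℂ) - Complex.I‖ ≤ 1 + c := by
    refine (norm_sub_le _ _).trans ?_
    rw [Complex.norm_I, Complex.norm_real, Real.norm_eq_abs, abs_mul, abs_of_pos hc]
    nlinarith [Real.abs_cos_le_one s]
  set b := ((c * Real.cos s : ℝ) : ℂ) - Complex.I
  set x := F (circleMap 0 1 s)
  set y := G (circleMap 0 1 s)
  have e : ‖HH c J F G s‖ ≤ 1 / (2 * Real.pi) * ((1 + c) / 2 * (‖J‖ +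
      (1 + c) / (2 * (c * Real.sin s)) * (2 * Real.pi * (‖x‖ + ‖y‖)))) := by
    have n0 : ‖((1 / (2 * Real.pi) : ℝ) : ℂ)‖ = 1 / (2 * Real.pi) := by
      rw [Complex.norm_real, Real.norm_of_nonneg (by positivity)]
    have n1 : ‖b / (2 * Complex.I)‖ ≤ (1 + c) / 2 := by
      rw [norm_div, norm_mul, Complex.norm_I, Complex.norm_ofNat, mul_one]; gcongr
    have n2 : ‖b / (2 * Complex.I * (c * Real.sin s : ℝ))‖ ≤ (1 + c) / (2 * (c * Real.sin s)) := by
      rw [norm_div, norm_mul, norm_mul, Complex.norm_I, Complex.norm_ofNat, mul_one,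
        Complex.norm_real, Real.norm_of_nonneg (by positivity)]
      gcongr
    have n3 : ‖(2 * Real.pi * (x - y) : ℂ)‖ ≤ 2 * Real.pi * (‖x‖ + ‖y‖) := by
      rw [norm_mul, norm_mul, Complex.norm_ofNat, Complex.norm_real, Real.norm_of_nonneg Real.pi_pos.le]
      gcongr; exact norm_sub_le _ _
    rw [HH, norm_mul, norm_mul, n0]
    refine mul_le_mul_of_nonneg_left (mul_le_mul n1 ?_ (norm_nonneg _) (by positivity)) (by positivity)
    refine (norm_add_le _ _).trans (add_le_add le_rfl ?_)
    rw [norm_mul]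
    exact mul_le_mul n2 n3 (norm_nonneg _) (by positivity)
  calc _ ≤ _ := mul_le_mul_of_nonneg_right e hv0
    _ = 1 / (2 * Real.pi) * ((1 + c) / 2) * (‖J‖ * v) +
        (1 + c) / 2 * ((1 + c) / 2) * (‖x‖ + ‖y‖) * (v / (c * Real.sin s)) := by
        field_simp
    _ ≤ 1 * (1 + c) * (‖J‖ * 1) + (1 + c) * (1 + c) * (‖x‖ + ‖y‖) * 1 := by
        have : v / (c * Real.sin s) ≤ 1 := (div_le_one (by positivity)).2 hv2
        have : 1 / (2 * Real.pi) ≤ 1 := by rw [div_le_one (by positivity)]; linarith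
        gcongr <;> linarith
    _ ≤ _ := by
        have h1 := norm_nonneg J
        have h2 := norm_nonneg x
        have h3 := norm_nonneg y
        have : 0 ≤ (1 + c) * (1 + c) * ‖J‖ := by positivity
        have : 0 ≤ (1 + c) * ‖x‖ := by positivity
        have : 0 ≤ (1 + c) * ‖y‖ := by positivity
        nlinarith

/-- The `L^p` bound on the circle, folded onto `(0, π)`: the boundary function `F` of `Hz G`, the
data `G` and its mean are jointly controlled by `G`. -/
lemma exists_circle_const {p : ℝ} (hp : 1 < p) : ∃ K : NNReal, ∀ G : ℂ → ℂ, Measurable G →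
    MemLp G (ENNReal.ofReal p) mC →
    (∀ t : ℝ, G (circleMap 0 1 (2 * Real.pi - t)) = G (circleMap 0 1 t)) →
    ∃ F : ℂ → ℂ, Measurable F ∧ Integrable F mC ∧
      (∀ w, ‖w‖ < 1 → Hz G w = ∫ z, (pk w z : ℂ) * F z ∂mC) ∧
      IntegrableOn (fun t => (‖∫ t in Ioo 0 Real.pi, G (circleMap 0 1 t)‖ + ‖F (circleMap 0 1 t)‖ +
        ‖G (circleMap 0 1 t)‖) ^ p) (Ioo 0 Real.pi) ∧
      ∫ t in Ioo 0 Real.pi, (‖∫ t in Ioo 0 Real.pi, G (circleMap 0 1 t)‖ + ‖F (circleMap 0 1 t)‖ +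
        ‖G (circleMap 0 1 t)‖) ^ p ≤
      2 * (K : ℝ) ^ p * ∫ t in Ioo 0 Real.pi, ‖G (circleMap 0 1 t)‖ ^ p := by
  obtain ⟨A, hA⟩ := exists_boundary hp
  have hpi := Real.pi_pos
  have p0 : 0 < p := by linarith
  refine ⟨Real.toNNReal Real.pi + A + 1, fun G hGm hG hs => ?_⟩
  obtain ⟨F, hFm, hF, hFA, hFG⟩ := hA G hGm hG
  refine ⟨F, hFm, hF, hFG, ?_⟩
  have hGi := memLp_integrable hp.le hG
  set J := ∫ t in Ioo 0 Real.pi, G (circleMap 0 1 t) with hJ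
  set q := ENNReal.ofReal p with hq
  have hq1 : 1 ≤ q := by rw [hq]; simpa using hp.le
  have hq0 : q ≠ 0 := (zero_lt_one.trans_le hq1).ne'
  have hFq : MemLp F q mC :=
    ⟨hFm.aestronglyMeasurable, hFA.trans_lt (ENNReal.mul_lt_top (by simp) hG.2)⟩
  have hJ' : J = Real.pi * ∫ z, G z ∂mC := by
    have i1 := (integrable_mC hGm.stronglyMeasurable).1 hGi
    have := integral_fold i1
    simp only [hs, ← two_mul] at this
    rw [integral_mC hGm.aestronglyMeasurable, this, integral_const_mul, Complex.real_smul, ← hJ]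
    push_cast
    have : (Real.pi : ℂ) ≠ 0 := by exact_mod_cast hpi.ne'
    field_simp
  have hJn : ‖J‖ₑ ≤ ENNReal.ofReal Real.pi * eLpNorm G q mC := by
    rw [hJ', enorm_mul]
    have h1 : ‖(Real.pi : ℂ)‖ₑ = ENNReal.ofReal Real.pi := by
      rw [← ofReal_norm, Complex.norm_real, Real.norm_of_nonneg hpi.le]
    rw [h1]
    gcongr
    calc ‖∫ z, G z ∂mC‖ₑ ≤ ∫⁻ z, ‖G z‖ₑ ∂mC := enorm_integral_le_lintegral_enorm _
      _ = eLpNorm G 1 mC := by rw [eLpNorm_one_eq_lintegral_enorm]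
      _ ≤ _ := eLpNorm_le_eLpNorm_of_exponent_le hq1 hGm.aestronglyMeasurable
  set N : ℂ → ℂ := fun z => ((‖J‖ + ‖F z‖ + ‖G z‖ : ℝ) : ℂ) with hN
  have hNn : ∀ z, ‖N z‖ = ‖J‖ + ‖F z‖ + ‖G z‖ := fun z => by
    rw [hN, Complex.norm_real, Real.norm_of_nonneg (by positivity)]
  have hNm : Measurable N := by
    have : Measurable fun z => ‖J‖ + ‖F z‖ + ‖G z‖ := (hFm.norm.const_add _).add hGm.norm
    exact Complex.measurable_ofReal.comp this
  have hN1 : MemLp (fun z => ‖J‖ + ‖F z‖ + ‖G z‖) q mC :=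
    ((memLp_const ‖J‖).add hFq.norm).add hG.norm
  have hNq : MemLp N q mC := hN1.ofReal
  have hNe : eLpNorm N q mC ≤ ((Real.toNNReal Real.pi + A + 1 : NNReal) : ENNReal) *
      eLpNorm G q mC := by
    have h0 : eLpNorm N q mC = eLpNorm (fun z => ‖J‖ + ‖F z‖ + ‖G z‖) q mC := by
      refine eLpNorm_congr_norm_ae (Eventually.of_forall fun z => ?_)
      rw [hNn, Real.norm_of_nonneg (by positivity)]
    have a1 : AEStronglyMeasurable (fun _ : ℂ => ‖J‖) mC := aestronglyMeasurable_const
    have a2 : AEStronglyMeasurable (fun z : ℂ => ‖F z‖) mC := hFm.norm.aestronglyMeasurable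
    have a3 : AEStronglyMeasurable (fun z : ℂ => ‖G z‖) mC := hGm.norm.aestronglyMeasurable
    have h1 := eLpNorm_add_le (a1.add a2) a3 hq1
    have h2 := eLpNorm_add_le a1 a2 hq1
    have h3 : eLpNorm (fun _ : ℂ => ‖J‖) q mC = ‖J‖ₑ := by
      rw [eLpNorm_const _ hq0 (NeZero.ne _)]; simp
    rw [eLpNorm_norm G] at h1
    rw [eLpNorm_norm F, h3] at h2
    rw [h0]
    calc _ ≤ _ := h1
      _ ≤ (ENNReal.ofReal Real.pi * eLpNorm G q mC + A * eLpNorm G q mC) + eLpNorm G q mC := by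
          gcongr
          exact h2.trans (add_le_add hJn hFA)
      _ = _ := by
          push_cast
          rw [add_mul, add_mul, one_mul]; rfl
  have hcmp := lp_compare hp hNq hG hNe
  have mN : Measurable fun z => ‖N z‖ ^ p := hNm.norm.pow_const p
  have mG : Measurable fun z => ‖G z‖ ^ p := hGm.norm.pow_const p
  have iN : Integrable (fun z => ‖N z‖ ^ p) mC := by
    have := hNq.integrable_norm_rpow hq0 ENNReal.ofReal_ne_top
    rwa [hq, ENNReal.toReal_ofReal p0.le] at this
  have iG : Integrable (fun z => ‖G z‖ ^ p) mC := by
    have := hG.integrable_norm_rpow hq0 ENNReal.ofReal_ne_top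
    rwa [hq, ENNReal.toReal_ofReal p0.le] at this
  have iN' := (integrable_mC mN.stronglyMeasurable).1 iN
  have iG' := (integrable_mC mG.stronglyMeasurable).1 iG
  rw [integral_mC mN.aestronglyMeasurable, integral_mC mG.aestronglyMeasurable,
    integral_fold iG'] at hcmp
  simp only [hs, ← two_mul, smul_eq_mul] at hcmp
  rw [integral_const_mul] at hcmp
  simp only [hNn] at hcmp iN'
  have hsub : Ioo 0 Real.pi ⊆ Ioc 0 (2 * Real.pi) := fun t ht => ⟨ht.1, by linarith [ht.2]⟩
  refine ⟨iN'.mono_set hsub, ?_⟩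
  have hle := setIntegral_mono_set iN' (Eventually.of_forall fun t => by positivity)
    hsub.eventuallyLE
  refine hle.trans ?_
  have h2 : (0:ℝ) < 2 * Real.pi := by positivity
  have h3 := mul_le_mul_of_nonneg_left hcmp h2.le
  rw [← mul_assoc, mul_inv_cancel₀ h2.ne', one_mul] at h3
  refine h3.trans (le_of_eq ?_)
  field_simp

/-! ### Conclusion -/

theorem stmt4 (α : ℝ) (hα : α ∈ Set.Ioo 0 Real.pi) (p : ℝ) (hp : 1 < p) :
    ∃ C > (0 : ℝ), ∀ f : ℂ → ℂ,
      (Measurable fun θ : ℝ => f (Complex.exp (θ * Complex.I))) →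
      IntegrableOn (fun θ : ℝ => ‖f (Complex.exp (θ * Complex.I))‖ ^ p * wAC α θ)
        (Set.Ioo α (2 * Real.pi - α)) →
      ∃ H : ℝ → ℂ, Measurable H ∧
        (∀ᵐ τ ∂(volume.restrict (Set.Ioo α (2 * Real.pi - α))),
          Tendsto (fun ε : ℝ =>
              ((1 / (2 * Real.pi) : ℝ) : ℂ) *
                ∫ θ in Set.Ioo α (2 * Real.pi - α) \ Set.Ioo (τ - ε) (τ + ε),
                  f (Complex.exp (θ * Complex.I)) * ((wAC α θ : ℝ) : ℂ) /
                    (Complex.exp (τ * Complex.I) - Complex.exp (θ * Complex.I)))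
            (nhdsWithin 0 (Set.Ioi 0)) (nhds (H τ))) ∧
        ∫ τ in Set.Ioo α (2 * Real.pi - α),
            ‖H τ‖ ^ p * (Real.cos (α / 2) ^ 2 - Real.cos (τ / 2) ^ 2) ^ (p / 2) * wAC α τ ≤
          C * ∫ τ in Set.Ioo α (2 * Real.pi - α),
            ‖f (Complex.exp (τ * Complex.I))‖ ^ p * wAC α τ := by
  have hpi := Real.pi_pos
  have p0 : 0 < p := by linarith
  obtain ⟨K, hK⟩ := exists_circle_const hp
  -- this is `cot (α / 2)`
  set c := Real.tan (Real.pi / 2 - α / 2) with hcdef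
  have hc : 0 < c := Real.tan_pos_of_pos_of_lt_pi_div_two (by linarith [hα.2]) (by linarith [hα.1])
  have hαc : α = Real.pi - 2 * Real.arctan c := by
    rw [hcdef, Real.arctan_tan (by linarith [hα.2]) (by linarith [hα.1])]; ring
  have harc : Ioo α (2 * Real.pi - α) = Th c '' Ioo 0 Real.pi := by
    rw [image_Th hc]
    congr 1
    linarith
  have harc' : Ioo α (2 * Real.pi - α) =
      Ioo (Real.pi - 2 * Real.arctan c) (Real.pi + 2 * Real.arctan c) := by
    rw [harc, image_Th hc]
  set A := (1 + (1 + c)) * (1 + c) with hA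
  have hA0 : 0 < A := by positivity
  -- the summand `1` only ensures positivity
  refine ⟨A ^ p * (2 * (K : ℝ) ^ p) + 1, by positivity, fun f hfm hf => ?_⟩
  set u : ℝ → ℂ := fun θ => f (Complex.exp (θ * Complex.I)) with hu
  -- `u ∘ Th c`, transplanted to the circle through the real part, is symmetric under conjugation
  set G : ℂ → ℂ := fun z => u (Real.pi - 2 * Real.arctan (c * z.re)) with hG
  have hGu : ∀ t : ℝ, G (circleMap 0 1 t) = u (Th c t) := fun t => by
    simp only [hG, circleMap_re, Th]
  have hGm : Measurable G := by
    refine hfm.comp (measurable_const.sub (measurable_const.mul ?_))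
    exact Real.measurable_arctan.comp (Complex.measurable_re.const_mul c)
  have hGs : ∀ t : ℝ, G (circleMap 0 1 (2 * Real.pi - t)) = G (circleMap 0 1 t) := fun t => by
    simp only [hG, circleMap_re, Real.cos_two_pi_sub]
  have hf' : IntegrableOn (fun t => ‖u (Th c t)‖ ^ p) (Ioo 0 Real.pi) := by
    rw [harc] at hf
    refine (integrableOn_Th hc hαc measurableSet_Ioo Subset.rfl (fun θ => ‖u θ‖ ^ p)).1 ?_
    refine hf.congr_fun_ae (Eventually.of_forall fun θ => ?_)
    exact mul_comm _ _
  have hRHS : ∫ τ in Ioo α (2 * Real.pi - α), ‖u τ‖ ^ p * wAC α τ =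
      ∫ t in Ioo 0 Real.pi, ‖u (Th c t)‖ ^ p := by
    rw [harc, ← integral_Th hc hαc measurableSet_Ioo Subset.rfl (fun θ => ‖u θ‖ ^ p)]
    simp only [smul_eq_mul, mul_comm]
  have hGq : MemLp G (ENNReal.ofReal p) mC := by
    have mG : Measurable fun z => ‖G z‖ ^ p := hGm.norm.pow_const p
    have i1 : IntegrableOn (fun t => ‖G (circleMap 0 1 t)‖ ^ p) (Ioc 0 (2 * Real.pi)) := by
      refine (integrableOn_fold fun t => by rw [hGs]).2 ?_
      simpa only [hGu] using hf'
    have i2 := (integrable_mC mG.stronglyMeasurable).2 i1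
    have := integrable_norm_rpow_iff (μ := mC) (p := ENNReal.ofReal p)
      hGm.aestronglyMeasurable (by simpa using p0) ENNReal.ofReal_ne_top
    rw [ENNReal.toReal_ofReal p0.le] at this
    exact this.1 i2
  obtain ⟨F, hFm, hF, hFG, hN, hNle⟩ := hK G hGm hGq hGs
  have hGi := memLp_integrable hp.le hGq
  set J := ∫ t in Ioo 0 Real.pi, G (circleMap 0 1 t) with hJ
  have huTh : IntegrableOn (fun t => u (Th c t)) (Ioo 0 Real.pi) := by
    have h1 := (integrable_mC hGm.stronglyMeasurable).1 hGi
    have := (integrableOn_fold fun t => hGs t).1 h1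
    simpa only [hGu] using this
  refine ⟨fun τ => HH c J F G (Ph c τ), (measurable_HH hFm hGm).comp (measurable_Ph c), ?_, ?_⟩
  · have key := lim_KK hc hGm hGi hGs hFm hF hFG
    rw [harc']
    refine ae_transfer hc ?_
    filter_upwards [key] with s hs hs0
    obtain ⟨hinte, hlim⟩ := hs hs0
    rw [Ph_Th hc (Ioo_subset_Icc_self hs0), ← harc']
    simp only [hGu] at hinte hlim
    have hJ' := tendsto_sE hc hs0 huTh
    refine Tendsto.const_mul _ (Tendsto.congr' (f₁ := fun ε =>
      ((c * Real.cos s : ℝ) - Complex.I) / (2 * Complex.I) * ((∫ t in sE c s ε, u (Th c t)) +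
        ((c * Real.cos s : ℝ) - Complex.I) / (2 * Complex.I * (c * Real.sin s : ℝ)) *
          ∫ t in sE c s ε, KK (circleMap 0 1 s) t * u (Th c t))) ?_ ?_)
    · filter_upwards [hinte, self_mem_nhdsWithin] with ε h1 h2
      exact (trunc_eq hc hαc hs0 h2 huTh h1).symm
    have hJe : J = ∫ t in Ioo 0 Real.pi, u (Th c t) := by rw [hJ]; simp only [hGu]
    rw [hJe, hGu]
    exact (hJ'.add (hlim.const_mul _)).const_mul _
  · have hL : ∫ τ in Ioo α (2 * Real.pi - α), ‖HH c J F G (Ph c τ)‖ ^ p *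
        (Real.cos (α / 2) ^ 2 - Real.cos (τ / 2) ^ 2) ^ (p / 2) * wAC α τ =
        ∫ t in Ioo 0 Real.pi, ‖HH c J F G (Ph c (Th c t))‖ ^ p *
        (Real.cos (α / 2) ^ 2 - Real.cos (Th c t / 2) ^ 2) ^ (p / 2) := by
      rw [harc, ← integral_Th hc hαc measurableSet_Ioo Subset.rfl (fun τ => ‖HH c J F G (Ph c τ)‖ ^ p *
        (Real.cos (α / 2) ^ 2 - Real.cos (τ / 2) ^ 2) ^ (p / 2))]
      refine integral_congr_ae (Eventually.of_forall fun τ => ?_)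
      exact mul_comm _ _
    rw [hL, hRHS]
    simp only [hGu] at hNle hN
    set B := ∫ t in Ioo 0 Real.pi, ‖u (Th c t)‖ ^ p with hB
    have hB0 : 0 ≤ B := integral_nonneg fun t => by positivity
    have step : ∀ t ∈ Ioo 0 Real.pi, ‖HH c J F G (Ph c (Th c t))‖ ^ p *
        (Real.cos (α / 2) ^ 2 - Real.cos (Th c t / 2) ^ 2) ^ (p / 2) ≤
        A ^ p * (‖J‖ + ‖F (circleMap 0 1 t)‖ + ‖u (Th c t)‖) ^ p := by
      intro t ht
      have hb := HH_bound hc hαc (J := J) (F := F) (G := G) ht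
      rw [hGu] at hb
      have hg : 0 ≤ Real.cos (α / 2) ^ 2 - Real.cos (Th c t / 2) ^ 2 := by
        rw [gap_Th hαc]; positivity
      have hsq : (Real.cos (α / 2) ^ 2 - Real.cos (Th c t / 2) ^ 2) ^ (p / 2) =
          √(Real.cos (α / 2) ^ 2 - Real.cos (Th c t / 2) ^ 2) ^ p := by
        rw [Real.sqrt_eq_rpow, ← Real.rpow_mul hg]; congr 1; ring
      rw [Ph_Th hc (Ioo_subset_Icc_self ht), hsq,
        ← Real.mul_rpow (norm_nonneg _) (Real.sqrt_nonneg _),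
        ← Real.mul_rpow hA0.le (by positivity)]
      exact Real.rpow_le_rpow (by positivity) hb p0.le
    calc _ ≤ ∫ t in Ioo 0 Real.pi, A ^ p * (‖J‖ + ‖F (circleMap 0 1 t)‖ + ‖u (Th c t)‖) ^ p := by
          refine integral_mono_of_nonneg ?_ (hN.const_mul _) ?_
          · refine Eventually.of_forall fun t => mul_nonneg (by positivity) (Real.rpow_nonneg ?_ _)
            rw [gap_Th hαc]; positivity
          · exact (ae_restrict_iff' measurableSet_Ioo).2 (Eventually.of_forall step)
      _ = A ^ p * ∫ t in Ioo 0 Real.pi, (‖J‖ + ‖F (circleMap 0 1 t)‖ + ‖u (Th c t)‖) ^ p :=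
          integral_const_mul _ _
      _ ≤ A ^ p * (2 * (K : ℝ) ^ p * B) := by gcongr
      _ ≤ _ := by rw [add_mul, one_mul, mul_assoc]; linarith
end

section
/- Let β = i·tan((π − α)/4) and h(v) = (v − β)(βv − 1) / ((v + β)(βv + 1)). Then h is a holomorphic bijection from 𝔻 ∖ {−β} onto ℂ ∖ cl(Δ_α), where 𝔻 = {v ∈ ℂ : |v| < 1} and cl(Δ_α) = {e^{iθ} : α ≤ θ ≤ 2π − α} is the closed arc; in particular h is injective on 𝔻 ∖ {−β} and its range there is exactly ℂ ∖ cl(Δ_α). (Note −β ∈ 𝔻 is the unique pole of h in the disk.) -/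
/-!
The map `h` satisfies `h v = h v⁻¹`, so it factors through the Joukowski variable `w = v + v⁻¹` as a
Möbius map. Since `tan ((π - α) / 4)` is a half-angle tangent, clearing denominators turns `h v = z`
into the polynomial relation `arcRel α v z`, namely
`i cos (α/2) (1 - z) (v² + 1) = 2 sin (α/2) (1 + z) v` (`arcRel_iff`).

For fixed `z` the two solutions `v` are inverse to each other (`arcRel_unique`), and on the unit
circle `|v| = 1`, `z = e^{iθ}`, the relation reads `cos (α/2) sin (θ/2) Re v = sin (α/2) cos (θ/2)`,
which is solvable with `|Re v| ≤ 1` exactly when `z` lies on the closed arc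
(`mem_arc_of_arcRel`, `exists_arcRel_of_mem_arc`). So a point off the arc has exactly one preimage
inside the disk, and a point on the arc has its preimages on the circle, hence none inside.
-/

open MeasureTheory Filter Set

/-- The equation `h v = z` with denominators cleared, written in terms of the half angle `α / 2`. -/
def arcRel (α : ℝ) (v z : ℂ) : Prop :=
  Complex.I * Real.cos (α / 2) * (1 - z) * (v ^ 2 + 1) = 2 * Real.sin (α / 2) * (1 + z) * v

lemma exp_eq_half_sq (θ : ℝ) :
    Complex.exp (θ * Complex.I) = (Real.cos (θ / 2) + Real.sin (θ / 2) * Complex.I) ^ 2 := by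
  push_cast
  rw [← Complex.exp_mul_I, ← Complex.exp_nat_mul]
  congr 1
  push_cast
  ring

lemma half_ne_zero (θ : ℝ) : (Real.cos (θ / 2) + Real.sin (θ / 2) * Complex.I : ℂ) ≠ 0 := by
  push_cast
  rw [← Complex.exp_mul_I]
  exact Complex.exp_ne_zero _

lemma sq_add_one_of_norm_eq_one {v : ℂ} (hv : ‖v‖ = 1) : v ^ 2 + 1 = 2 * (v.re : ℂ) * v := by
  have h1 := Complex.mul_conj' v
  rw [hv] at h1
  have h2 := Complex.add_conj v
  push_cast at h1 h2
  linear_combination v * h2 - h1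

/-- On the torus `|v| = |z| = 1` the relation is a real equation in `Re v` and the argument of `z`. -/
lemma arcRel_circle_iff (α θ : ℝ) {v : ℂ} (hv : ‖v‖ = 1) :
    arcRel α v (Complex.exp (θ * Complex.I)) ↔
      Real.cos (α / 2) * Real.sin (θ / 2) * v.re = Real.sin (α / 2) * Real.cos (θ / 2) := by
  have hv0 : v ≠ 0 := by rintro rfl; simp at hv
  have hE := half_ne_zero θ
  have hcs : ((Real.cos (θ / 2) : ℝ) : ℂ) ^ 2 + ((Real.sin (θ / 2) : ℝ) : ℂ) ^ 2 = 1 := by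
    exact_mod_cast Real.cos_sq_add_sin_sq (θ / 2)
  rw [arcRel, exp_eq_half_sq, sq_add_one_of_norm_eq_one hv]
  generalize Real.cos (θ / 2) = k at *
  generalize Real.sin (θ / 2) = s at *
  generalize Real.cos (α / 2) = B at *
  generalize Real.sin (α / 2) = A at *
  have hI := Complex.I_sq
  -- `1 - E² = -2isE` and `1 + E² = 2kE` for `E = k + is` on the unit circle
  have e1 : 1 - ((k : ℂ) + s * Complex.I) ^ 2 = -2 * s * Complex.I * (k + s * Complex.I) := by
    linear_combination -hcs + (s : ℂ) ^ 2 * hI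
  have e2 : 1 + ((k : ℂ) + s * Complex.I) ^ 2 = 2 * k * (k + s * Complex.I) := by
    linear_combination -hcs + (s : ℂ) ^ 2 * hI
  rw [e1, e2]
  constructor
  · intro h
    have h4 : (4 * (k + s * Complex.I) * v : ℂ) ≠ 0 :=
      mul_ne_zero (mul_ne_zero (by norm_num) hE) hv0
    have : (4 * (k + s * Complex.I) * v : ℂ) * (B * s * v.re) =
        (4 * (k + s * Complex.I) * v : ℂ) * (A * k) := by
      linear_combination h + 4 * B * s * v.re * (k + s * Complex.I) * v * hI
    exact_mod_cast mul_left_cancel₀ h4 this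
  · intro h
    have h' : (B * s * v.re : ℂ) = A * k := by exact_mod_cast h
    linear_combination 4 * (k + s * Complex.I) * v * h' -
      4 * B * s * v.re * (k + s * Complex.I) * v * hI

lemma sin_half_pos_s5 {α : ℝ} (hα : α ∈ Ioo 0 Real.pi) : 0 < Real.sin (α / 2) :=
  Real.sin_pos_of_pos_of_lt_pi (by linarith [hα.1]) (by linarith [hα.1, hα.2])

lemma cos_half_pos {α : ℝ} (hα : α ∈ Ioo 0 Real.pi) : 0 < Real.cos (α / 2) :=
  Real.cos_pos_of_mem_Ioo ⟨by linarith [hα.1, Real.pi_pos], by linarith [hα.2]⟩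

lemma exists_arcRel_of_mem_arc {α θ : ℝ} (hα : α ∈ Ioo 0 Real.pi)
    (hθ : θ ∈ Icc α (2 * Real.pi - α)) :
    ∃ v : ℂ, ‖v‖ = 1 ∧ arcRel α v (Complex.exp (θ * Complex.I)) := by
  have hB := cos_half_pos hα
  have hs : 0 < Real.sin (θ / 2) :=
    Real.sin_pos_of_pos_of_lt_pi (by linarith [hα.1, hθ.1]) (by linarith [hα.1, hθ.2])
  have hBs := mul_pos hB hs
  have h1 : 0 ≤ Real.sin (θ / 2 - α / 2) :=
    Real.sin_nonneg_of_nonneg_of_le_pi (by linarith [hθ.1]) (by linarith [hα.1, hθ.2])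
  have h2 : 0 ≤ Real.sin (θ / 2 + α / 2) :=
    Real.sin_nonneg_of_nonneg_of_le_pi (by linarith [hα.1, hθ.1]) (by linarith [hθ.2])
  rw [Real.sin_sub] at h1
  rw [Real.sin_add] at h2
  set x := Real.sin (α / 2) * Real.cos (θ / 2) / (Real.cos (α / 2) * Real.sin (θ / 2)) with hx
  have hx1 : x ≤ 1 := by rw [hx, div_le_one hBs]; linarith
  have hx2 : -1 ≤ x := by rw [hx, le_div_iff₀ hBs]; linarith
  have hn : ‖Complex.exp (Real.arccos x * Complex.I)‖ = 1 := Complex.norm_exp_ofReal_mul_I _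
  refine ⟨_, hn, (arcRel_circle_iff α θ hn).2 ?_⟩
  rw [Complex.exp_ofReal_mul_I_re, Real.cos_arccos hx2 hx1, hx]
  field_simp

lemma mem_arc_of_arcRel {α : ℝ} (hα : α ∈ Ioo 0 Real.pi) {v z : ℂ} (hv : ‖v‖ = 1)
    (h : arcRel α v z) :
    z ∈ (fun θ : ℝ => Complex.exp (θ * Complex.I)) '' Icc α (2 * Real.pi - α) := by
  have hA := sin_half_pos_s5 hα
  have hB := cos_half_pos hα
  have hv0 : v ≠ 0 := by rintro rfl; simp at hv
  have hz : ‖z‖ = 1 := by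
    -- solving for `z` gives `z * w = -conj w` with `w = A + i B Re v ≠ 0`
    have h1 := h
    rw [arcRel, sq_add_one_of_norm_eq_one hv] at h1
    set w : ℂ := ⟨Real.sin (α / 2), Real.cos (α / 2) * v.re⟩ with hw
    have hw0 : w ≠ 0 := fun h0 => hA.ne' (congrArg Complex.re h0)
    have hw1 : w = Real.sin (α / 2) + Real.cos (α / 2) * v.re * Complex.I := by
      apply Complex.ext <;> simp [hw, -Complex.ofReal_sin, -Complex.ofReal_cos]
    have hw2 : (starRingEnd ℂ) w = Real.sin (α / 2) - Real.cos (α / 2) * v.re * Complex.I := by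
      apply Complex.ext <;> simp [hw, -Complex.ofReal_sin, -Complex.ofReal_cos]
    have h2 : z * w = -(starRingEnd ℂ) w := by
      have h2v : (2 * v : ℂ) ≠ 0 := mul_ne_zero two_ne_zero hv0
      apply mul_left_cancel₀ h2v
      rw [hw2, hw1]
      linear_combination -h1
    have h3 := congrArg norm h2
    rw [norm_mul, norm_neg, Complex.norm_conj] at h3
    exact (mul_eq_right₀ (norm_ne_zero_iff.2 hw0)).1 h3
  -- an argument of `z` in `(0, 2π]`
  set θ := Complex.arg (-z) + Real.pi with hθ
  have hexp : Complex.exp (θ * Complex.I) = z := by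
    have h1 := Complex.norm_mul_exp_arg_mul_I (-z)
    rw [norm_neg, hz] at h1
    rw [hθ]
    push_cast at h1 ⊢
    rw [add_mul, Complex.exp_add, Complex.exp_pi_mul_I]
    linear_combination -h1
  have hθ0 : 0 < θ := by linarith [Complex.neg_pi_lt_arg (-z)]
  have hθ1 : θ ≤ 2 * Real.pi := by linarith [Complex.arg_le_pi (-z)]
  rw [← hexp, arcRel_circle_iff α θ hv] at h
  have hs : 0 ≤ Real.sin (θ / 2) :=
    Real.sin_nonneg_of_nonneg_of_le_pi (by linarith) (by linarith)
  have hre := abs_le.1 ((Complex.abs_re_le_norm v).trans hv.le)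
  have hBs := mul_nonneg hB.le hs
  have h1 : 0 ≤ Real.sin (θ / 2 - α / 2) := by rw [Real.sin_sub]; nlinarith
  have h2 : 0 ≤ Real.sin (θ / 2 + α / 2) := by rw [Real.sin_add]; nlinarith
  refine ⟨θ, ⟨?_, ?_⟩, hexp⟩
  · by_contra! hlt
    exact absurd h1 (not_le.2 (Real.sin_neg_of_neg_of_neg_pi_lt (by linarith)
      (by linarith [hα.2, Real.pi_pos])))
  · by_contra! hlt
    have h3 : Real.sin (θ / 2 + α / 2 - 2 * Real.pi) < 0 :=
      Real.sin_neg_of_neg_of_neg_pi_lt (by linarith [hα.2, Real.pi_pos]) (by linarith)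
    rw [Real.sin_sub_two_pi] at h3
    linarith

/-- The two solutions `v` belonging to one value of `v + v⁻¹` are inverse to each other. -/
lemma arcRel_unique {α : ℝ} (hα : α ∈ Ioo 0 Real.pi) {u v z : ℂ}
    (hu : arcRel α u z) (hv : arcRel α v z) : v = u ∨ v * u = 1 := by
  have hA : ((Real.sin (α / 2) : ℝ) : ℂ) ≠ 0 := by exact_mod_cast (sin_half_pos_s5 hα).ne'
  have hB : ((Real.cos (α / 2) : ℝ) : ℂ) ≠ 0 := by exact_mod_cast (cos_half_pos hα).ne'
  unfold arcRel at hu hv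
  by_cases hz : z = 1
  · subst hz
    left
    have h4 : (4 * (Real.sin (α / 2) : ℝ) : ℂ) ≠ 0 := mul_ne_zero (by norm_num) hA
    apply mul_left_cancel₀ h4
    linear_combination hu - hv
  · have h1 : Complex.I * Real.cos (α / 2) * (1 - z) ≠ 0 :=
      mul_ne_zero (mul_ne_zero Complex.I_ne_zero hB) (sub_ne_zero.2 (Ne.symm hz))
    have h2 : Complex.I * Real.cos (α / 2) * (1 - z) * ((v - u) * (v * u - 1)) = 0 := by
      linear_combination u * hv - v * hu
    rcases mul_eq_zero.1 ((mul_eq_zero.1 h2).resolve_left h1) with h3 | h3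
    · exact Or.inl (sub_eq_zero.1 h3)
    · exact Or.inr (sub_eq_zero.1 h3)

lemma exists_arcRel_of_notMem_arc {α : ℝ} (hα : α ∈ Ioo 0 Real.pi) {z : ℂ}
    (hz : z ∉ (fun θ : ℝ => Complex.exp (θ * Complex.I)) '' Icc α (2 * Real.pi - α)) :
    ∃ v : ℂ, ‖v‖ < 1 ∧ arcRel α v z := by
  have hB : ((Real.cos (α / 2) : ℝ) : ℂ) ≠ 0 := by exact_mod_cast (cos_half_pos hα).ne'
  by_cases hz1 : z = 1
  · exact ⟨0, by simp, by simp [arcRel, hz1]⟩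
  have h1 : Complex.I * Real.cos (α / 2) * (1 - z) ≠ 0 :=
    mul_ne_zero (mul_ne_zero Complex.I_ne_zero hB) (sub_ne_zero.2 (Ne.symm hz1))
  -- any root of the quadratic will do, up to inversion
  obtain ⟨v, hv⟩ : ∃ v : ℂ, arcRel α v z := by
    obtain ⟨v, hv⟩ := exists_quadratic_eq_zero (b := -(2 * Real.sin (α / 2) * (1 + z)))
      (c := Complex.I * Real.cos (α / 2) * (1 - z)) h1 (IsAlgClosed.exists_eq_mul_self _)
    exact ⟨v, by unfold arcRel; linear_combination hv⟩
  have hv0 : v ≠ 0 := by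
    rintro rfl
    apply h1
    unfold arcRel at hv
    linear_combination hv
  rcases lt_trichotomy ‖v‖ 1 with h | h | h
  · exact ⟨v, h, hv⟩
  · exact absurd (mem_arc_of_arcRel hα h hv) hz
  · refine ⟨v⁻¹, by rw [norm_inv]; exact inv_lt_one_of_one_lt₀ h, ?_⟩
    unfold arcRel at hv ⊢
    field_simp
    linear_combination hv

/-- Away from the poles, `h v = z` is the relation `arcRel α v z`, because
`(1 - t²) cos (α/2) = 2 t sin (α/2)` for `t = tan ((π - α) / 4)`. -/
lemma arcRel_iff {α : ℝ} (hα : α ∈ Ioo 0 Real.pi) {t : ℝ} (ht : t = Real.tan ((Real.pi - α) / 4))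
    (ht0 : 0 < t) (v z : ℂ) :
    arcRel α v z ↔ (v - Complex.I * t) * (Complex.I * t * v - 1) =
      z * ((v + Complex.I * t) * (Complex.I * t * v + 1)) := by
  have hB := cos_half_pos hα
  have hc : 0 < Real.cos ((Real.pi - α) / 4) :=
    Real.cos_pos_of_mem_Ioo ⟨by linarith [hα.2, Real.pi_pos], by linarith [hα.1, Real.pi_pos]⟩
  have key : (1 - t ^ 2) * Real.cos (α / 2) = 2 * t * Real.sin (α / 2) := by
    have e : α / 2 = Real.pi / 2 - 2 * ((Real.pi - α) / 4) := by ring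
    rw [ht, Real.tan_eq_sin_div_cos, e, Real.cos_pi_div_two_sub, Real.sin_pi_div_two_sub,
      Real.sin_two_mul, Real.cos_two_mul']
    field_simp
  have keyC : (1 - (t : ℂ) ^ 2) * (Real.cos (α / 2) : ℝ) = 2 * t * (Real.sin (α / 2) : ℝ) := by
    exact_mod_cast key
  have hBC : ((Real.cos (α / 2) : ℝ) : ℂ) ≠ 0 := by exact_mod_cast hB.ne'
  have htC : (t : ℂ) ≠ 0 := by exact_mod_cast ht0.ne'
  have hI := Complex.I_sq
  unfold arcRel
  constructor
  · intro h
    apply mul_left_cancel₀ hBC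
    linear_combination t * h - (1 + z) * v * keyC -
      (Real.cos (α / 2) : ℝ) * t ^ 2 * v * (1 + z) * hI
  · intro h
    apply mul_left_cancel₀ htC
    linear_combination (Real.cos (α / 2) : ℝ) * h + (1 + z) * v * keyC +
      (Real.cos (α / 2) : ℝ) * t ^ 2 * v * (1 + z) * hI

theorem stmt5 (α : ℝ) (hα : α ∈ Set.Ioo 0 Real.pi)
    (β : ℂ) (hβ : β = Complex.I * Real.tan ((Real.pi - α) / 4))
    (h : ℂ → ℂ) (hh : h = fun v => ((v - β) * (β * v - 1)) / ((v + β) * (β * v + 1))) :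
    DifferentiableOn ℂ h (Metric.ball (0 : ℂ) 1 \ {-β}) ∧
    Set.BijOn h (Metric.ball (0 : ℂ) 1 \ {-β})
      (((fun θ : ℝ => Complex.exp (θ * Complex.I)) '' Set.Icc α (2 * Real.pi - α))ᶜ) := by
  obtain ⟨t, ht⟩ : ∃ t, t = Real.tan ((Real.pi - α) / 4) := ⟨_, rfl⟩
  have ht0 : 0 < t := by
    rw [ht]
    exact Real.tan_pos_of_pos_of_lt_pi_div_two (by linarith [hα.2])
      (by linarith [hα.1, Real.pi_pos])
  have ht1 : t < 1 := by
    rw [ht, ← Real.tan_pi_div_four]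
    exact Real.tan_lt_tan_of_lt_of_lt_pi_div_two (by linarith [hα.2, Real.pi_pos])
      (by linarith [Real.pi_pos]) (by linarith [hα.1])
  rw [← ht] at hβ
  have hβn : ‖β‖ = t := by simp [hβ, abs_of_pos ht0]
  have hβ0 : β ≠ 0 := by rw [← norm_pos_iff, hβn]; exact ht0
  -- the other pole `-β⁻¹` lies outside the disk
  have hD2 : ∀ v : ℂ, ‖v‖ < 1 → β * v + 1 ≠ 0 := by
    intro v hv h0
    have h1 : ‖β * v‖ = 1 := by rw [eq_neg_of_add_eq_zero_left h0]; simp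
    rw [norm_mul, hβn] at h1
    nlinarith [norm_nonneg v]
  have hD : ∀ v ∈ Metric.ball (0 : ℂ) 1 \ {-β}, ‖v‖ < 1 ∧ (v + β) * (β * v + 1) ≠ 0 := by
    rintro v ⟨hv, hvβ⟩
    have hv1 : ‖v‖ < 1 := by simpa using hv
    exact ⟨hv1, mul_ne_zero (fun h0 => hvβ (eq_neg_of_add_eq_zero_left h0)) (hD2 v hv1)⟩
  have hrel : ∀ v ∈ Metric.ball (0 : ℂ) 1 \ {-β}, ∀ z, h v = z ↔ arcRel α v z := by
    intro v hv z
    rw [arcRel_iff hα ht ht0, ← hβ, hh]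
    exact div_eq_iff (hD v hv).2
  refine ⟨?_, ?_, ?_, ?_⟩
  · rw [hh]
    intro v hv
    have hv2 := (hD v hv).2
    exact DifferentiableAt.differentiableWithinAt (by fun_prop (disch := assumption))
  · rintro v hv ⟨θ, hθ, hθv⟩
    obtain ⟨u, hu, hur⟩ := exists_arcRel_of_mem_arc hα hθ
    have hvr := (hrel v hv _).1 hθv.symm
    have hv1 := (hD v hv).1
    rcases arcRel_unique hα hur hvr with h1 | h1
    · rw [h1] at hv1
      linarith
    · have h2 := congrArg norm h1
      rw [norm_mul, hu, norm_one] at h2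
      linarith
  · intro v hv u hu huv
    have hv1 := (hD v hv).1
    have hu1 := (hD u hu).1
    rcases arcRel_unique hα ((hrel u hu _).1 huv.symm) ((hrel v hv _).1 rfl) with h1 | h1
    · exact h1
    · have h2 := congrArg norm h1
      rw [norm_mul, norm_one] at h2
      nlinarith [norm_nonneg v, norm_nonneg u]
  · intro z hz
    obtain ⟨v, hv, hvr⟩ := exists_arcRel_of_notMem_arc hα hz
    have hmem : v ∈ Metric.ball (0 : ℂ) 1 \ {-β} := by
      refine ⟨by simpa using hv, ?_⟩
      -- at `v = -β` the denominator vanishes but the numerator is `2β(1 + β²) ≠ 0`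
      rintro rfl
      rw [arcRel_iff hα ht ht0, ← hβ] at hvr
      have h1 : (2 * β) * (β * -(-β) + 1) = 0 := by linear_combination hvr
      exact mul_ne_zero (mul_ne_zero two_ne_zero hβ0) (hD2 _ (by simpa using hv)) h1
    exact ⟨v, hmem, (hrel v hmem z).2 hvr⟩
end
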